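/- Let H ∈ (0,1), β ∈ ℝ, μ ≠ 0 and T > 0, and let K be the fOU covariance kernel on [0,T]. Suppose that for every ε > 0 the function h_ε : [0,T]² → ℝ is continuous and satisfies the Wiener–Hopf equation ε·h_ε(s,t) + μ²·∫₀ᵀ K(r,s)·h_ε(r,t) dr = μ²·K(s,t) for all 0 ≤ s ≤ t ≤ T. Then the filtering error P_ε := (ε/μ²)·h_ε(T,T) satisfies lim_{ε→0⁺} P_ε / (ε/μ²)^{2H/(1+2H)} = (sin(πH)·Γ(2H+1))^{1/(1+2H)} / sin(π/(2H+1)). -/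

import Mathlib

section
open Real MeasureTheory Set Filter intervalIntegral

/-- The fractional Ornstein–Uhlenbeck covariance kernel
`K(s,t) = ∫₀ᵗ e^{β(t−v)} (d/dv)(∫₀ˢ H |v−u|^{2H−1} sign(v−u) e^{β(s−u)} du) dv`. -/
noncomputable def fOUkernel (H β : ℝ) (s t : ℝ) : ℝ :=
  ∫ v in (0:ℝ)..t, Real.exp (β * (t - v)) *
    deriv (fun w : ℝ =>
      ∫ u in (0:ℝ)..s, H * |w - u| ^ (2 * H - 1) * Real.sign (w - u) * Real.exp (β * (s - u))) v

end

open Real MeasureTheory Set Filter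

lemma tonelli_pos (f : ℝ → ℝ → ℝ) (A B : ℝ → ℝ) (hm : Measurable (Function.uncurry f))
    (hpos : ∀ x > 0, ∀ y > 0, 0 ≤ f x y)
    (h1 : ∀ y > 0, IntegrableOn (fun x => f x y) (Ioi 0))
    (hA : ∀ x > 0, ∫ y in Ioi (0:ℝ), f x y = A x)
    (hB : ∀ y > 0, ∫ x in Ioi (0:ℝ), f x y = B y)
    (hBi : IntegrableOn B (Ioi 0)) :
    IntegrableOn A (Ioi 0) ∧ ∫ x in Ioi (0:ℝ), A x = ∫ y in Ioi (0:ℝ), B y := by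
  have hint : Integrable (Function.uncurry f)
      ((volume.restrict (Ioi (0:ℝ))).prod (volume.restrict (Ioi (0:ℝ)))) := by
    rw [integrable_prod_iff' hm.aestronglyMeasurable]
    refine ⟨?_, ?_⟩
    · filter_upwards [ae_restrict_mem measurableSet_Ioi] with y hy
      exact h1 y hy
    · refine hBi.congr ?_
      filter_upwards [ae_restrict_mem measurableSet_Ioi] with y hy
      rw [← hB y hy]
      refine setIntegral_congr_fun measurableSet_Ioi fun x hx => ?_
      simp only [Function.uncurry, Real.norm_eq_abs]
      rw [abs_of_nonneg (hpos x hx y hy)]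
  have e1 : ∫ x in Ioi (0:ℝ), A x = ∫ x in Ioi (0:ℝ), ∫ y in Ioi (0:ℝ), f x y :=
    setIntegral_congr_fun measurableSet_Ioi fun x hx => (hA x hx).symm
  have e2 : ∫ x in Ioi (0:ℝ), B x = ∫ y in Ioi (0:ℝ), ∫ x in Ioi (0:ℝ), f x y :=
    setIntegral_congr_fun measurableSet_Ioi fun x hx => (hB x hx).symm
  refine ⟨?_, ?_⟩
  · refine hint.integral_prod_left.congr ?_
    filter_upwards [ae_restrict_mem measurableSet_Ioi] with x hx
    exact hA x hx
  · rw [e1, e2]; exact integral_integral_swap hint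

lemma integral_exp_neg_mul_pos {b : ℝ} (hb : 0 < b) :
    ∫ x in Ioi (0:ℝ), exp (-(b * x)) = 1 / b := by
  have := integral_rpow_mul_exp_neg_mul_Ioi (a := 1) (r := b) one_pos hb
  simpa using this

lemma beta_int {p q : ℝ} (hp : 0 < p) (hq : -1 < q) (hqp : q + 1 < p) :
    IntegrableOn (fun x : ℝ => x ^ q / (1 + x ^ p)) (Ioi 0) ∧
    ∫ x in Ioi (0:ℝ), x ^ q / (1 + x ^ p) = (1 / p) * (π / sin (π * ((q + 1) / p))) := by
  have hs : 0 < (q+1)/p := by apply div_pos <;> linarith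
  have hs1 : (q+1)/p < 1 := by rw [div_lt_one hp]; exact hqp
  have hG : IntegrableOn (fun u : ℝ => rexp (-u) * u ^ ((1 - (q+1)/p) - 1)) (Ioi 0) :=
    Real.GammaIntegral_convergent (by linarith)
  obtain ⟨h1, h2⟩ := tonelli_pos (fun x u => x ^ q * exp (-u * x ^ p) * exp (-u))
    (fun x => x ^ q / (1 + x ^ p))
    (fun u => ((1 / p) * Gamma ((q + 1) / p)) * (rexp (-u) * u ^ ((1 - (q+1)/p) - 1)))
    (by unfold Function.uncurry; fun_prop)
    (fun x hx y hy => by positivity)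
    (fun y hy => by
      refine Integrable.mul_const ?_ _
      by_contra hcon
      have h0 := integral_undef hcon
      rw [integral_rpow_mul_exp_neg_mul_rpow hp hq hy] at h0
      have : 0 < y ^ (-(q + 1) / p) * (1 / p) * Gamma ((q + 1) / p) := by
        have := Gamma_pos_of_pos hs
        positivity
      linarith)
    (fun x hx => by
      have hb : 0 < 1 + x ^ p := by positivity
      rw [div_eq_mul_one_div, ← integral_exp_neg_mul_pos hb, ← integral_const_mul]
      refine integral_congr_ae (ae_of_all _ fun u => ?_)
      simp only
      rw [mul_assoc, ← exp_add]
      ring_nf)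
    (fun y hy => by
      rw [integral_mul_const, integral_rpow_mul_exp_neg_mul_rpow hp hq hy]
      have : (1 - (q+1)/p) - 1 = -(q+1)/p := by ring
      rw [this]; ring)
    (hG.const_mul _)
  refine ⟨h1, ?_⟩
  rw [h2, integral_const_mul, ← Gamma_eq_integral (by linarith), mul_assoc,
    Real.Gamma_mul_Gamma_one_sub]

/-- `∫ (1 - cos x) e^{-xy}` -/
lemma int_one_sub_cos_exp {y : ℝ} (hy : 0 < y) :
    IntegrableOn (fun x => (1 - cos x) * exp (-(y * x))) (Ioi 0) ∧
    ∫ x in Ioi (0:ℝ), (1 - cos x) * exp (-(y * x)) = 1 / (y * (1 + y ^ 2)) := by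
  have hi : IntegrableOn (fun x => (1 - cos x) * exp (-(y * x))) (Ioi 0) := by
    have h0 : IntegrableOn (fun x => exp (-(y * x))) (Ioi 0) := by
      simpa using exp_neg_integrableOn_Ioi 0 hy
    refine Integrable.mono' (h0.const_mul 2) (by fun_prop) (ae_of_all _ fun x => ?_)
    rw [norm_mul, Real.norm_eq_abs, Real.norm_eq_abs, abs_of_pos (exp_pos _)]
    gcongr
    rw [abs_le]; constructor <;> linarith [neg_one_le_cos x, cos_le_one x]
  refine ⟨hi, ?_⟩
  have hne : (1 + y^2) ≠ 0 := by positivity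
  have key := integral_Ioi_of_hasDerivAt_of_tendsto (a := 0) (m := 0)
    (f := fun x => exp (-(y*x)) * (- 1 / y + (y * cos x - sin x) / (1 + y ^ 2)))
    (f' := fun x => (1 - cos x) * exp (-(y * x))) (by fun_prop) (fun x _ => by
      have := ((((hasDerivAt_id x).const_mul y).neg).exp).mul
        ((((hasDerivAt_cos x).const_mul y).sub (hasDerivAt_sin x)).div_const (1 + y^2) |>.const_add (-1/y))
      refine this.congr_deriv ?_
      simp
      field_simp
      ring) hi (by
        apply squeeze_zero_norm (a := fun x => exp (-(y*x)) * (1 / y + (y + 1)/(1+y^2)))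
        · intro x
          rw [norm_mul, Real.norm_eq_abs, Real.norm_eq_abs, abs_of_pos (exp_pos _)]
          gcongr
          refine (abs_add_le _ _).trans ?_
          gcongr
          · rw [abs_div]; simp [abs_of_pos hy]
          · rw [abs_div, abs_of_pos (by positivity : (0:ℝ) < 1 + y^2)]
            gcongr
            refine (abs_sub _ _).trans ?_
            rw [abs_mul, abs_of_pos hy]
            nlinarith [abs_cos_le_one x, abs_sin_le_one x]
        · rw [show (0:ℝ) = 0 * (1 / y + (y + 1)/(1+y^2)) by ring]
          refine Tendsto.mul_const _ ?_
          exact tendsto_exp_neg_atTop_nhds_zero.comp (tendsto_id.const_mul_atTop hy))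
  rw [key]; simp; field_simp; ring

lemma int_one_sub_cos_rpow {H : ℝ} (h0 : 0 < H) (h1 : H < 1) :
    IntegrableOn (fun x : ℝ => (1 - cos x) * x ^ (-1 - 2 * H)) (Ioi 0) ∧
    ∫ x in Ioi (0:ℝ), (1 - cos x) * x ^ (-1 - 2 * H)
      = π / (2 * (sin (π * H) * Gamma (2 * H + 1))) := by
  have hGp : 0 < Gamma (2 * H + 1) := Gamma_pos_of_pos (by linarith)
  obtain ⟨b1, b2⟩ := beta_int (p := 2) (q := 2 * H - 1) two_pos (by linarith) (by linarith)
  obtain ⟨r1, r2⟩ := tonelli_pos (fun x y => (1 - cos x) * exp (-(y * x)) * y ^ (2 * H))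
    (fun x => Gamma (2 * H + 1) * ((1 - cos x) * x ^ (-1 - 2 * H)))
    (fun y => y ^ (2 * H - 1) / (1 + y ^ (2:ℝ)))
    (by unfold Function.uncurry; fun_prop)
    (fun x hx y hy => by have := cos_le_one x; have : 0 ≤ 1 - cos x := by linarith
                         positivity)
    (fun y hy => (int_one_sub_cos_exp hy).1.mul_const _)
    (fun x hx => by
      have := integral_rpow_mul_exp_neg_mul_Ioi (a := 2 * H + 1) (r := x) (by linarith) hx
      have e : ∀ y : ℝ, (1 - cos x) * exp (-(y * x)) * y ^ (2 * H) =
        (1 - cos x) * (y ^ (2 * H + 1 - 1) * exp (-(x * y))) := by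
        intro y; rw [mul_comm y x]; ring_nf
      simp_rw [e]
      rw [integral_const_mul, this, one_div, inv_rpow hx.le, ← rpow_neg hx.le]
      ring_nf)
    (fun y hy => by
      rw [integral_mul_const, (int_one_sub_cos_exp hy).2, rpow_sub_one hy.ne']
      norm_num; field_simp)
    b1
  have r3 : IntegrableOn (fun x : ℝ => (1 - cos x) * x ^ (-1 - 2 * H)) (Ioi 0) := by
    have := r1.const_mul (Gamma (2 * H + 1))⁻¹
    refine this.congr (ae_of_all _ fun x => ?_)
    simp only
    field_simp
  refine ⟨r3, ?_⟩
  rw [integral_const_mul, b2] at r2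
  have : π * ((2 * H - 1 + 1)/2) = π * H := by ring
  rw [this] at r2
  have hs : 0 < sin (π * H) := sin_pos_of_pos_of_lt_pi (by positivity) (by nlinarith [pi_pos])
  field_simp at r2 ⊢
  linarith

lemma integrable_comp_abs {f : ℝ → ℝ} (hf : IntegrableOn f (Ioi 0)) :
    Integrable (fun x : ℝ => f |x|) := by
  have h1 : IntegrableOn (fun x : ℝ => f |x|) (Ioi 0) :=
    hf.congr_fun (fun x hx => by rw [abs_of_pos hx]) measurableSet_Ioi
  have h2 : IntegrableOn (fun x : ℝ => f |x|) (Iic 0) := by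
    have := h1.comp_neg
    simp only [abs_neg, Set.neg_Ioi, neg_zero] at this
    exact (integrableOn_Iic_iff_integrableOn_Iio).2 (by simpa using this)
  have := h2.union h1
  rwa [Iic_union_Ioi, integrableOn_univ] at this

lemma kappa_spectral {H : ℝ} (h0 : 0 < H) (h1 : H < 1) (x : ℝ) :
    Integrable (fun w : ℝ => (1 - cos (w * x)) * |w| ^ (-1 - 2 * H)) ∧
    ∫ w : ℝ, (1 - cos (w * x)) * |w| ^ (-1 - 2 * H)
      = |x| ^ (2 * H) * (π / (sin (π * H) * Gamma (2 * H + 1))) := by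
  rcases eq_or_ne x 0 with rfl | hx
  · simp [zero_rpow (by linarith : 2 * H ≠ 0)]
  have hx' : 0 < |x| := abs_pos.2 hx
  obtain ⟨i1, i2⟩ := int_one_sub_cos_rpow h0 h1
  have e0 : (fun w : ℝ => (1 - cos (w * x)) * |w| ^ (-1 - 2 * H)) =
      fun w : ℝ => (fun v => (1 - cos (|x| * v)) * v ^ (-1 - 2 * H)) |w| := by
    ext w
    simp only
    rw [← cos_abs (w * x), abs_mul, mul_comm |w|]
  have e1 : ∀ v ∈ Ioi (0:ℝ), (1 - cos (|x| * v)) * v ^ (-1 - 2 * H) =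
      |x| ^ (1 + 2 * H) * ((fun v => (1 - cos v) * v ^ (-1 - 2 * H)) (|x| * v)) := by
    intro v hv
    simp only
    rw [mul_rpow hx'.le (le_of_lt hv)]
    have : |x| ^ (1 + 2 * H) * |x| ^ (-1 - 2 * H) = 1 := by
      rw [← rpow_add hx']; ring_nf; simp
    linear_combination (-(1 - cos (|x| * v)) * v ^ (-1 - 2 * H)) * this
  have i3 : IntegrableOn (fun v => (1 - cos (|x| * v)) * v ^ (-1 - 2 * H)) (Ioi 0) := by
    have := (integrableOn_Ioi_comp_mul_left_iff (fun v : ℝ => (1 - cos v) * v ^ (-1 - 2 * H)) 0 hx').2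
      (by simpa using i1)
    exact IntegrableOn.congr_fun (this.const_mul (|x| ^ (1 + 2 * H)))
      (fun v hv => (e1 v hv).symm) measurableSet_Ioi
  refine ⟨by rw [e0]; exact integrable_comp_abs i3, ?_⟩
  rw [e0, integral_comp_abs (f := fun v => (1 - cos (|x| * v)) * v ^ (-1 - 2 * H)), setIntegral_congr_fun measurableSet_Ioi e1, integral_const_mul,
    integral_comp_mul_left_Ioi (fun v => (1 - cos v) * v ^ (-1 - 2 * H)) _ hx', mul_zero, i2, smul_eq_mul, rpow_add hx', rpow_one]
  field_simp

lemma log_int {a : ℝ} (ha : 1 < a) :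
    Integrable (fun x : ℝ => log (1 + |x| ^ (-a))) ∧
    ∫ x : ℝ, log (1 + |x| ^ (-a)) = 2 * π / sin (π / a) := by
  have ha0 : 0 < a := by linarith
  obtain ⟨b1, b2⟩ := beta_int (p := a) (q := 0) ha0 (by linarith) (by linarith)
  simp only [rpow_zero, zero_add] at b1 b2
  set I := 1 / a * (π / sin (π * (1 / a))) with hI
  have hr : -1 < 1 / a - 1 := by have : 0 < 1 / a := by positivity
                                 linarith
  have s1 : ∀ s > 0, ∀ x ∈ Ioi (0:ℝ), 1 / (x ^ a + s) = s⁻¹ * (fun v : ℝ => 1 / (1 + v ^ a)) (s ^ (-1/a) * x) := by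
    intro s hs x hx
    simp only
    rw [mul_rpow (by positivity) (le_of_lt hx), ← rpow_mul hs.le]
    have : -1 / a * a = -1 := by field_simp
    rw [this, rpow_neg_one]
    field_simp
    ring
  obtain ⟨r1, r2⟩ := tonelli_pos (fun x s => if s ≤ 1 then 1 / (x ^ a + s) else 0)
    (fun x => log (1 + x ^ (-a)))
    (fun s => if s ≤ 1 then s ^ (1 / a - 1) * I else 0)
    (by unfold Function.uncurry
        refine Measurable.ite (measurableSet_le measurable_snd measurable_const) ?_ measurable_const
        fun_prop)
    (fun x hx y hy => by split_ifs <;> positivity)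
    (fun y hy => by
      by_cases h : y ≤ 1
      · simp only [h, if_true]
        have hy' : 0 < y ^ (-1/a) := by positivity
        have := (integrableOn_Ioi_comp_mul_left_iff (fun v : ℝ => 1 / (1 + v ^ a)) 0 hy').2
          (by simpa using b1)
        exact IntegrableOn.congr_fun (this.const_mul y⁻¹) (fun v hv => (s1 y hy v hv).symm) measurableSet_Ioi
      · simp [h])
    (fun x hx => by
      have hx' : 0 < x ^ a := by positivity
      have e : ∀ s ∈ Ioi (0:ℝ), (if s ≤ 1 then 1 / (x ^ a + s) else 0) =
          (Ioc 0 1).indicator (fun s => 1 / (x ^ a + s)) s := by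
        intro s hs
        by_cases h : s ≤ 1
        · rw [indicator_of_mem (show s ∈ Ioc (0:ℝ) 1 from ⟨hs, h⟩)]; simp [h]
        · rw [indicator_of_notMem (fun hh => h hh.2)]; simp [h]
      rw [setIntegral_congr_fun measurableSet_Ioi e, setIntegral_indicator measurableSet_Ioc,
        inter_eq_right.2 Ioc_subset_Ioi_self, ← intervalIntegral.integral_of_le zero_le_one,
        intervalIntegral.integral_comp_add_left (fun v => 1 / v),
        integral_one_div_of_pos (by linarith) (by linarith), rpow_neg (le_of_lt hx)]
      congr 1; field_simp; ring)
    (fun y hy => by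
      by_cases h : y ≤ 1
      · simp only [h, if_true]
        have hy' : 0 < y ^ (-1/a) := by positivity
        rw [setIntegral_congr_fun measurableSet_Ioi (s1 y hy), integral_const_mul,
          integral_comp_mul_left_Ioi (fun v : ℝ => 1 / (1 + v ^ a)) _ hy', mul_zero, b2, smul_eq_mul, ← rpow_neg hy.le,
          ← mul_assoc]
        congr 1
        rw [← rpow_neg_one y, ← rpow_add hy]
        congr 1; ring
      · simp [h])
    (by
      have e : ∀ s ∈ Ioi (0:ℝ), (Ioc 0 1).indicator (fun s => s ^ (1 / a - 1) * I) s = (if s ≤ 1 then s ^ (1 / a - 1) * I else 0) := by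
        intro s hs
        by_cases h : s ≤ 1
        · rw [indicator_of_mem (show s ∈ Ioc (0:ℝ) 1 from ⟨hs, h⟩)]; simp [h]
        · rw [indicator_of_notMem (fun hh => h hh.2)]; simp [h]
      refine IntegrableOn.congr_fun ?_ e measurableSet_Ioi
      refine Integrable.integrableOn ?_
      rw [integrable_indicator_iff measurableSet_Ioc]
      have := (intervalIntegral.intervalIntegrable_rpow' (a := 0) (b := 1) hr).mul_const I
      exact (intervalIntegrable_iff_integrableOn_Ioc_of_le zero_le_one).1 this)
  refine ⟨integrable_comp_abs (f := fun x => log (1 + x ^ (-a))) r1, ?_⟩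
  rw [integral_comp_abs (f := fun x => log (1 + x ^ (-a))), r2]
  have e : ∀ s ∈ Ioi (0:ℝ), (if s ≤ 1 then s ^ (1 / a - 1) * I else 0) = (Ioc 0 1).indicator (fun s => s ^ (1 / a - 1) * I) s := by
    intro s hs
    by_cases h : s ≤ 1
    · rw [indicator_of_mem (show s ∈ Ioc (0:ℝ) 1 from ⟨hs, h⟩)]; simp [h]
    · rw [indicator_of_notMem (fun hh => h hh.2)]; simp [h]
  rw [setIntegral_congr_fun measurableSet_Ioi e, setIntegral_indicator measurableSet_Ioc,
        inter_eq_right.2 Ioc_subset_Ioi_self, ← intervalIntegral.integral_of_le zero_le_one,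
        intervalIntegral.integral_mul_const, integral_rpow (Or.inl hr), hI]
  have h0 : (1 / a - 1 + 1) ≠ 0 := by simp; linarith
  rw [one_rpow, zero_rpow h0]
  have : π * (1 / a) = π / a := by ring
  rw [this]
  field_simp
  ring

section
open Real MeasureTheory Set Filter

lemma integrable_G {H : ℝ} (h0 : 0 < H) (h1 : H < 1) :
    Integrable (fun w : ℝ => |w| ^ (1 - 2 * H) / (1 + w ^ 2)) := by
  have := (beta_int (p := 2) (q := 1 - 2 * H) two_pos (by linarith) (by linarith)).1
  have := integrable_comp_abs this
  simpa using this

lemma intervalIntegrable_abs_rpow {r : ℝ} (hr : -1 < r) (a b : ℝ) :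
    IntervalIntegrable (fun x : ℝ => |x| ^ r) volume a b := by
  have h : IntervalIntegrable (fun x : ℝ => x ^ r) volume 0 (max |a| |b| + 1) :=
    intervalIntegral.intervalIntegrable_rpow' hr
  have hp : 0 ≤ max |a| |b| + 1 := by positivity
  rw [intervalIntegrable_iff_integrableOn_Ioc_of_le hp] at h
  have h2 : IntegrableOn ((Ioc 0 (max |a| |b| + 1)).indicator (fun x : ℝ => x ^ r)) (Ioi 0) :=
    ((integrable_indicator_iff measurableSet_Ioc).2 h).integrableOn
  have h3 := integrable_comp_abs h2
  refine (h3.intervalIntegrable (a := a) (b := b)).congr_ae ?_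
  rw [EventuallyEq, ae_restrict_iff' measurableSet_uIoc]
  have h00 : ∀ᵐ x : ℝ, x ≠ 0 := by simp [ae_iff]
  filter_upwards [h00] with x hx hxm
  rw [indicator_of_mem]
  refine ⟨abs_pos.2 hx, ?_⟩
  have := uIoc_subset_uIcc hxm
  rw [mem_uIcc] at this
  have : |x| ≤ max |a| |b| := by
    rcases this with ⟨h1, h2⟩ | ⟨h1, h2⟩
    · exact abs_le_max_abs_abs h1 h2
    · rw [max_comm]; exact abs_le_max_abs_abs h1 h2
  linarith

lemma kap_hasDeriv {H : ℝ} {x : ℝ} (hx : x ≠ 0) :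
    HasDerivAt (fun x : ℝ => |x| ^ (2 * H) / 2) (H * |x| ^ (2 * H - 1) * Real.sign x) x := by
  have h1 : HasDerivAt (fun x : ℝ => |x|) (Real.sign x) x := by
    rcases lt_or_gt_of_ne hx with h | h
    · rw [Real.sign_of_neg h]; exact hasDerivAt_abs_neg h
    · rw [Real.sign_of_pos h]; exact hasDerivAt_abs_pos h
  have := (h1.rpow_const (p := 2 * H) (Or.inl (abs_pos.2 hx).ne')).div_const 2
  refine this.congr_deriv ?_
  ring

lemma kap_cont {H : ℝ} (h0 : 0 < H) : Continuous (fun x : ℝ => |x| ^ (2 * H) / 2) := by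
  refine Continuous.div_const ?_ _
  exact continuous_abs.rpow_const (fun x => Or.inr (by linarith))

lemma kap'_ii {H : ℝ} (h0 : 0 < H) (a b : ℝ) :
    IntervalIntegrable (fun x : ℝ => H * |x| ^ (2 * H - 1) * Real.sign x) volume a b := by
  have h := (intervalIntegrable_abs_rpow (r := 2 * H - 1) (by linarith) a b).const_mul H
  have hm : Measurable (fun x : ℝ => H * |x| ^ (2 * H - 1) * Real.sign x) := by
    refine Measurable.mul (by fun_prop) ?_
    unfold Real.sign
    exact Measurable.ite measurableSet_Iio measurable_const
      (Measurable.ite measurableSet_Ioi measurable_const measurable_const)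
  refine h.mono_fun hm.aestronglyMeasurable (ae_of_all _ fun x => ?_)
  dsimp only
  rw [norm_mul]
  have : ‖Real.sign x‖ ≤ 1 := by
    rcases Real.sign_apply_eq x with h | h | h <;> simp [h]
  calc _ ≤ ‖H * |x| ^ (2 * H - 1)‖ * 1 := by gcongr
    _ = _ := mul_one _

lemma A1 {H : ℝ} (h0 : 0 < H) (β s w : ℝ) :
    ∫ u in (0:ℝ)..s, H * |w - u| ^ (2 * H - 1) * Real.sign (w - u) * Real.exp (β * (s - u))
     = exp (β * s) * (|w| ^ (2 * H) / 2) - |w - s| ^ (2 * H) / 2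
       - β * ∫ u in (0:ℝ)..s, exp (β * (s - u)) * (|w - u| ^ (2 * H) / 2) := by
  have hk := kap_cont h0
  have hM : Continuous (fun u : ℝ => exp (β * (s - u)) * (|w - u| ^ (2 * H) / 2)) := by
    have : Continuous (fun u : ℝ => |w - u| ^ (2 * H) / 2) :=
      hk.comp (continuous_const.sub continuous_id)
    fun_prop
  have hi : IntervalIntegrable (fun u : ℝ => H * |w - u| ^ (2 * H - 1) * Real.sign (w - u) *
      Real.exp (β * (s - u))) volume 0 s := by
    refine IntervalIntegrable.mul_continuousOn ?_ (by fun_prop)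
    have := (kap'_ii h0 (w - 0) (w - s)).comp_sub_left w
    simpa using this
  have key := MeasureTheory.integral_eq_of_hasDerivAt_off_countable
    (a := 0) (b := s) (s := {w})
    (fun u => - (exp (β * (s - u)) * (|w - u| ^ (2 * H) / 2)))
    (fun u => H * |w - u| ^ (2 * H - 1) * Real.sign (w - u) * Real.exp (β * (s - u))
      + β * (exp (β * (s - u)) * (|w - u| ^ (2 * H) / 2)))
    (countable_singleton w) hM.neg.continuousOn ?_
    (hi.add ((hM.intervalIntegrable 0 s).const_mul β))
  · rw [intervalIntegral.integral_add hi ((hM.intervalIntegrable 0 s).const_mul β),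
      intervalIntegral.integral_const_mul] at key
    simp only [sub_self, mul_zero, exp_zero, sub_zero, one_mul] at key
    linarith
  · intro u hu
    have huw : w - u ≠ 0 := by
      have : u ≠ w := fun h => hu.2 (by simp [h])
      exact sub_ne_zero.2 this.symm
    have h1 : HasDerivAt (fun u : ℝ => |w - u| ^ (2 * H) / 2)
        (H * |w - u| ^ (2 * H - 1) * Real.sign (w - u) * (-1)) u :=
      (kap_hasDeriv huw).comp u ((hasDerivAt_id u).const_sub w)
    have h2 : HasDerivAt (fun u : ℝ => exp (β * (s - u))) (exp (β * (s - u)) * (β * (-1))) u :=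
      (((hasDerivAt_id u).const_sub s).const_mul β).exp
    refine (h2.mul h1).neg.congr_deriv ?_
    ring

lemma M_hasDeriv {k : ℝ → ℝ} (hk : Continuous k) (β s w : ℝ) :
    HasDerivAt (fun w => ∫ u in (0:ℝ)..s, exp (β * (s - u)) * k (w - u))
      (exp (β * s) * k w - k (w - s)
        - β * ∫ u in (0:ℝ)..s, exp (β * (s - u)) * k (w - u)) w := by
  have hN : Continuous (fun y => exp (β * y) * k y) := by fun_prop
  have hMe : ∀ w, ∫ u in (0:ℝ)..s, exp (β * (s - u)) * k (w - u)
      = exp (β * (s - w)) * ((∫ y in (0:ℝ)..w, exp (β * y) * k y)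
        - ∫ y in (0:ℝ)..(w - s), exp (β * y) * k y) := by
    intro w
    have := intervalIntegral.integral_comp_sub_left (a := 0) (b := s)
      (fun y => exp (β * (s - w)) * (exp (β * y) * k y)) w
    rw [intervalIntegral.integral_interval_sub_left (hN.intervalIntegrable _ _)
      (hN.intervalIntegrable _ _), ← intervalIntegral.integral_const_mul]
    rw [sub_zero] at this
    rw [← this]
    congr 1; ext u
    rw [← mul_assoc, ← exp_add]; ring_nf
  rw [funext hMe]
  have d1 := hN.integral_hasStrictDerivAt 0 w |>.hasDerivAt
  have d2 := (hN.integral_hasStrictDerivAt 0 (w - s) |>.hasDerivAt).comp w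
    ((hasDerivAt_id w).sub_const s)
  have d3 : HasDerivAt (fun w : ℝ => exp (β * (s - w))) (exp (β * (s - w)) * (β * (-1))) w :=
      (((hasDerivAt_id w).const_sub s).const_mul β).exp
  refine (d3.mul (d1.sub d2)).congr_deriv ?_
  simp only [Function.comp, Pi.sub_apply, id]
  have e1 : exp (β * s) = exp (β * (s - w)) * exp (β * w) := by rw [← exp_add]; ring_nf
  have e2 : exp (β * (s - w)) * exp (β * (w - s)) = 1 := by
    rw [← exp_add]; ring_nf; exact exp_zero
  rw [hMe w, e1]
  linear_combination (- k (w - s)) * e2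

lemma A2 {H : ℝ} (h0 : 0 < H) (β s t : ℝ) (F : ℝ → ℝ)
    (hF : ∀ w, F w = exp (β * s) * (|w| ^ (2 * H) / 2) - |w - s| ^ (2 * H) / 2
       - β * ∫ u in (0:ℝ)..s, exp (β * (s - u)) * (|w - u| ^ (2 * H) / 2)) :
    ∫ v in (0:ℝ)..t, exp (β * (t - v)) *
      deriv (fun w : ℝ =>
        ∫ u in (0:ℝ)..s, H * |w - u| ^ (2 * H - 1) * Real.sign (w - u) * exp (β * (s - u))) v
    = F t - exp (β * t) * F 0 + β * ∫ v in (0:ℝ)..t, exp (β * (t - v)) * F v := by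
  have e : (fun w : ℝ =>
        ∫ u in (0:ℝ)..s, H * |w - u| ^ (2 * H - 1) * Real.sign (w - u) * exp (β * (s - u))) = F := by
    ext w; rw [A1 h0, hF]
  rw [e]
  have hk := kap_cont h0
  have hM := fun w => M_hasDeriv hk β s w
  have hMc : Continuous (fun w => ∫ u in (0:ℝ)..s, exp (β * (s - u)) * (|w - u| ^ (2 * H) / 2)) :=
    continuous_iff_continuousAt.2 fun w => (hM w).continuousAt
  have hks : Continuous (fun w : ℝ => |w - s| ^ (2 * H) / 2) :=
    hk.comp (continuous_id.sub continuous_const)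
  have hFc : Continuous F := by
    rw [funext hF]
    exact ((continuous_const.mul hk).sub hks).sub (continuous_const.mul hMc)
  set F' : ℝ → ℝ := fun w => exp (β * s) * (H * |w| ^ (2 * H - 1) * Real.sign w)
    - (H * |w - s| ^ (2 * H - 1) * Real.sign (w - s)) - β * F w with hF'
  have hFd : ∀ w, w ≠ 0 → w ≠ s → HasDerivAt F (F' w) w := by
    intro w hw hws
    have h1 : HasDerivAt (fun u : ℝ => |u - s| ^ (2 * H) / 2)
        (H * |w - s| ^ (2 * H - 1) * Real.sign (w - s)) w :=
      (kap_hasDeriv (H := H) (sub_ne_zero.2 hws)).comp_sub_const w s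
    have := (((kap_hasDeriv (H := H) hw).const_mul (exp (β * s))).sub h1).sub ((hM w).const_mul β)
    rw [funext hF]
    refine this.congr_deriv ?_
    rw [hF']; dsimp only; rw [hF w]
  have hF'i : IntervalIntegrable F' volume 0 t := by
    refine IntervalIntegrable.sub (IntervalIntegrable.sub ?_ ?_) ?_
    · exact (kap'_ii h0 0 t).const_mul _
    · have := (kap'_ii h0 (0 - s) (t - s)).comp_sub_right s
      simpa using this
    · exact (hFc.intervalIntegrable 0 t).const_mul β
  have hi1 : IntervalIntegrable (fun v => exp (β * (t - v)) * F' v) volume 0 t :=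
    hF'i.continuousOn_mul (by fun_prop)
  have hi2 : IntervalIntegrable (fun v => exp (β * (t - v)) * F v) volume 0 t :=
    Continuous.intervalIntegrable (by fun_prop) _ _
  have key := MeasureTheory.integral_eq_of_hasDerivAt_off_countable
    (a := 0) (b := t) (s := {0, s})
    (fun v => exp (β * (t - v)) * F v)
    (fun v => exp (β * (t - v)) * F' v - β * (exp (β * (t - v)) * F v))
    (Set.toFinite _).countable (by fun_prop) ?_ (hi1.sub (hi2.const_mul β))
  · rw [intervalIntegral.integral_sub hi1 (hi2.const_mul β),
      intervalIntegral.integral_const_mul] at key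
    simp only [sub_self, mul_zero, exp_zero, sub_zero, one_mul] at key
    have : ∫ v in (0:ℝ)..t, exp (β * (t - v)) * deriv F v
        = ∫ v in (0:ℝ)..t, exp (β * (t - v)) * F' v := by
      refine intervalIntegral.integral_congr_ae ?_
      have h1 : ∀ᵐ x : ℝ, x ≠ 0 := by simp [ae_iff]
      have h2 : ∀ᵐ x : ℝ, x ≠ s := by simp [ae_iff]
      filter_upwards [h1, h2] with x hx hxs _
      rw [(hFd x hx hxs).deriv]
    rw [this]; linarith
  · intro u hu
    have hu2 := hu.2
    simp only [mem_insert_iff, mem_singleton_iff, not_or] at hu2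
    have h2 : HasDerivAt (fun u : ℝ => exp (β * (t - u))) (exp (β * (t - u)) * (β * (-1))) u :=
      (((hasDerivAt_id u).const_sub t).const_mul β).exp
    refine (h2.mul (hFd u hu2.1 hu2.2)).congr_deriv ?_
    ring
end

section
open Real MeasureTheory Set Filter

lemma fub {A : ℝ → ℝ → ℝ} (hA : Measurable (Function.uncurry A)) {G : ℝ → ℝ} (hG : Integrable G)
    {t : ℝ} (ht : 0 ≤ t) (hb : ∀ v ∈ Icc 0 t, ∀ w, |A v w| ≤ G w) :
    ∫ v in (0:ℝ)..t, ∫ w, A v w = ∫ w, ∫ v in (0:ℝ)..t, A v w ∧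
      Integrable (fun w => ∫ v in (0:ℝ)..t, A v w) := by
  suffices hh : Integrable (Function.uncurry A) ((volume.restrict (Ioc 0 t)).prod volume) by
    constructor
    · refine intervalIntegral_integral_swap ?_
      rwa [uIoc_of_le ht]
    · simp only [intervalIntegral.integral_of_le ht]
      exact hh.integral_prod_right
  have h1 : Integrable (fun p : ℝ × ℝ => (1:ℝ) * G p.2) ((volume.restrict (Ioc 0 t)).prod volume) :=
    Integrable.mul_prod (integrable_const 1) hG
  refine h1.mono' hA.aestronglyMeasurable ?_
  have : ((volume.restrict (Ioc 0 t)).prod (volume : Measure ℝ))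
      = ((volume : Measure ℝ).prod (volume : Measure ℝ)).restrict (Ioc 0 t ×ˢ univ) := by
    rw [← Measure.prod_restrict, Measure.restrict_univ]
  rw [this, ae_restrict_iff' (measurableSet_Ioc.prod MeasurableSet.univ)]
  refine ae_of_all _ fun p hp => ?_
  rw [one_mul]
  exact hb p.1 (Ioc_subset_Icc_self hp.1) p.2

lemma lin3 {f g h : ℝ → ℝ} (hf : Integrable f) (hg : Integrable g) (hh : Integrable h) (a b c : ℝ) :
    ∫ x, (a * f x + b * g x + c * h x) = a * (∫ x, f x) + b * (∫ x, g x) + c * ∫ x, h x := by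
  have e1 := integral_add (f := fun x => a * f x + b * g x) (g := fun x => c * h x)
    ((hf.const_mul a).add (hg.const_mul b)) (hh.const_mul c)
  have e2 := integral_add (f := fun x => a * f x) (g := fun x => b * g x)
    (hf.const_mul a) (hg.const_mul b)
  rw [e1, e2]; simp only [MeasureTheory.integral_const_mul]

lemma k_bound {H R x : ℝ} (hx : |x| ≤ R) (w : ℝ) :
    |(1 - cos (w * x)) * |w| ^ (-1 - 2 * H)| ≤ (R ^ 2 / 2 + 2) * (|w| ^ (1 - 2 * H) / (1 + w ^ 2)) := by
  rcases eq_or_ne w 0 with rfl | hw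
  · simp; positivity
  have hw' : 0 < |w| := abs_pos.2 hw
  have e : |w| ^ (1 - 2 * H) = w ^ 2 * |w| ^ (-1 - 2 * H) := by
    rw [← sq_abs w, ← rpow_natCast, ← rpow_add hw']; congr 1; push_cast; ring
  have h1 : 0 ≤ 1 - cos (w * x) := by linarith [cos_le_one (w * x)]
  rw [abs_of_nonneg (by positivity), e, mul_div_assoc', le_div_iff₀ (by positivity)]
  have h2 : 1 - cos (w * x) ≤ w ^ 2 * R ^ 2 / 2 := by
    have := one_sub_sq_div_two_le_cos (x := w * x)
    have h3 : x ^ 2 ≤ R ^ 2 := by rw [← sq_abs x]; gcongr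
    have : w ^ 2 * x ^ 2 ≤ w ^ 2 * R ^ 2 := by gcongr
    nlinarith
  have h3 : 1 - cos (w * x) ≤ 2 := by linarith [neg_one_le_cos (w * x)]
  have h4 : (1 - cos (w * x)) * (1 + w ^ 2) ≤ (R ^ 2 / 2 + 2) * w ^ 2 := by
    nlinarith [mul_le_mul_of_nonneg_right h3 (sq_nonneg w)]
  have h5 : 0 < |w| ^ (-1 - 2 * H) := by positivity
  nlinarith [mul_le_mul_of_nonneg_right h4 h5.le]

noncomputable def PsiK (β s w o : ℝ) : ℝ :=
  (o ^ 2 * (cos (o * (w - s)) - exp (β * s) * cos (o * w))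
    - β * o * (sin (o * (w - s)) - exp (β * s) * sin (o * w))) / (o ^ 2 + β ^ 2)

noncomputable def RK (β s t o : ℝ) : ℝ :=
  o ^ 2 * (cos (o * (t - s)) - exp (β * t) * cos (o * s) - exp (β * s) * cos (o * t)
    + exp (β * (s + t))) / (o ^ 2 + β ^ 2)

lemma psi_int {β s w o : ℝ} (ho : o ≠ 0) :
    exp (β * s) * (1 - cos (o * w)) - (1 - cos (o * (w - s)))
      - β * ∫ u in (0:ℝ)..s, exp (β * (s - u)) * (1 - cos (o * (w - u))) = PsiK β s w o := by
  have hD : o ^ 2 + β ^ 2 ≠ 0 := by positivity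
  rw [← intervalIntegral.integral_const_mul,
    intervalIntegral.integral_eq_sub_of_hasDerivAt
    (f := fun u => exp (β * (s - u)) *
      (β * (β * cos (o * (w - u)) + o * sin (o * (w - u))) / (o ^ 2 + β ^ 2) - 1))]
  · simp only [PsiK, sub_self, mul_zero, exp_zero, sub_zero, one_mul]
    field_simp
    ring
  · intro u _
    have h2 : HasDerivAt (fun u : ℝ => exp (β * (s - u))) (exp (β * (s - u)) * (β * (-1))) u :=
      (((hasDerivAt_id u).const_sub s).const_mul β).exp
    have h3 : HasDerivAt (fun u : ℝ => o * (w - u)) (o * (-1)) u :=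
      ((hasDerivAt_id u).const_sub w).const_mul o
    refine (h2.mul ((((((h3.cos.const_mul β).add (h3.sin.const_mul o)).const_mul β).div_const
      (o ^ 2 + β ^ 2))).sub_const 1)).congr_deriv ?_
    simp only [Pi.add_apply]
    field_simp
    ring
  · exact Continuous.intervalIntegrable (by fun_prop) _ _

lemma R_int {β s t o : ℝ} (ho : o ≠ 0) :
    PsiK β s t o - exp (β * t) * PsiK β s 0 o
      + β * ∫ v in (0:ℝ)..t, exp (β * (t - v)) * PsiK β s v o = RK β s t o := by
  have hD : o ^ 2 + β ^ 2 ≠ 0 := by positivity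
  rw [← intervalIntegral.integral_const_mul,
    intervalIntegral.integral_eq_sub_of_hasDerivAt
    (f := fun v => exp (β * (t - v)) * (RK β s v o - PsiK β s v o))]
  · simp only [PsiK, RK, sub_self, mul_zero, exp_zero, sub_zero, one_mul, zero_sub, mul_neg, cos_neg,
      sin_neg, cos_zero, sin_zero, add_zero]
    field_simp
    ring
  · intro u _
    have h2 : HasDerivAt (fun u : ℝ => exp (β * (t - u))) (exp (β * (t - u)) * (β * (-1))) u :=
      (((hasDerivAt_id u).const_sub t).const_mul β).exp
    have h3 : HasDerivAt (fun u : ℝ => o * (u - s)) (o * 1) u :=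
      ((hasDerivAt_id u).sub_const s).const_mul o
    have h4 : HasDerivAt (fun u : ℝ => o * u) (o * 1) u :=
      ((hasDerivAt_id u)).const_mul o
    have h5 : HasDerivAt (fun u : ℝ => exp (β * u)) (exp (β * u) * (β * 1)) u :=
      (((hasDerivAt_id u)).const_mul β).exp
    have h6 : HasDerivAt (fun u : ℝ => exp (β * (s + u))) (exp (β * (s + u)) * (β * 1)) u :=
      (((hasDerivAt_id u).const_add s).const_mul β).exp
    have hP : HasDerivAt (fun u => PsiK β s u o) _ u :=
      ((((h3.cos.sub (h4.cos.const_mul (exp (β * s)))).const_mul (o^2)).sub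
        ((h3.sin.sub (h4.sin.const_mul (exp (β * s)))).const_mul (β * o))).div_const (o ^ 2 + β ^ 2))
    have hR : HasDerivAt (fun u => RK β s u o) _ u :=
      (((((h3.cos.sub (h5.mul_const (cos (o * s)))).sub
        (h4.cos.const_mul (exp (β * s)))).add h6).const_mul (o^2)).div_const (o ^ 2 + β ^ 2))
    refine (h2.mul (hR.sub hP)).congr_deriv ?_
    simp only [Pi.sub_apply, PsiK, RK]
    have e : exp (β * (s + u)) = exp (β * s) * exp (β * u) := by rw [← exp_add]; ring_nf
    rw [e]
    field_simp
    ring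
  · exact Continuous.intervalIntegrable (by unfold PsiK; fun_prop) _ _

lemma ae_ne_zero' : ∀ᵐ x : ℝ, x ≠ 0 := by simp [ae_iff]

lemma kernel_spec {H β s t : ℝ} (h0 : 0 < H) (h1 : H < 1) (hs : 0 ≤ s) (ht : 0 ≤ t) :
    ∫ v in (0:ℝ)..t, exp (β * (t - v)) *
      deriv (fun w : ℝ =>
        ∫ u in (0:ℝ)..s, H * |w - u| ^ (2 * H - 1) * Real.sign (w - u) * exp (β * (s - u))) v
    = (sin (π * H) * Gamma (2 * H + 1)) / (2 * π) * ∫ o : ℝ, RK β s t o * |o| ^ (-1 - 2 * H) := by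
  set c' := (sin (π * H) * Gamma (2 * H + 1)) / (2 * π) with hc'
  have hsin : 0 < sin (π * H) := sin_pos_of_pos_of_lt_pi (by positivity) (by nlinarith [pi_pos])
  have hGp : 0 < Gamma (2 * H + 1) := Gamma_pos_of_pos (by linarith)
  have hπ := pi_pos
  have hkap : ∀ x : ℝ, |x| ^ (2 * H) / 2 = c' * ∫ w : ℝ, (1 - cos (w * x)) * |w| ^ (-1 - 2 * H) := by
    intro x; rw [(kappa_spectral h0 h1 x).2, hc']
    generalize sin (π * H) = S at *
    field_simp
  have hki := fun x => (kappa_spectral h0 h1 x).1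
  have hG := integrable_G h0 h1
  have hmk : Measurable (fun w : ℝ => |w| ^ (-1 - 2 * H)) := by fun_prop
  -- first Fubini
  set B := exp (|β| * s) with hB
  have hexp : ∀ u ∈ Icc 0 s, exp (β * (s - u)) ≤ B := by
    intro u hu
    rw [hB]; apply exp_le_exp.2
    calc β * (s - u) ≤ |β| * (s - u) := by gcongr; linarith [hu.2]; exact le_abs_self _
      _ ≤ |β| * s := by gcongr; linarith [hu.1]
  have hF1 : ∀ w, ∫ u in (0:ℝ)..s, exp (β * (s - u)) * (|w - u| ^ (2 * H) / 2)
      = c' * ∫ o, (∫ u in (0:ℝ)..s, exp (β * (s - u)) * (1 - cos (o * (w - u)))) * |o| ^ (-1 - 2 * H) := by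
    intro w
    have := fub (A := fun u o => exp (β * (s - u)) * ((1 - cos (o * (w - u))) * |o| ^ (-1 - 2 * H)))
      (by unfold Function.uncurry; fun_prop)
      ((hG.const_mul (((|w| + s)) ^ 2 / 2 + 2)).const_mul B) hs ?_
    · replace this := this.1
      calc _ = ∫ u in (0:ℝ)..s, c' * ∫ o, exp (β * (s - u)) * ((1 - cos (o * (w - u))) * |o| ^ (-1 - 2 * H)) := by
            congr 1; ext u; rw [hkap, MeasureTheory.integral_const_mul]; ring
        _ = _ := by
            rw [intervalIntegral.integral_const_mul, this]
            congr 2; ext o; rw [← intervalIntegral.integral_mul_const]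
            congr 1; ext u; ring
    · intro u hu o
      rw [abs_mul, abs_of_pos (exp_pos _)]
      refine mul_le_mul (hexp u hu) (k_bound ?_ o) (abs_nonneg _) (exp_pos _).le
      calc |w - u| ≤ |w| + |u| := abs_sub _ _
        _ ≤ |w| + s := by rw [abs_of_nonneg hu.1]; gcongr; exact hu.2
  have hmb : ∀ R, ∀ w ∈ Icc (-R) R, ∀ o, |(∫ u in (0:ℝ)..s, exp (β * (s - u)) * (1 - cos (o * (w - u)))) * |o| ^ (-1 - 2 * H)|
      ≤ B * s * (((R + s) ^ 2 / 2 + 2) * (|o| ^ (1 - 2 * H) / (1 + o ^ 2))) := by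
    intro R w hw o
    rw [← intervalIntegral.integral_mul_const]
    have := intervalIntegral.norm_integral_le_of_norm_le_const (a := 0) (b := s)
      (f := fun u => exp (β * (s - u)) * (1 - cos (o * (w - u))) * |o| ^ (-1 - 2 * H))
      (C := B * (((R + s) ^ 2 / 2 + 2) * (|o| ^ (1 - 2 * H) / (1 + o ^ 2)))) ?_
    · rw [sub_zero, abs_of_nonneg hs] at this
      refine this.trans (le_of_eq (by ring))
    · intro u hu
      rw [uIoc_of_le hs] at hu
      have hu := Ioc_subset_Icc_self hu
      rw [mul_assoc, norm_mul, norm_eq_abs, norm_eq_abs, abs_of_pos (exp_pos _)]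
      refine mul_le_mul (hexp u hu) (k_bound ?_ o) (abs_nonneg _) (exp_pos _).le
      calc |w - u| ≤ |w| + |u| := abs_sub _ _
        _ ≤ R + s := by rw [abs_of_nonneg hu.1]; exact add_le_add (abs_le.2 hw) hu.2
  have hF1i : ∀ w, Integrable (fun o => (∫ u in (0:ℝ)..s, exp (β * (s - u)) * (1 - cos (o * (w - u)))) * |o| ^ (-1 - 2 * H)) := by
    intro w
    refine Integrable.mono' ((hG.const_mul (((|w| + s) ^ 2 / 2 + 2))).const_mul (B * s)) ?_
      (ae_of_all _ (hmb |w| w (abs_le.1 le_rfl)))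
    refine (Measurable.mul ?_ hmk).aestronglyMeasurable
    refine Continuous.measurable ?_
    refine intervalIntegral.continuous_parametric_intervalIntegral_of_continuous' ?_ _ _
    unfold Function.uncurry; fun_prop
  set F : ℝ → ℝ := fun w => c' * ∫ o, PsiK β s w o * |o| ^ (-1 - 2 * H) with hFdef
  have hF : ∀ w, F w = exp (β * s) * (|w| ^ (2 * H) / 2) - |w - s| ^ (2 * H) / 2
       - β * ∫ u in (0:ℝ)..s, exp (β * (s - u)) * (|w - u| ^ (2 * H) / 2) := by
    intro w
    rw [hF1 w, hkap w, hkap (w - s), hFdef]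
    dsimp only
    have : ∫ o, PsiK β s w o * |o| ^ (-1 - 2 * H) =
      ∫ o, (exp (β * s) * ((1 - cos (o * w)) * |o| ^ (-1 - 2 * H)) + (-1) *
        ((1 - cos (o * (w - s))) * |o| ^ (-1 - 2 * H)) + (- β) * ((∫ u in (0:ℝ)..s, exp (β * (s - u)) * (1 - cos (o * (w - u)))) * |o| ^ (-1 - 2 * H))) := by
      refine integral_congr_ae ?_
      filter_upwards [ae_ne_zero'] with o ho
      rw [← psi_int ho]; ring
    rw [this, lin3 (hki w) (hki (w - s)) (hF1i w)]
    ring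
  have hPb : ∀ R, ∃ C, 0 ≤ C ∧ ∀ w ∈ Icc (-R) R, ∀ o, |PsiK β s w o * |o| ^ (-1 - 2 * H)|
      ≤ C * (|o| ^ (1 - 2 * H) / (1 + o ^ 2)) := by
    intro R
    refine ⟨exp (β * s) * (R ^ 2 / 2 + 2) + ((R + s) ^ 2 / 2 + 2) + |β| * (B * s * ((R + s) ^ 2 / 2 + 2)),
      by positivity, fun w hw o => ?_⟩
    rcases eq_or_ne o 0 with rfl | ho
    · simp [PsiK]; positivity
    have b1 := k_bound (H := H) (abs_le.2 hw) o
    have b2 := k_bound (H := H) (R := R + s) (x := w - s) (by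
      calc |w - s| ≤ |w| + |s| := abs_sub _ _
        _ ≤ R + s := by rw [abs_of_nonneg hs]; exact add_le_add (abs_le.2 hw) le_rfl) o
    have b3 := hmb R w hw o
    rw [← psi_int ho]
    set I := ∫ u in (0:ℝ)..s, exp (β * (s - u)) * (1 - cos (o * (w - u)))
    set k := |o| ^ (-1 - 2 * H)
    calc _ = |exp (β * s) * ((1 - cos (o * w)) * k) - (1 - cos (o * (w - s))) * k - β * (I * k)| := by
          congr 1; ring
      _ ≤ exp (β * s) * |(1 - cos (o * w)) * k| + |(1 - cos (o * (w - s))) * k| + |β| * |I * k| := by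
          refine (abs_sub _ _).trans ?_
          rw [abs_mul β]
          gcongr
          refine (abs_sub _ _).trans ?_
          rw [abs_mul (exp _), abs_of_pos (exp_pos _)]
      _ ≤ _ := by
          refine (add_le_add (add_le_add (mul_le_mul_of_nonneg_left b1 (exp_pos _).le) b2)
            (mul_le_mul_of_nonneg_left b3 (abs_nonneg β))).trans (le_of_eq (by ring))
  have hPm : Measurable (fun p : ℝ × ℝ => PsiK β s p.1 p.2) := by unfold PsiK; fun_prop
  have hPi : ∀ w, Integrable (fun o => PsiK β s w o * |o| ^ (-1 - 2 * H)) := by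
    intro w
    obtain ⟨C, _, hC⟩ := hPb |w|
    refine Integrable.mono' (hG.const_mul C) ?_ (ae_of_all _ (hC w (abs_le.1 le_rfl)))
    refine (Measurable.mul ?_ hmk).aestronglyMeasurable
    exact hPm.comp (measurable_const.prodMk measurable_id)
  rw [A2 h0 β s t F hF]
  obtain ⟨C, hC0, hC⟩ := hPb t
  have hexp2 : ∀ u ∈ Icc 0 t, exp (β * (t - u)) ≤ exp (|β| * t) := by
    intro u hu
    apply exp_le_exp.2
    calc β * (t - u) ≤ |β| * (t - u) := by gcongr; linarith [hu.2]; exact le_abs_self _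
      _ ≤ |β| * t := by gcongr; linarith [hu.1]
  have hAb : ∀ v ∈ Icc 0 t, ∀ o, |exp (β * (t - v)) * (PsiK β s v o * |o| ^ (-1 - 2 * H))|
      ≤ exp (|β| * t) * (C * (|o| ^ (1 - 2 * H) / (1 + o ^ 2))) := by
    intro v hv o
    rw [abs_mul, abs_of_pos (exp_pos _)]
    exact mul_le_mul (hexp2 v hv) (hC v ⟨by linarith [hv.1], hv.2⟩ o) (abs_nonneg _) (exp_pos _).le
  have hfub := fub (A := fun v o => exp (β * (t - v)) * (PsiK β s v o * |o| ^ (-1 - 2 * H)))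
      (by
        refine Measurable.mul (by fun_prop) (Measurable.mul hPm (by fun_prop)))
      ((hG.const_mul C).const_mul (exp (|β| * t))) ht hAb
  obtain ⟨hfub, hIi⟩ := hfub
  have e1 : ∫ v in (0:ℝ)..t, exp (β * (t - v)) * F v = c' * ∫ o, ∫ v in (0:ℝ)..t, exp (β * (t - v)) * (PsiK β s v o * |o| ^ (-1 - 2 * H)) := by
    rw [← hfub, ← intervalIntegral.integral_const_mul]
    congr 1; ext v; rw [hFdef, MeasureTheory.integral_const_mul]; ring
  have e2 : ∫ o : ℝ, RK β s t o * |o| ^ (-1 - 2 * H) =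
      ∫ o, (1 * (PsiK β s t o * |o| ^ (-1 - 2 * H)) + (- exp (β * t)) * (PsiK β s 0 o * |o| ^ (-1 - 2 * H))
        + β * ∫ v in (0:ℝ)..t, exp (β * (t - v)) * (PsiK β s v o * |o| ^ (-1 - 2 * H))) := by
    refine integral_congr_ae ?_
    filter_upwards [ae_ne_zero'] with o ho
    rw [← R_int ho]
    have : ∫ v in (0:ℝ)..t, exp (β * (t - v)) * (PsiK β s v o * |o| ^ (-1 - 2 * H))
       = (∫ v in (0:ℝ)..t, exp (β * (t - v)) * PsiK β s v o) * |o| ^ (-1 - 2 * H) := by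
      rw [← intervalIntegral.integral_mul_const]; congr 1; ext v; ring
    rw [this]; ring
  rw [e1, e2, lin3 (hPi t) (hPi 0) hIi, hFdef]
  ring
end

section
open Real MeasureTheory Set Filter

/-- The residual. -/
noncomputable def resid (T : ℝ) (F : ℝ → ℝ → ℂ) (g : ℝ → ℝ) (o : ℝ) : ℂ :=
  F T o - ∫ t in (0:ℝ)..T, g t • F t o

lemma conv_meas {T : ℝ} (hT : 0 < T) {F : ℝ → ℝ → ℂ} (hFm : Measurable (Function.uncurry F))
    {g : ℝ → ℝ} (hg : Continuous g) : Measurable (fun o => ∫ t in (0:ℝ)..T, g t • F t o) := by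
  simp only [intervalIntegral.integral_of_le hT.le]
  have : StronglyMeasurable (Function.uncurry fun o t => g t • F t o) := by
    refine Measurable.stronglyMeasurable ?_
    refine Measurable.smul (hg.measurable.comp measurable_snd) ?_
    exact hFm.comp (measurable_snd.prodMk measurable_fst)
  exact this.integral_prod_right.measurable

lemma resid_meas {T : ℝ} (hT : 0 < T) {F : ℝ → ℝ → ℂ} (hFm : Measurable (Function.uncurry F))
    {g : ℝ → ℝ} (hg : Continuous g) : Measurable (resid T F g) := by
  refine Measurable.sub ?_ (conv_meas hT hFm hg)
  exact hFm.comp (measurable_const.prodMk measurable_id)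

lemma cont_bdd {T : ℝ} {g : ℝ → ℝ} (hg : Continuous g) :
    ∃ M, 0 ≤ M ∧ ∀ t ∈ Icc 0 T, |g t| ≤ M := by
  obtain ⟨M, hM⟩ := (isCompact_Icc (a := (0:ℝ)) (b := T)).exists_bound_of_continuousOn hg.continuousOn
  exact ⟨max M 0, le_max_right _ _, fun t ht => (hM t ht).trans (le_max_left _ _)⟩

lemma resid_bdd {T : ℝ} (hT : 0 < T) {F : ℝ → ℝ → ℂ} {D : ℝ → ℝ}
    (hD : ∀ t ∈ Icc 0 T, ∀ o, ‖F t o‖ ≤ D o)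
    {g : ℝ → ℝ} (hg : Continuous g) : ∃ M, 0 ≤ M ∧ ∀ o, ‖resid T F g o‖ ≤ M * D o := by
  obtain ⟨M, hM0, hM⟩ := cont_bdd (T := T) hg
  refine ⟨1 + M * T, by positivity, fun o => ?_⟩
  have hD0 : 0 ≤ D o := (norm_nonneg _).trans (hD T ⟨hT.le, le_rfl⟩ o)
  have := intervalIntegral.norm_integral_le_of_norm_le_const (a := 0) (b := T)
      (f := fun t => g t • F t o) (C := M * D o) (fun t ht => by
        rw [uIoc_of_le hT.le] at ht
        have ht := Ioc_subset_Icc_self ht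
        rw [norm_smul]
        exact mul_le_mul (hM t ht) (hD t ht o) (norm_nonneg _) hM0)
  rw [sub_zero, abs_of_pos hT] at this
  calc _ ≤ ‖F T o‖ + ‖∫ t in (0:ℝ)..T, g t • F t o‖ := norm_sub_le _ _
    _ ≤ D o + M * D o * T := add_le_add (hD T ⟨hT.le, le_rfl⟩ o) this
    _ = _ := by ring

structure FilterData (T : ℝ) (w D : ℝ → ℝ) (F : ℝ → ℝ → ℂ) : Prop where
  hT : 0 < T
  hFm : Measurable (Function.uncurry F)
  hFc : ∀ o, Continuous (fun t => F t o)
  hD : ∀ t ∈ Icc 0 T, ∀ o, ‖F t o‖ ≤ D o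
  hwm : Measurable w
  hw : ∀ o, 0 ≤ w o
  hwD : Integrable (fun o => w o * D o ^ 2)

variable {T : ℝ} {w D : ℝ → ℝ} {F : ℝ → ℝ → ℂ}

lemma FilterData.inner_integrable (h : FilterData T w D F) {A B : ℝ → ℂ} (hA : Measurable A)
    (hB : Measurable B) {a b : ℝ} (hAb : ∀ o, ‖A o‖ ≤ a * D o) (hBb : ∀ o, ‖B o‖ ≤ b * D o) :
    Integrable (fun o => w o * inner ℝ (A o) (B o)) := by
  refine Integrable.mono' (h.hwD.const_mul (a * b)) ?_ (ae_of_all _ fun o => ?_)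
  · exact (h.hwm.mul (hA.inner hB)).aestronglyMeasurable
  · rw [norm_mul, norm_eq_abs, abs_of_nonneg (h.hw o)]
    calc _ ≤ w o * ((a * D o) * (b * D o)) := by
          refine mul_le_mul_of_nonneg_left ?_ (h.hw o)
          refine (norm_inner_le_norm _ _).trans ?_
          exact mul_le_mul (hAb o) (hBb o) (norm_nonneg _) ((norm_nonneg _).trans (hAb o))
      _ = _ := by ring

lemma FilterData.Fm (h : FilterData T w D F) (t : ℝ) : Measurable (F t) :=
  h.hFm.comp (measurable_const.prodMk measurable_id)

lemma FilterData.D0 (h : FilterData T w D F) (o : ℝ) : 0 ≤ D o :=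
  (norm_nonneg _).trans (h.hD T ⟨h.hT.le, le_rfl⟩ o)

lemma FilterData.F1 (h : FilterData T w D F) {t : ℝ} (ht : t ∈ Icc 0 T) (o : ℝ) :
    ‖F t o‖ ≤ 1 * D o := by rw [one_mul]; exact h.hD t ht o

/-- Fubini for the inner product with a convolution. -/
lemma FilterData.fubini (h : FilterData T w D F) {A : ℝ → ℂ} (hA : Measurable A) {a : ℝ}
    (hAb : ∀ o, ‖A o‖ ≤ a * D o) {g : ℝ → ℝ} (hg : Continuous g) :
    ∫ t in (0:ℝ)..T, g t * ∫ o, w o * inner ℝ (A o) (F t o)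
      = ∫ o, w o * inner ℝ (A o) (∫ t in (0:ℝ)..T, g t • F t o) ∧
    Integrable (fun o => w o * inner ℝ (A o) (∫ t in (0:ℝ)..T, g t • F t o)) := by
  obtain ⟨M, hM0, hM⟩ := cont_bdd (T := T) hg
  have hf := fub (A := fun t o => g t * (w o * inner ℝ (A o) (F t o))) ?_
    ((h.hwD.const_mul (M * a))) h.hT.le ?_
  · have e : ∀ o, ∫ t in (0:ℝ)..T, g t * (w o * inner ℝ (A o) (F t o))
        = w o * inner ℝ (A o) (∫ t in (0:ℝ)..T, g t • F t o) := by
      intro o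
      have := ContinuousLinearMap.intervalIntegral_comp_comm (w o • innerSL ℝ (A o))
        (f := fun t => g t • F t o) (a := 0) (b := T) (μ := volume)
        (Continuous.intervalIntegrable (hg.smul (h.hFc o)) _ _)
      simp only [ContinuousLinearMap.smul_apply, innerSL_apply_apply, smul_eq_mul] at this
      rw [← this]
      congr 1; ext t; rw [inner_smul_right]; ring
    simp only [e] at hf
    refine ⟨?_, hf.2⟩
    rw [← hf.1]
    congr 1; ext t; rw [MeasureTheory.integral_const_mul]
  · refine Measurable.mul (hg.measurable.comp measurable_fst) ?_
    refine Measurable.mul (h.hwm.comp measurable_snd) ?_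
    exact (hA.comp measurable_snd).inner h.hFm
  · intro t ht o
    rw [abs_mul, abs_mul, abs_of_nonneg (h.hw o)]
    have h0 : 0 ≤ w o := h.hw o
    calc _ ≤ M * (w o * ((a * D o) * D o)) := by
          refine mul_le_mul (hM t ht) ?_ (by positivity) hM0
          refine mul_le_mul_of_nonneg_left ?_ h0
          refine (abs_real_inner_le_norm _ _).trans ?_
          exact mul_le_mul (hAb o) (h.hD t ht o) (norm_nonneg _) ((norm_nonneg _).trans (hAb o))
      _ = _ := by ring

section filt
variable {lam : ℝ} {g : ℝ → ℝ}

lemma FilterData.star (h : FilterData T w D F) (hg : Continuous g)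
    (heq : ∀ s ∈ Icc 0 T, lam * g s + ∫ r in (0:ℝ)..T, (∫ o, w o * inner ℝ (F r o) (F s o)) * g r
      = ∫ o, w o * inner ℝ (F s o) (F T o)) {s : ℝ} (hs : s ∈ Icc 0 T) :
    lam * g s = ∫ o, w o * inner ℝ (resid T F g o) (F s o) := by
  have hT := h.hT
  have h1 := h.fubini (h.Fm s) (h.F1 hs) hg
  have h2 := h.inner_integrable (h.Fm s) (h.Fm T) (h.F1 hs) (h.F1 ⟨hT.le, le_rfl⟩)
  have e : ∀ o, w o * inner ℝ (resid T F g o) (F s o) = w o * inner ℝ (F s o) (F T o)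
     - w o * inner ℝ (F s o) (∫ t in (0:ℝ)..T, g t • F t o) := by
    intro o; rw [real_inner_comm, resid, inner_sub_right]; ring
  simp only [e]
  rw [integral_sub h2 h1.2, ← h1.1, ← heq s hs]
  have : ∀ r, (∫ o, w o * inner ℝ (F r o) (F s o)) * g r = g r * ∫ o, w o * inner ℝ (F s o) (F r o) := by
    intro r; rw [mul_comm]; simp only [real_inner_comm]
  simp only [this]; ring

lemma FilterData.cross (h : FilterData T w D F) (hg : Continuous g)
    (heq : ∀ s ∈ Icc 0 T, lam * g s + ∫ r in (0:ℝ)..T, (∫ o, w o * inner ℝ (F r o) (F s o)) * g r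
      = ∫ o, w o * inner ℝ (F s o) (F T o)) {g' : ℝ → ℝ} (hg' : Continuous g') :
    lam * g T - lam * ∫ t in (0:ℝ)..T, g t * g' t
      = ∫ o, w o * inner ℝ (resid T F g o) (resid T F g' o) := by
  have hT := h.hT
  obtain ⟨M, hM0, hM⟩ := resid_bdd hT h.hD hg
  have hN := resid_meas hT h.hFm hg
  have h1 := h.fubini hN hM hg'
  have h2 := h.inner_integrable hN (h.Fm T) hM (h.F1 ⟨hT.le, le_rfl⟩)
  have e : ∀ o, w o * inner ℝ (resid T F g o) (resid T F g' o) = w o * inner ℝ (resid T F g o) (F T o)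
     - w o * inner ℝ (resid T F g o) (∫ t in (0:ℝ)..T, g' t • F t o) := by
    intro o; conv_lhs => rw [resid.eq_def (g := g'), inner_sub_right]
    ring
  simp only [e]
  rw [integral_sub h2 h1.2, ← h1.1, ← h.star hg heq ⟨hT.le, le_rfl⟩, ← intervalIntegral.integral_const_mul]
  congr 1
  refine intervalIntegral.integral_congr fun t ht => ?_
  rw [uIcc_of_le hT.le] at ht
  rw [← h.star hg heq ht]; ring

lemma FilterData.upper (h : FilterData T w D F) (hl : 0 < lam) (hg : Continuous g)
    (heq : ∀ s ∈ Icc 0 T, lam * g s + ∫ r in (0:ℝ)..T, (∫ o, w o * inner ℝ (F r o) (F s o)) * g r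
      = ∫ o, w o * inner ℝ (F s o) (F T o)) {g' : ℝ → ℝ} (hg' : Continuous g') :
    lam * g T ≤ (∫ o, w o * ‖resid T F g' o‖ ^ 2) + lam * ∫ t in (0:ℝ)..T, g' t ^ 2 := by
  have hT := h.hT
  obtain ⟨M, hM0, hM⟩ := resid_bdd hT h.hD hg
  have hN := resid_meas hT h.hFm hg
  obtain ⟨M', hM0', hM'⟩ := resid_bdd hT h.hD hg'
  have hN' := resid_meas hT h.hFm hg'
  have c1 := h.cross hg heq hg
  have c2 := h.cross hg heq hg'
  have i1 := h.inner_integrable hN hN hM hM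
  have i2 := h.inner_integrable hN hN' hM hM'
  have i3 := h.inner_integrable hN' hN' hM' hM'
  have q1 : 2 * (∫ o, w o * inner ℝ (resid T F g o) (resid T F g' o))
      ≤ (∫ o, w o * inner ℝ (resid T F g o) (resid T F g o))
        + ∫ o, w o * inner ℝ (resid T F g' o) (resid T F g' o) := by
    rw [← integral_add i1 i3, ← MeasureTheory.integral_const_mul]
    refine integral_mono (i2.const_mul 2) (i1.add i3) fun o => ?_
    dsimp only [Pi.add_apply]
    have h1 := real_inner_self_nonneg (x := resid T F g o - resid T F g' o)
    rw [inner_sub_left, inner_sub_right, inner_sub_right, real_inner_comm (resid T F g o) (resid T F g' o)] at h1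
    nlinarith [mul_nonneg (h.hw o) h1]
  have j1 : IntervalIntegrable (fun t => g t * g t) volume 0 T := (hg.mul hg).intervalIntegrable _ _
  have j2 : IntervalIntegrable (fun t => g t * g' t) volume 0 T := (hg.mul hg').intervalIntegrable _ _
  have j3 : IntervalIntegrable (fun t => g' t ^ 2) volume 0 T := (hg'.pow 2).intervalIntegrable _ _
  have q2 : 2 * (∫ t in (0:ℝ)..T, g t * g' t) ≤ (∫ t in (0:ℝ)..T, g t * g t) + ∫ t in (0:ℝ)..T, g' t ^ 2 := by
    rw [← intervalIntegral.integral_add j1 j3, ← intervalIntegral.integral_const_mul]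
    refine intervalIntegral.integral_mono_on hT.le (j2.const_mul 2) (j1.add j3) fun t _ => ?_
    nlinarith [sq_nonneg (g t - g' t)]
  simp only [real_inner_self_eq_norm_sq] at *
  nlinarith

lemma FilterData.lower (h : FilterData T w D F) (hg : Continuous g)
    (heq : ∀ s ∈ Icc 0 T, lam * g s + ∫ r in (0:ℝ)..T, (∫ o, w o * inner ℝ (F r o) (F s o)) * g r
      = ∫ o, w o * inner ℝ (F s o) (F T o)) :
    lam * g T = (∫ o, w o * ‖resid T F g o‖ ^ 2) + lam * ∫ t in (0:ℝ)..T, g t ^ 2 ∧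
    Integrable (fun o => w o * ‖resid T F g o‖ ^ 2) := by
  have hT := h.hT
  obtain ⟨M, hM0, hM⟩ := resid_bdd hT h.hD hg
  have hN := resid_meas hT h.hFm hg
  have c1 := h.cross hg heq hg
  have i1 := h.inner_integrable hN hN hM hM
  simp only [real_inner_self_eq_norm_sq, ← pow_two] at *
  exact ⟨by linarith, i1⟩
end filt
end

section
open Real MeasureTheory Set Filter

noncomputable def Eo (t o : ℝ) : ℂ := Complex.exp ((o * t : ℝ) * Complex.I)
noncomputable def Fo (β t o : ℝ) : ℂ :=
  (Eo t o - (exp (β * t) : ℝ)) / ((o : ℂ) * Complex.I - (β : ℂ))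

lemma Eo_re (t o : ℝ) : (Eo t o).re = cos (o * t) := by
  rw [Eo, Complex.exp_ofReal_mul_I_re]
lemma Eo_im (t o : ℝ) : (Eo t o).im = sin (o * t) := by
  rw [Eo, Complex.exp_ofReal_mul_I_im]
lemma Eo_norm (t o : ℝ) : ‖Eo t o‖ = 1 := Complex.norm_exp_ofReal_mul_I _

lemma inner_div_div (a b d : ℂ) : inner ℝ (a / d) (b / d) = inner ℝ a b / ‖d‖ ^ 2 := by
  simp only [Complex.inner]
  have : (b / d) * (starRingEnd ℂ) (a / d) = (b * (starRingEnd ℂ) a) / ((‖d‖ ^ 2 : ℝ) : ℂ) := by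
    rw [map_div₀, ← Complex.normSq_eq_norm_sq, ← Complex.mul_conj, div_mul_div_comm]
  rw [this, Complex.div_ofReal_re]

lemma den_norm (β o : ℝ) : ‖(o : ℂ) * Complex.I - (β : ℂ)‖ ^ 2 = o ^ 2 + β ^ 2 := by
  rw [← Complex.normSq_eq_norm_sq, Complex.normSq_apply]; simp; ring

lemma F_inner {H β s t o : ℝ} (ho : o ≠ 0) :
    RK β s t o * |o| ^ (-1 - 2 * H) = |o| ^ (1 - 2 * H) * inner ℝ (Fo β s o) (Fo β t o) := by
  have hw' : 0 < |o| := abs_pos.2 ho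
  have e : |o| ^ (1 - 2 * H) = o ^ 2 * |o| ^ (-1 - 2 * H) := by
    rw [← sq_abs o, ← rpow_natCast, ← rpow_add hw']; congr 1; push_cast; ring
  rw [Fo, Fo, inner_div_div, den_norm, e, RK]
  simp only [Complex.inner, Complex.mul_re, Complex.sub_re, Complex.conj_re, Complex.conj_im, map_sub,
    Complex.sub_im, Eo_re, Eo_im, Complex.ofReal_re, Complex.ofReal_im]
  have : cos (o * (t - s)) = cos (o * t) * cos (o * s) + sin (o * t) * sin (o * s) := by
    rw [mul_sub, cos_sub]
  rw [this, mul_add β, exp_add]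
  ring

lemma Eo_sub_le (s t o : ℝ) : ‖Eo t o - Eo s o‖ ≤ |o| * |t - s| := by
  have : Eo t o - Eo s o = Eo s o * (Complex.exp (Complex.I * (o * (t - s) : ℝ)) - 1) := by
    rw [Eo, Eo, mul_sub, ← Complex.exp_add, mul_one]; congr 2; push_cast; ring
  rw [this, norm_mul, Eo_norm, one_mul]
  refine (norm_exp_I_mul_ofReal_sub_one_le).trans ?_
  rw [norm_eq_abs, abs_mul]

lemma exp_mul_le {β T x : ℝ} (hx : x ∈ Icc 0 T) : exp (β * x) ≤ exp (|β| * T) := by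
  apply exp_le_exp.2
  calc β * x ≤ |β| * x := mul_le_mul_of_nonneg_right (le_abs_self _) hx.1
    _ ≤ |β| * T := mul_le_mul_of_nonneg_left hx.2 (abs_nonneg _)

lemma den_ge (β o : ℝ) : |o| ≤ ‖(o : ℂ) * Complex.I - (β : ℂ)‖ := by
  rw [← sqrt_sq (norm_nonneg ((o : ℂ) * Complex.I - (β : ℂ))), den_norm]
  apply abs_le_sqrt; nlinarith

lemma den_ge' (β o : ℝ) : |β| ≤ ‖(o : ℂ) * Complex.I - (β : ℂ)‖ := by
  rw [← sqrt_sq (norm_nonneg ((o : ℂ) * Complex.I - (β : ℂ))), den_norm]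
  apply abs_le_sqrt; nlinarith

lemma exp_sub_le {β T s t : ℝ} (hs : s ∈ Icc 0 T) (ht : t ∈ Icc 0 T) :
    |exp (β * t) - exp (β * s)| ≤ |β| * exp (|β| * T) * |t - s| := by
  have := Convex.norm_image_sub_le_of_norm_hasDerivWithin_le (f := fun t => exp (β * t))
    (f' := fun t => exp (β * t) * (β * 1)) (s := Icc 0 T) (C := |β| * exp (|β| * T)) (x := s) (y := t)
    (fun x _ => (((hasDerivAt_id x).const_mul β).exp).hasDerivWithinAt) ?_ (convex_Icc _ _) hs ht
  · exact this
  · intro x hx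
    rw [norm_eq_abs, abs_mul, abs_of_pos (exp_pos _), mul_one, mul_comm]
    exact mul_le_mul_of_nonneg_left (exp_mul_le hx) (abs_nonneg _)

lemma Fo_lip (β T : ℝ) (hT : 0 < T) : ∃ C, 0 < C ∧ ∀ s ∈ Icc 0 T, ∀ t ∈ Icc 0 T, ∀ o,
    ‖Fo β t o - Fo β s o‖ ≤ C * |t - s| := by
  refine ⟨2 * exp (|β| * T), by positivity, fun s hs t ht o => ?_⟩
  have hB : 1 ≤ exp (|β| * T) := by rw [one_le_exp_iff]; positivity
  rw [Fo, Fo, ← sub_div, norm_div]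
  have hd : |o| ≤ ‖(o : ℂ) * Complex.I - (β : ℂ)‖ := den_ge β o
  have hd2 : |β| ≤ ‖(o : ℂ) * Complex.I - (β : ℂ)‖ := den_ge' β o
  set d := ‖(o : ℂ) * Complex.I - (β : ℂ)‖
  refine div_le_of_le_mul₀ (norm_nonneg _) (by positivity) ?_
  have e : Eo t o - (exp (β * t) : ℝ) - (Eo s o - (exp (β * s) : ℝ))
     = (Eo t o - Eo s o) - ((exp (β * t) - exp (β * s) : ℝ) : ℂ) := by push_cast; ring
  rw [e]
  refine (norm_sub_le _ _).trans ?_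
  rw [Complex.norm_real, norm_eq_abs]
  have h1 := Eo_sub_le s t o
  have h2 := exp_sub_le (β := β) hs ht
  have a0 := abs_nonneg (t - s)
  calc _ ≤ |o| * |t - s| + |β| * exp (|β| * T) * |t - s| := add_le_add h1 h2
    _ ≤ d * exp (|β| * T) * |t - s| + d * exp (|β| * T) * |t - s| := by
        gcongr
        calc |o| ≤ d * 1 := by linarith
          _ ≤ _ := by gcongr
    _ = _ := by ring

lemma Fo_zero (β o : ℝ) : Fo β 0 o = 0 := by simp [Fo, Eo]

lemma Fo_bound (β T : ℝ) (hT : 0 < T) : ∃ C, 0 < C ∧ ∀ t ∈ Icc 0 T, ∀ o,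
    ‖Fo β t o‖ ≤ C / sqrt (1 + o ^ 2) := by
  obtain ⟨C, hC, h⟩ := Fo_lip β T hT
  set B := 1 + exp (|β| * T)
  have hB : 0 < B := by positivity
  refine ⟨C * T + B, by positivity, fun t ht o => ?_⟩
  have h1 : ‖Fo β t o‖ ≤ C * T := by
    have := h 0 ⟨le_rfl, hT.le⟩ t ht o
    rw [Fo_zero, sub_zero, sub_zero, abs_of_nonneg ht.1] at this
    exact this.trans (by gcongr; exact ht.2)
  have h2 : |o| * ‖Fo β t o‖ ≤ B := by
    rw [Fo, norm_div]
    have hd : |o| ≤ ‖(o : ℂ) * Complex.I - (β : ℂ)‖ := den_ge β o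
    have hn : ‖Eo t o - (exp (β * t) : ℝ)‖ ≤ B := by
      refine (norm_sub_le _ _).trans ?_
      rw [Eo_norm, Complex.norm_real, norm_eq_abs, abs_of_pos (exp_pos _)]
      exact add_le_add le_rfl (exp_mul_le ht)
    rw [mul_div_assoc']
    refine div_le_of_le_mul₀ (norm_nonneg _) hB.le ?_
    rw [mul_comm B]
    gcongr
  rw [le_div_iff₀ (by positivity)]
  have h3 : sqrt (1 + o ^ 2) ≤ 1 + |o| := by
    rw [sqrt_le_left (by positivity)]
    nlinarith [abs_nonneg o, sq_abs o]
  calc _ ≤ ‖Fo β t o‖ * (1 + |o|) := by gcongr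
    _ = ‖Fo β t o‖ + |o| * ‖Fo β t o‖ := by ring
    _ ≤ _ := add_le_add h1 h2

lemma Eo_cont : Continuous (fun p : ℝ × ℝ => Eo p.1 p.2) := by unfold Eo; fun_prop

lemma filterData {H c : ℝ} (h0 : 0 < H) (h1 : H < 1) (hc : 0 < c) (β : ℝ) {T : ℝ} (hT : 0 < T) :
    ∃ D, FilterData T (fun o => c * |o| ^ (1 - 2 * H)) D (Fo β) := by
  obtain ⟨C, hC, hb⟩ := Fo_bound β T hT
  refine ⟨fun o => C / sqrt (1 + o ^ 2), hT, ?_, ?_, hb, by fun_prop, fun o => by positivity, ?_⟩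
  · unfold Fo Eo Function.uncurry; fun_prop
  · intro o; unfold Fo Eo; fun_prop
  · refine ((integrable_G h0 h1).const_mul (c * C ^ 2)).congr (ae_of_all _ fun o => ?_)
    dsimp only
    rw [div_pow, sq_sqrt (by positivity)]; ring

lemma fubiniE {T : ℝ} (hT : 0 < T) {A : ℝ → ℂ} (hA : Measurable A) (hAi : Integrable A)
    {g : ℝ → ℝ} (hg : Continuous g) :
    ∫ t in (0:ℝ)..T, g t * ∫ o, inner ℝ (A o) (Eo t o)
      = ∫ o, inner ℝ (A o) (∫ t in (0:ℝ)..T, g t • Eo t o) ∧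
    Integrable (fun o => inner ℝ (A o) (∫ t in (0:ℝ)..T, g t • Eo t o)) := by
  obtain ⟨M, hM0, hM⟩ := cont_bdd (T := T) hg
  have hf := fub (A := fun t o => g t * (inner ℝ (A o) (Eo t o))) ?_
    (hAi.norm.const_mul M) hT.le ?_
  · have e : ∀ o, ∫ t in (0:ℝ)..T, g t * (inner ℝ (A o) (Eo t o))
        = inner ℝ (A o) (∫ t in (0:ℝ)..T, g t • Eo t o) := by
      intro o
      have := ContinuousLinearMap.intervalIntegral_comp_comm (innerSL ℝ (A o))
        (f := fun t => g t • Eo t o) (a := 0) (b := T) (μ := volume)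
        (Continuous.intervalIntegrable (hg.smul (by unfold Eo; fun_prop)) _ _)
      simp only [innerSL_apply_apply] at this
      rw [← this]
      congr 1; ext t; rw [inner_smul_right]
    simp only [e] at hf
    refine ⟨?_, hf.2⟩
    rw [← hf.1]
    congr 1; ext t; rw [MeasureTheory.integral_const_mul]
  · refine Measurable.mul (hg.measurable.comp measurable_fst) ?_
    exact (hA.comp measurable_snd).inner Eo_cont.measurable
  · intro t ht o
    rw [abs_mul]
    refine mul_le_mul (hM t ht) ?_ (by positivity) hM0
    refine (abs_real_inner_le_norm _ _).trans ?_
    rw [Eo_norm, mul_one]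

/-- lower bound test lemma -/
lemma lower_test {H c lam σ : ℝ} (h0 : 0 < H) (h1 : H < 1) (hc : 0 < c) (hl : 0 < lam) (hσ : 0 < σ)
    (β : ℝ) {T : ℝ} (hT : 0 < T) {g : ℝ → ℝ} (hg : Continuous g)
    (heq : ∀ s ∈ Icc 0 T, lam * g s + ∫ r in (0:ℝ)..T,
        (∫ o : ℝ, c * |o| ^ (1 - 2 * H) * inner ℝ (Fo β r o) (Fo β s o)) * g r
      = ∫ o : ℝ, c * |o| ^ (1 - 2 * H) * inner ℝ (Fo β s o) (Fo β T o))
    {B : ℝ → ℂ} (hBm : Measurable B) (hB : Integrable B)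
    (hB2 : Integrable (fun o : ℝ => ‖B o‖ ^ 2 * (o ^ 2 + β ^ 2) / |o| ^ (1 - 2 * H)))
    {φ : ℝ → ℝ} (hφc : Continuous φ) (hφ : ∀ t ∈ Icc 0 T, φ t = ∫ o, inner ℝ (B o) (Eo t o)) :
    2 * φ T - 2 * (exp (β * T) - ∫ t in (0:ℝ)..T, g t * exp (β * t)) * φ 0
      ≤ σ * (lam * g T) + σ⁻¹ * (c⁻¹ * (∫ o : ℝ, ‖B o‖ ^ 2 * (o ^ 2 + β ^ 2) / |o| ^ (1 - 2 * H))
        + lam⁻¹ * ∫ t in (0:ℝ)..T, φ t ^ 2) := by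
  obtain ⟨D, hF⟩ := filterData h0 h1 hc β hT
  obtain ⟨hlow, hlowi⟩ := hF.lower hg heq
  set b := exp (β * T) - ∫ t in (0:ℝ)..T, g t * exp (β * t) with hb
  set N := resid T (Fo β) g with hN
  have hNm : Measurable N := resid_meas hT hF.hFm hg
  have hNE : ∀ o : ℝ, o ≠ 0 → Eo T o - ∫ t in (0:ℝ)..T, g t • Eo t o
      = ((o : ℂ) * Complex.I - (β : ℂ)) * N o + (b : ℂ) := by
    intro o ho
    have hd : (o : ℂ) * Complex.I - (β : ℂ) ≠ 0 := by
      intro h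
      have := den_norm β o
      rw [h] at this; simp at this
      have : 0 < o ^ 2 + β ^ 2 := by positivity
      linarith
    have e : ∀ t, ((o : ℂ) * Complex.I - (β : ℂ)) * Fo β t o = Eo t o - (exp (β * t) : ℝ) := by
      intro t; rw [Fo, mul_div_cancel₀ _ hd]
    have e2 : ((o : ℂ) * Complex.I - (β : ℂ)) * (∫ t in (0:ℝ)..T, g t • Fo β t o)
        = (∫ t in (0:ℝ)..T, g t • Eo t o) - ((∫ t in (0:ℝ)..T, g t * exp (β * t) : ℝ) : ℂ) := by
      rw [← intervalIntegral.integral_const_mul, ← intervalIntegral.integral_ofReal,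
        ← intervalIntegral.integral_sub]
      · congr 1; ext t; rw [mul_smul_comm, e, smul_sub]; simp
      · exact Continuous.intervalIntegrable (hg.smul (by unfold Eo; fun_prop)) _ _
      · exact Continuous.intervalIntegrable (by fun_prop) _ _
    rw [hN, resid, mul_sub, e, e2, hb]; push_cast; ring
  obtain ⟨f1, f2⟩ := fubiniE hT hBm hB hg
  have hEi : ∀ t, Integrable (fun o => inner ℝ (B o) (Eo t o)) := by
    intro t
    refine hB.norm.mono' ?_ (ae_of_all _ fun o => ?_)
    · exact (hBm.inner (by unfold Eo; fun_prop)).aestronglyMeasurable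
    · refine (norm_inner_le_norm _ _).trans ?_
      rw [Eo_norm, mul_one]
  have hXe : (fun o => 1 * inner ℝ (B o) (Eo T o) + (-1) * inner ℝ (B o) (∫ t in (0:ℝ)..T, g t • Eo t o)
      + (-b) * inner ℝ (B o) (Eo 0 o)) =ᵐ[volume]
      (fun o => inner ℝ (B o) (((o : ℂ) * Complex.I - (β : ℂ)) * N o)) := by
    filter_upwards [ae_ne_zero'] with o ho
    rw [show ((o : ℂ) * Complex.I - (β : ℂ)) * N o = Eo T o - (∫ t in (0:ℝ)..T, g t • Eo t o) - b • Eo 0 o by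
      rw [hNE o ho]; simp [Eo], inner_sub_right, inner_sub_right, inner_smul_right]
    ring
  have hX : Integrable (fun o => inner ℝ (B o) (((o : ℂ) * Complex.I - (β : ℂ)) * N o)) :=
    ((((hEi T).const_mul 1).add (f2.const_mul (-1))).add ((hEi 0).const_mul (-b))).congr hXe
  have k1 : φ T - (∫ t in (0:ℝ)..T, g t * φ t) - b * φ 0
      = ∫ o, inner ℝ (B o) (((o : ℂ) * Complex.I - (β : ℂ)) * N o) := by
    have : ∫ t in (0:ℝ)..T, g t * φ t = ∫ t in (0:ℝ)..T, g t * ∫ o, inner ℝ (B o) (Eo t o) := by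
      refine intervalIntegral.integral_congr fun t ht => ?_
      rw [uIcc_of_le hT.le] at ht
      rw [hφ t ht]
    rw [this, f1, hφ T ⟨hT.le, le_rfl⟩, hφ 0 ⟨le_rfl, hT.le⟩]
    have := lin3 (hEi T) f2 (hEi 0) 1 (-1) (-b)
    rw [show ∀ x y z : ℝ, x - y - b * z = 1 * x + (-1) * y + (-b) * z by intros; ring, ← this]
    exact integral_congr_ae hXe
  have k2 : 2 * (∫ o, inner ℝ (B o) (((o : ℂ) * Complex.I - (β : ℂ)) * N o))
      ≤ σ * (∫ o, c * |o| ^ (1 - 2 * H) * ‖N o‖ ^ 2)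
        + σ⁻¹ * (c⁻¹ * (∫ o : ℝ, ‖B o‖ ^ 2 * (o ^ 2 + β ^ 2) / |o| ^ (1 - 2 * H))) := by
    rw [← mul_assoc σ⁻¹, ← MeasureTheory.integral_const_mul, ← MeasureTheory.integral_const_mul,
      ← MeasureTheory.integral_const_mul, ← integral_add (hlowi.const_mul σ) (hB2.const_mul _)]
    refine integral_mono_ae (hX.const_mul 2) ((hlowi.const_mul σ).add (hB2.const_mul _)) ?_
    filter_upwards [ae_ne_zero'] with o ho
    have hw' : 0 < |o| := abs_pos.2 ho
    have hp : 0 < |o| ^ (1 - 2 * H) := by positivity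
    have q := real_inner_le_norm (B o) (((o : ℂ) * Complex.I - (β : ℂ)) * N o)
    rw [norm_mul] at q
    rw [← den_norm]
    set d := ‖(o : ℂ) * Complex.I - (β : ℂ)‖
    set p := |o| ^ (1 - 2 * H)
    have : 0 ≤ (σ * c * p * ‖N o‖ - ‖B o‖ * d) ^ 2 / (σ * c * p) := by positivity
    have e : (σ * c * p * ‖N o‖ - ‖B o‖ * d) ^ 2 / (σ * c * p)
      = σ * (c * p * ‖N o‖ ^ 2) - 2 * (‖B o‖ * (d * ‖N o‖)) + σ⁻¹ * c⁻¹ * (‖B o‖ ^ 2 * d ^ 2 / p) := by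
      field_simp; ring
    linarith
  have k3 : 2 * (∫ t in (0:ℝ)..T, g t * φ t) ≤ σ * (lam * ∫ t in (0:ℝ)..T, g t ^ 2)
      + σ⁻¹ * (lam⁻¹ * ∫ t in (0:ℝ)..T, φ t ^ 2) := by
    rw [← mul_assoc σ⁻¹, ← mul_assoc σ, ← intervalIntegral.integral_const_mul, ← intervalIntegral.integral_const_mul,
      ← intervalIntegral.integral_const_mul, ← intervalIntegral.integral_add]
    · refine intervalIntegral.integral_mono_on hT.le ?_ ?_ fun t _ => ?_
      · exact Continuous.intervalIntegrable (by fun_prop) _ _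
      · exact Continuous.intervalIntegrable (by fun_prop) _ _
      · have : 0 ≤ (σ * lam * g t - φ t) ^ 2 / (σ * lam) := by positivity
        have e : (σ * lam * g t - φ t) ^ 2 / (σ * lam) = σ * lam * g t ^ 2 - 2 * (g t * φ t) + σ⁻¹ * lam⁻¹ * φ t ^ 2 := by
          field_simp; ring
        linarith
    · exact Continuous.intervalIntegrable (by fun_prop) _ _
    · exact Continuous.intervalIntegrable (by fun_prop) _ _
  rw [hlow]
  linarith
end

section
open Real MeasureTheory Set Filter Polynomial

noncomputable def yv (x : ℝ) : ℂ := 1 / (1 + (x : ℂ) * Complex.I)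

lemma yden_ne (x : ℝ) : (1 + (x : ℂ) * Complex.I) ≠ 0 := by
  intro h; have := congrArg Complex.re h; simp at this

lemma yv_normSq (x : ℝ) : ‖yv x‖ ^ 2 = 1 / (1 + x ^ 2) := by
  rw [yv, norm_div, div_pow, ← Complex.normSq_eq_norm_sq (1 + _), Complex.normSq_apply]
  simp; ring

lemma yv_norm_le (x : ℝ) : ‖yv x‖ ≤ 1 := by
  have : ‖yv x‖ ^ 2 ≤ 1 ^ 2 := by
    rw [yv_normSq, one_pow, div_le_one (by positivity)]; nlinarith
  exact abs_le_of_sq_le_sq' this zero_le_one |>.2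

lemma yv_re (x : ℝ) : (yv x).re = 1 / (1 + x ^ 2) := by
  rw [yv, Complex.div_re, Complex.normSq_apply]; simp; ring

lemma yv_cont : Continuous yv := by
  unfold yv
  exact continuous_const.div (by fun_prop) yden_ne

lemma aeval_bdd (p : ℝ[X]) : ∃ C, 0 ≤ C ∧ ∀ z : ℂ, ‖z‖ ≤ 1 → ‖aeval z p‖ ≤ C := by
  refine ⟨∑ n ∈ Finset.range (p.natDegree + 1), |p.coeff n|, Finset.sum_nonneg fun _ _ => abs_nonneg _,
    fun z hz => ?_⟩
  rw [aeval_eq_sum_range]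
  refine (norm_sum_le _ _).trans (Finset.sum_le_sum fun n _ => ?_)
  rw [norm_smul, norm_eq_abs, norm_pow]
  exact mul_le_of_le_one_right (abs_nonneg _) (pow_le_one₀ (norm_nonneg _) hz)

lemma aeval_bdd_pow {k : ℕ} {p : ℝ[X]} (h : X ^ k ∣ p) :
    ∃ C, 0 ≤ C ∧ ∀ z : ℂ, ‖z‖ ≤ 1 → ‖aeval z p‖ ≤ C * ‖z‖ ^ k := by
  obtain ⟨r, rfl⟩ := h
  obtain ⟨C, hC, hb⟩ := aeval_bdd r
  refine ⟨C, hC, fun z hz => ?_⟩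
  rw [map_mul, norm_mul, map_pow, aeval_X, norm_pow, mul_comm]
  gcongr
  exact hb z hz

noncomputable def gam (p : ℝ[X]) (τ : ℝ) : ℝ :=
  ∑ n ∈ Finset.range p.natDegree, p.coeff (n + 1) * (τ ^ n / n.factorial * exp (-τ))

lemma gam_cont (p : ℝ[X]) : Continuous (gam p) := by unfold gam; fun_prop

lemma gam_zero (p : ℝ[X]) : gam p 0 = p.coeff 1 := by
  unfold gam
  rcases Nat.eq_zero_or_pos p.natDegree with h | h
  · rw [h, Finset.range_zero, Finset.sum_empty, coeff_eq_zero_of_natDegree_lt (by omega)]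
  · obtain ⟨m, hm⟩ := Nat.exists_eq_succ_of_ne_zero h.ne'
    rw [hm, Finset.sum_range_succ']
    simp

lemma gam_bdd (p : ℝ[X]) : ∃ C, 0 ≤ C ∧ ∀ τ, 0 ≤ τ → |gam p τ| ≤ C * exp (-τ / 2) := by
  refine ⟨∑ n ∈ Finset.range p.natDegree, |p.coeff (n + 1)| * 2 ^ n,
    Finset.sum_nonneg fun _ _ => by positivity, fun τ hτ => ?_⟩
  rw [gam, Finset.sum_mul]
  refine (Finset.abs_sum_le_sum_abs _ _).trans (Finset.sum_le_sum fun n _ => ?_)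
  rw [abs_mul, mul_assoc]
  gcongr
  rw [abs_of_nonneg (by positivity)]
  have h := pow_div_factorial_le_exp (τ / 2) (by positivity) n
  have e1 : exp (-τ) = exp (-τ / 2) * exp (-τ / 2) := by rw [← exp_add]; ring_nf
  have e2 : exp (τ / 2) * exp (-τ / 2) = 1 := by rw [← exp_add]; ring_nf; exact exp_zero
  calc τ ^ n / n.factorial * exp (-τ) = 2 ^ n * ((τ / 2) ^ n / n.factorial) * exp (-τ) := by
        rw [div_pow]; field_simp
    _ ≤ 2 ^ n * exp (τ / 2) * exp (-τ) := by gcongr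
    _ = 2 ^ n * (exp (τ / 2) * exp (-τ / 2)) * exp (-τ / 2) := by rw [e1]; ring
    _ = _ := by rw [e2]; ring

lemma gam_integrableOn (p : ℝ[X]) : IntegrableOn (gam p) (Ioi 0) := by
  obtain ⟨C, hC, hb⟩ := gam_bdd p
  have : IntegrableOn (fun τ : ℝ => C * exp (-τ / 2)) (Ioi 0) := by
    have : IntegrableOn (fun x : ℝ => C * exp (-(1 / 2) * x)) (Ioi 0) :=
      (exp_neg_integrableOn_Ioi 0 (b := 1 / 2) (by norm_num)).const_mul C
    refine this.congr_fun (fun x _ => ?_) measurableSet_Ioi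
    dsimp only; ring_nf
  refine Integrable.mono' this (gam_cont p).aestronglyMeasurable ?_
  rw [ae_restrict_iff' measurableSet_Ioi]
  exact ae_of_all _ fun τ hτ => hb τ (le_of_lt hτ)

lemma mono_int (n : ℕ) : IntegrableOn (fun τ : ℝ => τ ^ n / n.factorial * exp (-τ)) (Ioi 0) := by
  have := (gam_integrableOn (X ^ (n + 1))).congr_fun (g := fun τ : ℝ => τ ^ n / n.factorial * exp (-τ))
    (fun τ _ => ?_) measurableSet_Ioi
  · exact this
  · dsimp only
    rw [gam, natDegree_X_pow, Finset.sum_range_succ, Finset.sum_eq_zero]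
    · simp
    · intro m hm
      rw [coeff_X_pow, if_neg (by simp at hm; omega), zero_mul]

lemma mono_intC (n : ℕ) (x : ℝ) : IntegrableOn (fun τ : ℝ => ((τ ^ n / n.factorial * exp (-τ) : ℝ) : ℂ)
    * Complex.exp (-((x * τ : ℝ) * Complex.I))) (Ioi 0) := by
  refine Integrable.mono ((mono_int n).ofReal (𝕜 := ℂ)) (Continuous.aestronglyMeasurable (by fun_prop)) (ae_of_all _ fun τ => ?_)
  rw [norm_mul, ← neg_mul, ← Complex.ofReal_neg, Complex.norm_exp_ofReal_mul_I, mul_one]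
  exact le_rfl

lemma mono_hasDeriv (n : ℕ) (x τ : ℝ) :
    HasDerivAt (fun τ : ℝ => ((τ ^ (n + 1) / (n + 1).factorial * exp (-τ) : ℝ) : ℂ)
      * Complex.exp (-((x * τ : ℝ) * Complex.I)))
     (((τ ^ n / n.factorial * exp (-τ) : ℝ) : ℂ) * Complex.exp (-((x * τ : ℝ) * Complex.I))
      - (1 + (x : ℂ) * Complex.I) * (((τ ^ (n + 1) / (n + 1).factorial * exp (-τ) : ℝ) : ℂ)
      * Complex.exp (-((x * τ : ℝ) * Complex.I)))) τ := by
  have h1 : HasDerivAt (fun τ : ℝ => τ ^ (n + 1) / (n + 1).factorial * exp (-τ))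
      ((((n + 1 : ℕ) : ℝ) * τ ^ n / (n + 1).factorial) * exp (-τ) + τ ^ (n + 1) / (n + 1).factorial * (exp (-τ) * (-1))) τ :=
    ((hasDerivAt_pow (n + 1) τ).div_const _).mul ((hasDerivAt_id τ).neg.exp)
  have h2 : HasDerivAt (fun τ : ℝ => Complex.exp (-((x * τ : ℝ) * Complex.I)))
      (Complex.exp (-((x * τ : ℝ) * Complex.I)) * (-(((x * 1 : ℝ) : ℂ) * Complex.I))) τ :=
    ((((hasDerivAt_id τ).const_mul x).ofReal_comp.mul_const Complex.I).neg).cexp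
  refine (h1.ofReal_comp.mul h2).congr_deriv ?_
  have : ((n + 1 : ℕ) : ℝ) * τ ^ n / (n + 1).factorial = τ ^ n / n.factorial := by
    rw [Nat.factorial_succ]; push_cast; field_simp
  rw [this]; push_cast; ring

lemma mono_hasDeriv0 (x τ : ℝ) :
    HasDerivAt (fun τ : ℝ => ((exp (-τ) : ℝ) : ℂ) * Complex.exp (-((x * τ : ℝ) * Complex.I)))
     (- (1 + (x : ℂ) * Complex.I) * (((exp (-τ) : ℝ) : ℂ)
      * Complex.exp (-((x * τ : ℝ) * Complex.I)))) τ := by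
  have h1 : HasDerivAt (fun τ : ℝ => exp (-τ)) (exp (-τ) * (-1)) τ := ((hasDerivAt_id τ).neg.exp)
  have h2 : HasDerivAt (fun τ : ℝ => Complex.exp (-((x * τ : ℝ) * Complex.I)))
      (Complex.exp (-((x * τ : ℝ) * Complex.I)) * (-(((x * 1 : ℝ) : ℂ) * Complex.I))) τ :=
    ((((hasDerivAt_id τ).const_mul x).ofReal_comp.mul_const Complex.I).neg).cexp
  refine (h1.ofReal_comp.mul h2).congr_deriv ?_
  push_cast; ring

lemma mono_tendsto (n : ℕ) (x : ℝ) : Tendsto (fun τ : ℝ => ((τ ^ n / n.factorial * exp (-τ) : ℝ) : ℂ)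
      * Complex.exp (-((x * τ : ℝ) * Complex.I))) atTop (nhds 0) := by
  rw [tendsto_zero_iff_norm_tendsto_zero]
  have e : ∀ τ : ℝ, ‖((τ ^ n / n.factorial * exp (-τ) : ℝ) : ℂ) * Complex.exp (-((x * τ : ℝ) * Complex.I))‖
      = |(1 / (n.factorial : ℝ)) * (τ ^ n * exp (-τ))| := by
    intro τ
    rw [norm_mul, ← neg_mul, ← Complex.ofReal_neg, Complex.norm_exp_ofReal_mul_I, mul_one,
      Complex.norm_real, norm_eq_abs]
    congr 1; ring
  simp only [e]
  have := (tendsto_pow_mul_exp_neg_atTop_nhds_zero n).const_mul (1 / (n.factorial : ℝ))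
  simpa using this.abs

lemma mono_transform (n : ℕ) (x : ℝ) :
    ∫ τ in Ioi (0:ℝ), ((τ ^ n / n.factorial * exp (-τ) : ℝ) : ℂ) * Complex.exp (-((x * τ : ℝ) * Complex.I))
      = yv x ^ (n + 1) := by
  have hz := yden_ne x
  induction n with
  | zero =>
    have hi := mono_intC 0 x
    have ht := mono_tendsto 0 x
    simp only [pow_zero, Nat.factorial_zero, Nat.cast_one, div_one, one_mul] at hi ht ⊢
    have := integral_Ioi_of_hasDerivAt_of_tendsto' (fun τ _ => mono_hasDeriv0 x τ)
      (hi.const_mul (- (1 + (x : ℂ) * Complex.I))) ht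
    rw [integral_const_mul] at this
    simp only [neg_zero, exp_zero, mul_zero, Complex.ofReal_zero, zero_mul, Complex.exp_zero,
      Complex.ofReal_one, mul_one, zero_sub, neg_mul, neg_inj] at this
    rw [yv, zero_add, pow_one, eq_div_iff hz, mul_comm]
    exact this
  | succ n ih =>
    have hi := mono_intC n x
    have hi2 := mono_intC (n + 1) x
    have := integral_Ioi_of_hasDerivAt_of_tendsto' (fun τ _ => mono_hasDeriv n x τ)
      (hi.sub (hi2.const_mul _)) (mono_tendsto (n + 1) x)
    rw [integral_sub hi (hi2.const_mul _), integral_const_mul, ih] at this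
    simp only [ne_eq, Nat.succ_ne_zero, not_false_eq_true, zero_pow, zero_div, zero_mul, Complex.ofReal_zero,
      sub_zero] at this
    rw [pow_succ (yv x) (n + 1), sub_eq_zero.1 this]
    rw [yv, mul_one_div, mul_div_cancel_left₀ _ hz]

lemma gam_transform {p : ℝ[X]} (h0 : p.coeff 0 = 0) (x : ℝ) :
    ∫ τ in Ioi (0:ℝ), (gam p τ : ℂ) * Complex.exp (-((x * τ : ℝ) * Complex.I)) = aeval (yv x) p := by
  rw [aeval_eq_sum_range, Finset.sum_range_succ', h0, zero_smul, add_zero]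
  have e : ∀ τ : ℝ, (gam p τ : ℂ) * Complex.exp (-((x * τ : ℝ) * Complex.I)) =
    ∑ n ∈ Finset.range p.natDegree, (p.coeff (n + 1) : ℂ) * (((τ ^ n / n.factorial * exp (-τ) : ℝ) : ℂ) * Complex.exp (-((x * τ : ℝ) * Complex.I))) := by
    intro τ; rw [gam, Complex.ofReal_sum, Finset.sum_mul]
    refine Finset.sum_congr rfl fun n _ => ?_
    rw [Complex.ofReal_mul, mul_assoc]
  simp only [e]
  rw [integral_finsetSum]
  · refine Finset.sum_congr rfl fun n _ => ?_
    rw [integral_const_mul, mono_transform, Complex.real_smul]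
  · intro n _
    exact (mono_intC n x).const_mul _

end

section
open Real MeasureTheory Set Filter Polynomial
open scoped FourierTransform ComplexConjugate

lemma aeval_cont (p : ℝ[X]) : Continuous (fun x => aeval (yv x) p) := by
  simp only [aeval_eq_sum_range]
  have := yv_cont
  fun_prop

lemma pr_bound {p r : ℝ[X]} (p0 : p.coeff 0 = 0) (r0 : r.coeff 0 = 0) (h1 : p.coeff 1 = r.coeff 1) :
    ∃ C, 0 ≤ C ∧ ∀ x, ‖aeval (yv x) p + conj (aeval (yv x) r)‖ ≤ C * (1 / (1 + x ^ 2)) := by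
  have key : ∀ q : ℝ[X], q.coeff 0 = 0 → X ^ 2 ∣ q - C (q.coeff 1) * X := by
    intro q q0
    rw [X_pow_dvd_iff]
    intro d hd
    interval_cases d
    · simp [q0]
    · simp
  obtain ⟨C1, hC1, b1⟩ := aeval_bdd_pow (key p p0)
  obtain ⟨C2, hC2, b2⟩ := aeval_bdd_pow (key r r0)
  refine ⟨2 * |p.coeff 1| + C1 + C2, by positivity, fun x => ?_⟩
  have e1 := b1 (yv x) (yv_norm_le x)
  have e2 := b2 (yv x) (yv_norm_le x)
  rw [yv_normSq] at e1 e2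
  have e : aeval (yv x) p + conj (aeval (yv x) r) = ((2 * p.coeff 1 * (1 / (1 + x ^ 2)) : ℝ) : ℂ)
      + aeval (yv x) (p - C (p.coeff 1) * X) + conj (aeval (yv x) (r - C (r.coeff 1) * X)) := by
    rw [← yv_re, ← h1]
    simp only [map_sub, map_mul, aeval_X, aeval_C, Complex.coe_algebraMap, Complex.conj_ofReal]
    have := Complex.add_conj (yv x)
    push_cast at this ⊢
    linear_combination (p.coeff 1 : ℂ) * this
  rw [e]
  refine (norm_add_le _ _).trans ?_
  rw [Complex.norm_conj]
  refine (add_le_add (norm_add_le _ _) le_rfl).trans ?_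
  rw [Complex.norm_real, norm_eq_abs, abs_mul, abs_mul, abs_two, abs_of_nonneg (by positivity : (0:ℝ) ≤ 1 / (1 + x ^ 2))]
  linarith

noncomputable def psiF (p r : ℝ[X]) (τ : ℝ) : ℝ := if 0 ≤ τ then gam p τ else gam r (-τ)

lemma psiF_cont {p r : ℝ[X]} (h1 : p.coeff 1 = r.coeff 1) : Continuous (psiF p r) := by
  refine Continuous.if_le (gam_cont p) ((gam_cont r).comp continuous_neg) continuous_const continuous_id ?_
  intro x hx
  rw [← hx, gam_zero, neg_zero, gam_zero, h1]

lemma gam_int_ofReal (p : ℝ[X]) (x : ℝ) :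
    IntegrableOn (fun τ : ℝ => (gam p τ : ℂ) * Complex.exp (-((x * τ : ℝ) * Complex.I))) (Ioi 0) := by
  refine Integrable.mono ((gam_integrableOn p).ofReal (𝕜 := ℂ)) (Continuous.aestronglyMeasurable ?_) (ae_of_all _ fun τ => ?_)
  · have := gam_cont p
    fun_prop
  · rw [norm_mul, ← neg_mul, ← Complex.ofReal_neg, Complex.norm_exp_ofReal_mul_I, mul_one]
    exact le_rfl

lemma psiF_transform {p r : ℝ[X]} (p0 : p.coeff 0 = 0) (r0 : r.coeff 0 = 0) (x : ℝ) :
    Integrable (fun τ : ℝ => (psiF p r τ : ℂ) * Complex.exp (-((x * τ : ℝ) * Complex.I))) ∧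
    ∫ τ : ℝ, (psiF p r τ : ℂ) * Complex.exp (-((x * τ : ℝ) * Complex.I))
      = aeval (yv x) p + conj (aeval (yv x) r) := by
  set f := fun τ : ℝ => (psiF p r τ : ℂ) * Complex.exp (-((x * τ : ℝ) * Complex.I)) with hf
  have e1 : EqOn (fun τ : ℝ => (gam p τ : ℂ) * Complex.exp (-((x * τ : ℝ) * Complex.I))) f (Ioi 0) := by
    intro τ hτ
    rw [hf]; dsimp only; rw [psiF, if_pos (le_of_lt hτ)]
  have e2 : EqOn (fun τ : ℝ => conj ((gam r τ : ℂ) * Complex.exp (-((x * τ : ℝ) * Complex.I)))) (fun τ => f (-τ)) (Ioi 0) := by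
    intro τ hτ
    rw [hf]; dsimp only
    have : ¬ (0 ≤ -τ) := by have : 0 < τ := hτ; linarith
    rw [psiF, if_neg this, neg_neg, map_mul, Complex.conj_ofReal, ← Complex.exp_conj, map_neg, map_mul,
      Complex.conj_I, Complex.conj_ofReal]
    congr 2; push_cast; ring
  have i1 : IntegrableOn f (Ioi 0) := (gam_int_ofReal p x).congr_fun e1 measurableSet_Ioi
  have i2' : IntegrableOn (fun τ => f (-τ)) (Ioi 0) := by
    refine IntegrableOn.congr_fun ?_ e2 measurableSet_Ioi
    exact (Complex.conjCLE.toContinuousLinearMap.integrable_comp (gam_int_ofReal r x))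
  have i2 : IntegrableOn f (Iic 0) := by
    have := i2'.comp_neg
    simp only [neg_neg, Set.neg_Ioi, neg_zero] at this
    exact (integrableOn_Iic_iff_integrableOn_Iio (by simp)).2 this
  refine ⟨?_, ?_⟩
  · have := i2.union i1
    rwa [Iic_union_Ioi, integrableOn_univ] at this
  · rw [← intervalIntegral.integral_Iic_add_Ioi i2 i1, add_comm]
    congr 1
    · rw [← gam_transform p0 x]
      exact (setIntegral_congr_fun measurableSet_Ioi e1).symm
    · have := integral_comp_neg_Ioi 0 f
      rw [neg_zero] at this
      rw [← this, ← setIntegral_congr_fun measurableSet_Ioi e2, integral_conj, gam_transform r0 x]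

lemma inversion {p r : ℝ[X]} (p0 : p.coeff 0 = 0) (r0 : r.coeff 0 = 0) (h1 : p.coeff 1 = r.coeff 1) :
    Integrable (fun x => aeval (yv x) p + conj (aeval (yv x) r)) ∧
    ∀ τ, 0 ≤ τ → ∫ x : ℝ, (aeval (yv x) p + conj (aeval (yv x) r)) * Complex.exp ((x * τ : ℝ) * Complex.I)
      = ((2 * π * gam p τ : ℝ) : ℂ) := by
  have hcont : Continuous (fun x => aeval (yv x) p + conj (aeval (yv x) r)) :=
    (aeval_cont p).add (Complex.continuous_conj.comp (aeval_cont r))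
  have hint : Integrable (fun x => aeval (yv x) p + conj (aeval (yv x) r)) := by
    obtain ⟨C, hC, hb⟩ := pr_bound p0 r0 h1
    refine Integrable.mono' (integrable_inv_one_add_sq.const_mul C) hcont.aestronglyMeasurable
      (ae_of_all _ fun x => ?_)
    rw [← one_div]; exact hb x
  refine ⟨hint, fun τ hτ => ?_⟩
  set ψ : ℝ → ℂ := fun τ => (psiF p r τ : ℂ) with hψ
  have hFt : 𝓕 ψ = fun w => aeval (yv (2 * π * w)) p + conj (aeval (yv (2 * π * w)) r) := by
    ext w
    rw [fourier_real_eq_integral_exp_smul, ← (psiF_transform p0 r0 (2 * π * w)).2]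
    congr 1; ext v
    rw [smul_eq_mul, mul_comm, hψ]
    congr 2; push_cast; ring
  have hψi : Integrable ψ := by
    have := (psiF_transform p0 r0 0).1
    simpa using this
  have h2π : (2 * π) ≠ 0 := by positivity
  have inv := congrFun (Continuous.fourierInv_fourier_eq (f := ψ)
    (Complex.continuous_ofReal.comp (psiF_cont h1)) hψi (by rw [hFt]; exact hint.comp_mul_left' h2π)) τ
  rw [fourierInv_eq', hFt] at inv
  have := Measure.integral_comp_mul_left (fun x : ℝ => (aeval (yv x) p + conj (aeval (yv x) r)) * Complex.exp ((x * τ : ℝ) * Complex.I)) (2 * π)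
  have e : ψ τ = (2 * π : ℝ)⁻¹ • ∫ x : ℝ, (aeval (yv x) p + conj (aeval (yv x) r)) * Complex.exp ((x * τ : ℝ) * Complex.I) := by
    rw [← inv, ← abs_of_pos (by positivity : (0:ℝ) < (2 * π)⁻¹), ← this]
    congr 1; ext v
    rw [smul_eq_mul, mul_comm]
    congr 2
    simp [inner]; ring_nf
  rw [hψ] at e
  dsimp only at e
  rw [psiF, if_pos hτ] at e
  rw [Complex.ofReal_mul, e, Complex.real_smul, ← mul_assoc, ← Complex.ofReal_mul, mul_inv_cancel₀ h2π]
  simp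

lemma int_re {p : ℝ[X]} (p0 : p.coeff 0 = 0) :
    Integrable (fun x => (aeval (yv x) p).re) ∧ ∫ x : ℝ, (aeval (yv x) p).re = π * p.coeff 1 := by
  obtain ⟨h1, h2⟩ := inversion p0 p0 rfl
  have e : ∀ x, aeval (yv x) p + conj (aeval (yv x) p) = ((2 * (aeval (yv x) p).re : ℝ) : ℂ) := by
    intro x; rw [Complex.add_conj]
  have h3 := h2 0 le_rfl
  simp only [e, mul_zero, Complex.ofReal_zero, zero_mul, Complex.exp_zero, mul_one] at h1 h3
  have h1' : Integrable (fun x => 2 * (aeval (yv x) p).re) := by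
    simpa using h1.re
  refine ⟨by simpa using h1'.const_mul (1/2), ?_⟩
  rw [integral_complex_ofReal, gam_zero, integral_const_mul] at h3
  have := Complex.ofReal_injective h3
  linarith

lemma plancherel {p : ℝ[X]} (p0 : p.coeff 0 = 0) :
    Integrable (fun x => ‖aeval (yv x) p‖ ^ 2) ∧
    IntegrableOn (fun τ => gam p τ ^ 2) (Ioi 0) ∧
    ∫ τ in Ioi (0:ℝ), gam p τ ^ 2 = (1 / (2 * π)) * ∫ x : ℝ, ‖aeval (yv x) p‖ ^ 2 := by
  obtain ⟨h1, h2⟩ := inversion p0 p0 rfl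
  have hpp0 : (p ^ 2).coeff 0 = 0 := by rw [pow_two, mul_coeff_zero, p0, zero_mul]
  have hpp1 : (p ^ 2).coeff 1 = 0 := by rw [pow_two, mul_coeff_one, p0]; ring
  obtain ⟨j1, j2⟩ := int_re hpp0
  obtain ⟨hr, _⟩ := int_re p0
  have hp2i : Integrable (fun x => ‖aeval (yv x) p‖ ^ 2) := by
    obtain ⟨C, hC, hb⟩ := aeval_bdd_pow (k := 1) (p := p) (by rw [pow_one, X_dvd_iff]; exact p0)
    refine Integrable.mono' (integrable_inv_one_add_sq.const_mul (C ^ 2)) ((aeval_cont p).norm.pow 2).aestronglyMeasurable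
      (ae_of_all _ fun x => ?_)
    have := hb (yv x) (yv_norm_le x)
    rw [norm_pow, norm_norm, ← one_div, ← yv_normSq, ← mul_pow]
    rw [pow_one] at this
    gcongr
  have hgi : IntegrableOn (fun τ => gam p τ ^ 2) (Ioi 0) := by
    obtain ⟨C, hC, hb⟩ := gam_bdd p
    refine Integrable.mono' ((gam_integrableOn p).norm.const_mul C) ((gam_cont p).pow 2).aestronglyMeasurable ?_
    rw [ae_restrict_iff' measurableSet_Ioi]
    refine ae_of_all _ fun τ hτ => ?_
    have hτ' : 0 < τ := hτ
    rw [norm_pow, pow_two]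
    refine mul_le_mul_of_nonneg_right ((hb τ hτ'.le).trans ?_) (norm_nonneg _)
    exact mul_le_of_le_one_right hC (exp_le_one_iff.2 (by linarith))
  refine ⟨hp2i, hgi, ?_⟩
  set v : ℝ → ℂ := fun x => aeval (yv x) p + conj (aeval (yv x) p) with hv
  have hvr : ∀ x, v x = ((2 * (aeval (yv x) p).re : ℝ) : ℂ) := by
    intro x; rw [hv]; exact Complex.add_conj _
  have hvc : Continuous v := (aeval_cont p).add (Complex.continuous_conj.comp (aeval_cont p))
  have prodi : Integrable (Function.uncurry fun (τ x : ℝ) => (gam p τ : ℂ) * (v x * Complex.exp ((x * τ : ℝ) * Complex.I)))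
      ((volume.restrict (Ioi 0)).prod volume) := by
    have := Integrable.mul_prod ((gam_integrableOn p).ofReal (𝕜 := ℂ)) h1
    refine Integrable.mono this (Continuous.aestronglyMeasurable ?_) (ae_of_all _ fun z => ?_)
    · have := gam_cont p
      unfold Function.uncurry
      fun_prop
    · simp only [Function.uncurry]
      rw [norm_mul, norm_mul, Complex.norm_exp_ofReal_mul_I, mul_one, norm_mul]
      exact le_rfl
  have sw := integral_integral_swap prodi
  have l1 : ∫ τ in Ioi (0:ℝ), ∫ x : ℝ, (gam p τ : ℂ) * (v x * Complex.exp ((x * τ : ℝ) * Complex.I))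
      = ((2 * π * ∫ τ in Ioi (0:ℝ), gam p τ ^ 2 : ℝ) : ℂ) := by
    rw [← integral_const_mul, ← integral_complex_ofReal]
    refine setIntegral_congr_fun measurableSet_Ioi fun τ hτ => ?_
    have hτ' : 0 < τ := hτ
    rw [integral_const_mul, h2 τ hτ'.le]
    push_cast; ring
  have l2 : ∀ x : ℝ, ∫ τ in Ioi (0:ℝ), (gam p τ : ℂ) * (v x * Complex.exp ((x * τ : ℝ) * Complex.I))
      = v x * conj (aeval (yv x) p) := by
    intro x
    rw [← gam_transform p0 x, ← integral_conj, ← integral_const_mul]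
    congr 1; ext τ
    rw [map_mul, Complex.conj_ofReal, ← Complex.exp_conj, map_neg, map_mul,
      Complex.conj_I, Complex.conj_ofReal, mul_neg, neg_neg]
    ring
  rw [l1] at sw
  simp only [l2] at sw
  have ib : Integrable (fun x => v x * conj (aeval (yv x) p)) := by
    obtain ⟨C, hC, hb⟩ := aeval_bdd p
    refine Integrable.mono' (h1.norm.mul_const C) (hvc.mul (Complex.continuous_conj.comp (aeval_cont p))).aestronglyMeasurable
      (ae_of_all _ fun x => ?_)
    rw [norm_mul, Complex.norm_conj]
    exact mul_le_mul_of_nonneg_left (hb _ (yv_norm_le x)) (norm_nonneg _)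
  have sre := congrArg Complex.re sw
  rw [Complex.ofReal_re] at sre
  have e3 : (∫ x : ℝ, v x * conj (aeval (yv x) p)).re = ∫ x : ℝ, (v x * conj (aeval (yv x) p)).re := (integral_re ib).symm
  have e4 : ∀ x : ℝ, (v x * conj (aeval (yv x) p)).re = ‖aeval (yv x) p‖ ^ 2 + (aeval (yv x) (p ^ 2)).re := by
    intro x
    rw [hvr, Complex.re_ofReal_mul, Complex.conj_re, ← Complex.normSq_eq_norm_sq, Complex.normSq_apply, map_pow, pow_two (aeval (yv x) p), Complex.mul_re]
    ring
  rw [e3] at sre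
  simp only [e4] at sre
  rw [integral_add hp2i j1, j2, hpp1] at sre
  have : (0:ℝ) < 2 * π := by positivity
  field_simp
  linarith
end

section
open Real MeasureTheory Set Filter Polynomial
open scoped ComplexConjugate Topology

lemma trig_poly (P : ℝ[X]) : ∃ h : ℝ[X], ∀ w : ℂ, ‖w‖ = 1 → P.eval w.re = (aeval w h).re := by
  have step : ∀ h : ℝ[X], ∃ h' : ℝ[X], ∀ w : ℂ, ‖w‖ = 1 → (aeval w h).re * w.re = (aeval w h').re := by
    intro h
    refine ⟨C (1/2) * (X * h + C (h.coeff 0) * X + divX h), fun w hw => ?_⟩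
    have e0 : aeval w h = aeval w (divX h) * w + (h.coeff 0 : ℂ) := by
      conv_lhs => rw [← divX_mul_X_add h]
      simp
    have hw2 : w.re * w.re + w.im * w.im = 1 := by
      rw [← Complex.normSq_apply, Complex.normSq_eq_norm_sq, hw]; norm_num
    simp only [map_add, map_mul, aeval_X, aeval_C, Complex.coe_algebraMap]
    rw [e0, Complex.re_ofReal_mul]
    simp only [Complex.add_re, Complex.mul_re, Complex.ofReal_re, Complex.add_im, Complex.mul_im, Complex.ofReal_im]
    linear_combination ((1/2) * (aeval w (divX h)).re) * hw2
  induction P using Polynomial.induction_on with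
  | C a => exact ⟨C a, fun w _ => by simp⟩
  | add p q hp hq =>
    obtain ⟨h1, e1⟩ := hp
    obtain ⟨h2, e2⟩ := hq
    exact ⟨h1 + h2, fun w hw => by rw [eval_add, e1 w hw, e2 w hw, map_add, Complex.add_re]⟩
  | monomial n a ih =>
    obtain ⟨h1, e1⟩ := ih
    obtain ⟨h2, e2⟩ := step h1
    refine ⟨h2, fun w hw => ?_⟩
    rw [← e2 w hw, ← e1 w hw]
    simp [pow_succ, mul_assoc]

lemma trig_v (p : ℝ[X]) : ∃ h : ℝ[X], h.coeff 0 = 0 ∧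
    ∀ x : ℝ, (1 / (1 + x ^ 2)) * p.eval (1 / (1 + x ^ 2)) = 2 * (aeval (yv x) h).re := by
  obtain ⟨h, hh⟩ := trig_poly ((X * p).comp (C (1/2) * (1 + X)))
  refine ⟨C (1/2) * h.comp (C 2 * X - 1), ?_, fun x => ?_⟩
  · have := hh (-1) (by simp)
    have e : (aeval (-1 : ℂ) h).re = h.eval (-1) := by
      have : (-1 : ℂ) = ((-1 : ℝ) : ℂ) := by simp
      rw [this, ← Complex.coe_algebraMap, aeval_algebraMap_apply]
      simp
    rw [e] at this
    rw [coeff_zero_eq_eval_zero]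
    simp only [eval_mul, eval_C, eval_comp, eval_sub, eval_X, eval_one, mul_zero, zero_sub]
    rw [← this]
    simp
  · have hw : ‖2 * yv x - 1‖ = 1 := by
      have h1 : ‖2 * yv x - 1‖ ^ 2 = 1 := by
        have h3 := yv_re x
        have h2 := yv_normSq x
        rw [← Complex.normSq_eq_norm_sq, Complex.normSq_apply] at h2 ⊢
        simp
        nlinarith
      nlinarith [norm_nonneg (2 * yv x - 1)]
    have := hh _ hw
    have e2 : aeval (yv x) (C (1/2) * h.comp (C 2 * X - 1)) = ((1/2 : ℝ) : ℂ) * aeval (2 * yv x - 1) h := by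
      simp [aeval_comp]
    rw [e2, Complex.re_ofReal_mul, ← this]
    have e3 : (2 * yv x - 1).re = 2 * (1 / (1 + x ^ 2)) - 1 := by
      rw [← yv_re]; simp
    rw [e3]
    simp [eval_comp]

noncomputable def expP (N : ℕ) (h : ℝ[X]) : ℝ[X] :=
  1 + h + ∑ j ∈ Finset.range N, C (1 / ((j + 2).factorial : ℝ)) * h ^ (j + 2)

lemma expP_rem_dvd (N : ℕ) {h : ℝ[X]} (h0 : h.coeff 0 = 0) :
    X ^ 2 ∣ ∑ j ∈ Finset.range N, C (1 / ((j + 2).factorial : ℝ)) * h ^ (j + 2) := by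
  refine Finset.dvd_sum fun j _ => Dvd.dvd.mul_left ?_ _
  have : X ∣ h := X_dvd_iff.2 h0
  rw [pow_add]
  exact (pow_dvd_pow_of_dvd this 2).mul_left _

lemma expP_coeff0 (N : ℕ) {h : ℝ[X]} (h0 : h.coeff 0 = 0) : (expP N h).coeff 0 = 1 := by
  have := X_pow_dvd_iff.1 (expP_rem_dvd N h0) 0 (by norm_num)
  rw [expP, coeff_add, this, coeff_add, h0]; simp

lemma expP_coeff1 (N : ℕ) {h : ℝ[X]} (h0 : h.coeff 0 = 0) : (expP N h).coeff 1 = h.coeff 1 := by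
  have := X_pow_dvd_iff.1 (expP_rem_dvd N h0) 1 (by norm_num)
  rw [expP, coeff_add, this, coeff_add]; simp [coeff_one]

lemma expP_aeval (N : ℕ) (h : ℝ[X]) (z : ℂ) : aeval z (expP N h) =
    ∑ j ∈ Finset.range (N + 2), (aeval z h) ^ j / (j.factorial : ℂ) := by
  rw [Finset.sum_range_succ', Finset.sum_range_succ', expP]
  simp [div_eq_inv_mul]
  ring

lemma expP_tendsto (h : ℝ[X]) (z : ℂ) :
    Tendsto (fun N => aeval z (expP N h)) atTop (𝓝 (Complex.exp (aeval z h))) := by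
  simp only [expP_aeval]
  have := (NormedSpace.expSeries_div_hasSum_exp (𝔸 := ℂ) (aeval z h)).tendsto_sum_nat
  rw [← Complex.exp_eq_exp_ℂ] at this
  exact this.comp (tendsto_add_atTop_nat 2)

lemma expP_bound {h : ℝ[X]} (h0 : h.coeff 0 = 0) : ∃ C, 0 ≤ C ∧ ∀ N : ℕ, ∀ z : ℂ, ‖z‖ ≤ 1 →
    ‖aeval z h‖ ≤ C * ‖z‖ ∧ ‖aeval z (expP N h) - 1 - aeval z h‖ ≤ C * ‖z‖ ^ 2 ∧
    ‖aeval z (expP N h) - 1‖ ≤ C * ‖z‖ := by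
  obtain ⟨K, hK, hb⟩ := aeval_bdd_pow (k := 1) (p := h) (by rw [pow_one, X_dvd_iff]; exact h0)
  refine ⟨K + K ^ 2 * Real.exp K, by positivity, fun N z hz => ?_⟩
  have b1 := hb z hz
  rw [pow_one] at b1
  have bK : ‖aeval z h‖ ≤ K := b1.trans (mul_le_of_le_one_right hK hz)
  have e : aeval z (expP N h) - 1 - aeval z h = ∑ j ∈ Finset.range N, (1 / ((j + 2).factorial : ℂ)) * (aeval z h) ^ (j + 2) := by
    rw [expP]; simp; ring
  have b2 : ‖aeval z (expP N h) - 1 - aeval z h‖ ≤ K ^ 2 * Real.exp K * ‖z‖ ^ 2 := by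
    rw [e]
    refine (norm_sum_le _ _).trans ?_
    have t : ∀ j ∈ Finset.range N, ‖(1 / ((j + 2).factorial : ℂ)) * (aeval z h) ^ (j + 2)‖ ≤
        ‖aeval z h‖ ^ 2 * (K ^ j / j.factorial) := by
      intro j _
      rw [norm_mul, norm_div, norm_one, Complex.norm_natCast, norm_pow, pow_add]
      have h1 : (1:ℝ) / ((j + 2).factorial : ℝ) ≤ 1 / (j.factorial : ℝ) := by
        apply one_div_le_one_div_of_le (by positivity)
        exact_mod_cast Nat.factorial_le (by omega)
      have h2 : ‖aeval z h‖ ^ j ≤ K ^ j := pow_le_pow_left₀ (norm_nonneg _) bK j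
      calc _ ≤ 1 / (j.factorial : ℝ) * (K ^ j * ‖aeval z h‖ ^ 2) := by gcongr
        _ = _ := by ring
    refine (Finset.sum_le_sum t).trans ?_
    rw [← Finset.mul_sum]
    have h3 := Real.sum_le_exp_of_nonneg hK N
    have h4 : ‖aeval z h‖ ^ 2 ≤ K ^ 2 * ‖z‖ ^ 2 := by
      rw [← mul_pow]; exact pow_le_pow_left₀ (norm_nonneg _) b1 2
    calc _ ≤ (K ^ 2 * ‖z‖ ^ 2) * Real.exp K := by gcongr
      _ = _ := by ring
  have hz2 : ‖z‖ ^ 2 ≤ ‖z‖ := by nlinarith [norm_nonneg z]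
  have hE : 0 ≤ K ^ 2 * Real.exp K := by positivity
  refine ⟨?_, ?_, ?_⟩
  · nlinarith [norm_nonneg z]
  · nlinarith [sq_nonneg ‖z‖]
  · have : aeval z (expP N h) - 1 = (aeval z (expP N h) - 1 - aeval z h) + aeval z h := by ring
    rw [this]
    refine (norm_add_le _ _).trans ?_
    nlinarith [norm_nonneg z]

/-- cutoff -/
noncomputable def cutf (n : ℕ) (u : ℝ) : ℝ := max 0 (min 1 (min (n * u - 1) (n * (1 - u) - 1)))

lemma cutf_nonneg (n : ℕ) (u : ℝ) : 0 ≤ cutf n u := le_max_left _ _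
lemma cutf_le_one (n : ℕ) (u : ℝ) : cutf n u ≤ 1 := max_le zero_le_one (min_le_left _ _)
lemma cutf_cont (n : ℕ) : Continuous (cutf n) := by unfold cutf; fun_prop

lemma cutf_tendsto {u : ℝ} (h0 : 0 < u) (h1 : u < 1) : Tendsto (fun n => cutf n u) atTop (𝓝 1) := by
  refine tendsto_const_nhds.congr' ?_
  have t1 : Tendsto (fun n : ℕ => (n:ℝ) * u - 1) atTop atTop :=
    tendsto_atTop_add_const_right _ _ (tendsto_natCast_atTop_atTop.atTop_mul_const h0)
  have t2 : Tendsto (fun n : ℕ => (n:ℝ) * (1 - u) - 1) atTop atTop :=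
    tendsto_atTop_add_const_right _ _ (tendsto_natCast_atTop_atTop.atTop_mul_const (by linarith))
  filter_upwards [t1.eventually_ge_atTop 1, t2.eventually_ge_atTop 1] with n a b
  rw [cutf, min_eq_left (le_min a b)]; simp

lemma approx_cut {f : ℝ → ℝ} (hf : ContinuousOn f (Ioo 0 1)) (n : ℕ) {κ : ℝ} (hκ : 0 < κ) (d : ℝ) :
    ∃ p : ℝ[X], ∀ u ∈ Icc (0:ℝ) 1, |p.eval u - (cutf n u * f u + d)| ≤ κ := by
  set m : ℝ := 1 / (n + 2 : ℝ) with hm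
  have hn : (0:ℝ) ≤ n := Nat.cast_nonneg n
  have hm0 : 0 < m := by positivity
  have hm1 : m ≤ 1 / 2 := by
    rw [hm]; apply one_div_le_one_div_of_le <;> linarith
  have hmn : n * m ≤ 1 := by rw [hm, mul_one_div, div_le_one (by linarith)]; linarith
  set cl : ℝ → ℝ := fun u => max m (min u (1 - m)) with hcl
  have hclm : ∀ u, cl u ∈ Ioo (0:ℝ) 1 := by
    intro u
    exact ⟨lt_of_lt_of_le hm0 (le_max_left _ _), max_lt (by linarith) (lt_of_le_of_lt (min_le_right _ _) (by linarith))⟩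
  have hclc : Continuous cl := by rw [hcl]; fun_prop
  have hc : Continuous (fun u => cutf n u * f (cl u) + d) :=
    ((cutf_cont n).mul (hf.comp_continuous hclc hclm)).add continuous_const
  have he : ∀ u, cutf n u * f (cl u) = cutf n u * f u := by
    intro u
    by_cases h1 : u < m
    · have : cutf n u = 0 := by
        rw [cutf]; refine max_eq_left ((min_le_right _ _).trans ((min_le_left _ _).trans ?_))
        nlinarith
      rw [this]; simp
    by_cases h2 : 1 - m < u
    · have : cutf n u = 0 := by
        rw [cutf]; refine max_eq_left ((min_le_right _ _).trans ((min_le_right _ _).trans ?_))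
        nlinarith
      rw [this]; simp
    push Not at h1 h2
    rw [hcl]; dsimp only
    rw [min_eq_left h2, max_eq_right h1]
  obtain ⟨p, hp⟩ := exists_polynomial_near_of_continuousOn 0 1 _ hc.continuousOn κ hκ
  refine ⟨p, fun u hu => ?_⟩
  have := (hp u hu).le
  rwa [he] at this
end

section
open Real MeasureTheory Set Filter Polynomial
open scoped ComplexConjugate Topology

lemma dct {F : ℕ → ℝ → ℝ} {f G : ℝ → ℝ} (hF : ∀ n, AEStronglyMeasurable (F n) volume) (hG : Integrable G)
    (hb : ∀ n, ∀ x, x ≠ 0 → |F n x| ≤ G x) (hl : ∀ x, x ≠ 0 → Tendsto (fun n => F n x) atTop (𝓝 (f x))) :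
    (∀ n, Integrable (F n)) ∧ Integrable f ∧ Tendsto (fun n => ∫ x, F n x) atTop (𝓝 (∫ x, f x)) := by
  have hl' : ∀ᵐ x, Tendsto (fun n => F n x) atTop (𝓝 (f x)) := by
    filter_upwards [ae_ne_zero'] with x hx using hl x hx
  have hb' : ∀ n, ∀ᵐ x, ‖F n x‖ ≤ G x := by
    intro n; filter_upwards [ae_ne_zero'] with x hx using hb n x hx
  refine ⟨fun n => Integrable.mono' hG (hF n) (hb' n), ?_, ?_⟩
  · refine Integrable.mono' hG (aestronglyMeasurable_of_tendsto_ae _ hF hl') ?_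
    filter_upwards [ae_ne_zero'] with x hx
    exact le_of_tendsto (hl x hx).norm (Eventually.of_forall fun n => hb n x hx)
  · exact tendsto_integral_of_dominated_convergence G hF hG hb' hl'

lemma one_sub_y_normSq (x : ℝ) : ‖1 - yv x‖ ^ 2 = x ^ 2 / (1 + x ^ 2) := by
  have h3 := yv_re x
  have h2 := yv_normSq x
  rw [← Complex.normSq_eq_norm_sq, Complex.normSq_apply] at h2 ⊢
  have : x ^ 2 / (1 + x ^ 2) = 1 - 1 / (1 + x ^ 2) := by field_simp; ring
  rw [this]
  simp only [Complex.sub_re, Complex.sub_im, Complex.one_re, Complex.one_im]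
  nlinarith

lemma one_sub_y_norm_le (x : ℝ) : ‖1 - yv x‖ ≤ 1 := by
  have := one_sub_y_normSq x
  have h : x ^ 2 / (1 + x ^ 2) ≤ 1 := by rw [div_le_one (by positivity)]; linarith
  nlinarith [norm_nonneg (1 - yv x)]

lemma S_mul (H : ℝ) {x : ℝ} (hx : x ≠ 0) : |x| ^ (-(1 + 2 * H)) * (x ^ 2 / (1 + x ^ 2)) = |x| ^ (1 - 2 * H) / (1 + x ^ 2) := by
  have : |x| ^ (1 - 2 * H) = |x| ^ (-(1 + 2 * H)) * x ^ 2 := by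
    rw [← sq_abs, ← rpow_natCast, ← rpow_add (abs_pos.2 hx)]; congr 1; push_cast; ring
  rw [this]; ring

noncomputable def Dfun (H : ℝ) (h : ℝ[X]) (x : ℝ) : ℝ :=
  log (1 + |x| ^ (-(1 + 2 * H))) - log (1 + |x| ^ (-(2:ℝ))) - 2 * (aeval (yv x) h).re

noncomputable def Jint (H : ℝ) (q : ℝ[X]) (x : ℝ) : ℝ :=
  |x| ^ (-(1 + 2 * H)) * ‖aeval (yv x) q‖ ^ 2 + ‖1 - aeval (yv x) q‖ ^ 2

lemma abs_rpow_aesm (b : ℝ) : AEStronglyMeasurable (fun x : ℝ => |x| ^ b) volume :=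
  (measurable_norm.pow_const b).aestronglyMeasurable

lemma upper_core {H : ℝ} (h0 : 0 < H) (h1 : H < 1) {h : ℝ[X]} (hc : h.coeff 0 = 0) :
    (∀ N, Integrable (Jint H ((1 - X) * expP N (-h)))) ∧
    Integrable (fun x => exp (Dfun H h x) - 1 - Dfun H h x) ∧
    Tendsto (fun N => ∫ x, Jint H ((1 - X) * expP N (-h)) x) atTop
      (𝓝 (2 * π / sin (π / (1 + 2 * H)) + ∫ x, (exp (Dfun H h x) - 1 - Dfun H h x))) := by
  have hc' : (-h).coeff 0 = 0 := by simp [hc]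
  obtain ⟨C, hC, hb⟩ := expP_bound hc'
  obtain ⟨K, hK, hbK⟩ := pr_bound hc hc rfl
  set e : ℕ → ℝ → ℂ := fun N x => aeval (yv x) (expP N (-h)) with he
  set q : ℝ → ℂ := fun x => (1 - yv x) * Complex.exp (-aeval (yv x) h) with hq
  have hqN : ∀ N x, aeval (yv x) ((1 - X) * expP N (-h)) = (1 - yv x) * e N x := by
    intro N x; simp [he]
  have lime : ∀ x, Tendsto (fun N => (1 - yv x) * e N x) atTop (𝓝 (q x)) := by
    intro x
    have := (expP_tendsto (-h) (yv x)).const_mul (1 - yv x)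
    rwa [map_neg] at this
  have cq : ∀ N, Continuous (fun x => (1 - yv x) * e N x) := fun N =>
    (continuous_const.sub yv_cont).mul (aeval_cont _)
  have be : ∀ N x, ‖e N x‖ ≤ 1 + C := by
    intro N x
    have := ((hb N (yv x) (yv_norm_le x)).2.2).trans (mul_le_of_le_one_right hC (yv_norm_le x))
    have e1 : e N x = (e N x - 1) + 1 := by ring
    rw [e1]; refine (norm_add_le _ _).trans ?_
    rw [norm_one]; linarith
  have b1 : ∀ N x, ‖1 - (1 - yv x) * e N x‖ ≤ (1 + C) * ‖yv x‖ := by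
    intro N x
    have e1 : 1 - (1 - yv x) * e N x = yv x - (1 - yv x) * (e N x - 1) := by ring
    rw [e1]; refine (norm_sub_le _ _).trans ?_
    rw [norm_mul]
    have := mul_le_mul (one_sub_y_norm_le x) ((hb N (yv x) (yv_norm_le x)).2.2) (norm_nonneg _) zero_le_one
    linarith
  have b2 : ∀ N x, |(1 - (1 - yv x) * e N x).re| ≤ (1 + K + 2 * C) * (1 / (1 + x ^ 2)) := by
    intro N x
    obtain ⟨t1, t2, -⟩ := hb N (yv x) (yv_norm_le x)
    have hk := hbK x
    rw [Complex.add_conj, Complex.norm_real, norm_eq_abs, abs_mul, abs_two] at hk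
    rw [map_neg] at t1 t2
    have e1 : 1 - (1 - yv x) * e N x = yv x + aeval (yv x) h - (yv x * aeval (yv x) h + (1 - yv x) * (e N x - 1 - -aeval (yv x) h)) := by ring
    rw [e1, Complex.sub_re, Complex.add_re, yv_re]
    have t3 : |(yv x * aeval (yv x) h + (1 - yv x) * (e N x - 1 - -aeval (yv x) h)).re| ≤ 2 * C * ‖yv x‖ ^ 2 := by
      refine (Complex.abs_re_le_norm _).trans ((norm_add_le _ _).trans ?_)
      rw [norm_mul, norm_mul]
      rw [norm_neg] at t1
      have u1 := mul_le_mul (one_sub_y_norm_le x) t2 (norm_nonneg _) zero_le_one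
      have u2 := mul_le_mul_of_nonneg_left t1 (norm_nonneg (yv x))
      nlinarith
    rw [yv_normSq] at t3
    have hp : (0:ℝ) ≤ 1 / (1 + x ^ 2) := by positivity
    have := abs_nonneg (aeval (yv x) h).re
    rw [abs_le] at t3 ⊢
    have := neg_abs_le (aeval (yv x) h).re
    have := le_abs_self (aeval (yv x) h).re
    constructor <;> nlinarith
  have hI := integrable_inv_one_add_sq
  simp only [← one_div] at hI
  -- Re part
  obtain ⟨-, ri, rl⟩ := dct (F := fun N x => (1 - (1 - yv x) * e N x).re) (f := fun x => (1 - q x).re)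
    (fun N => (Complex.continuous_re.comp (continuous_const.sub (cq N))).aestronglyMeasurable)
    (hI.const_mul (1 + K + 2 * C)) (fun N x _ => b2 N x)
    (fun x _ => (Complex.continuous_re.tendsto _).comp ((lime x).const_sub 1))
  have rv : ∫ x, (1 - q x).re = π * (1 + h.coeff 1) := by
    refine tendsto_nhds_unique rl (tendsto_const_nhds.congr fun N => ?_)
    have := (int_re (p := 1 - (1 - X) * expP N (-h)) (by simp [expP_coeff0 N hc', mul_coeff_zero])).2
    have e2 : (1 - (1 - X) * expP N (-h)).coeff 1 = 1 + h.coeff 1 := by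
      rw [coeff_sub, mul_coeff_one, expP_coeff0 N hc', expP_coeff1 N hc']
      simp [coeff_one, coeff_X]
    rw [e2] at this
    rw [← this]
    congr 1; ext x
    rw [map_sub, hqN, map_one]
  -- J part
  obtain ⟨ji, fi, jl⟩ := dct (F := fun N => Jint H ((1 - X) * expP N (-h)))
    (f := fun x => |x| ^ (-(1 + 2 * H)) * ‖q x‖ ^ 2 + ‖1 - q x‖ ^ 2)
    (G := fun x => (1 + C) ^ 2 * (|x| ^ (1 - 2 * H) / (1 + x ^ 2)) + (1 + C) ^ 2 * (1 / (1 + x ^ 2)))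
    (fun N => by
      unfold Jint
      simp only [hqN]
      exact ((abs_rpow_aesm _).mul ((cq N).norm.pow 2).aestronglyMeasurable).add
        ((continuous_const.sub (cq N)).norm.pow 2).aestronglyMeasurable)
    (((integrable_G h0 h1).const_mul _).add (hI.const_mul _))
    (fun N x hx => by
      rw [Jint, hqN, abs_of_nonneg (by positivity), ← S_mul H hx, ← one_sub_y_normSq, ← yv_normSq, ← mul_pow (1 + C) ‖yv x‖]
      refine add_le_add ?_ (pow_le_pow_left₀ (norm_nonneg _) (b1 N x) 2)
      rw [norm_mul, mul_pow]
      have := pow_le_pow_left₀ (norm_nonneg _) (be N x) 2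
      calc _ ≤ |x| ^ (-(1 + 2 * H)) * (‖1 - yv x‖ ^ 2 * (1 + C) ^ 2) := by gcongr
        _ = _ := by ring)
    (fun x _ => by
      simp only [Jint, hqN]
      exact (((lime x).norm.pow 2).const_mul _).add (((lime x).const_sub 1).norm.pow 2))
  refine ⟨ji, ?_⟩
  have a1 : 1 < 1 + 2 * H := by linarith
  obtain ⟨l1, l1'⟩ := log_int a1
  obtain ⟨l2, l2'⟩ := log_int (a := 2) (by norm_num)
  obtain ⟨l3, l3'⟩ := int_re hc
  have di : Integrable (Dfun H h) := (l1.sub l2).sub (l3.const_mul 2)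
  have dv : ∫ x, Dfun H h x = 2 * π / sin (π / (1 + 2 * H)) - 2 * π - 2 * (π * h.coeff 1) := by
    have := lin3 l1 l2 l3 1 (-1) (-2)
    rw [l1', l2', l3', sin_pi_div_two] at this
    rw [show (2 * π / sin (π / (1 + 2 * H)) - 2 * π - 2 * (π * h.coeff 1)) = 1 * (2 * π / sin (π / (1 + 2 * H))) + -1 * (2 * π / 1) + -2 * (π * h.coeff 1) by ring, ← this]
    congr 1; ext x; rw [Dfun]; ring
  have key : ∀ x, x ≠ 0 → exp (Dfun H h x) - 1 - Dfun H h x = 1 * (|x| ^ (-(1 + 2 * H)) * ‖q x‖ ^ 2 + ‖1 - q x‖ ^ 2) + (-2) * (1 - q x).re + (-1) * Dfun H h x := by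
    intro x hx
    have hxp := abs_pos.2 hx
    have p1 : 0 < 1 + |x| ^ (-(1 + 2 * H)) := by positivity
    have p2 : 0 < 1 + |x| ^ (-(2:ℝ)) := by positivity
    have ee : exp (Dfun H h x) = (1 + |x| ^ (-(1 + 2 * H))) * ‖q x‖ ^ 2 := by
      rw [Dfun, exp_sub, exp_sub, exp_log p1, exp_log p2, hq]
      dsimp only
      rw [norm_mul, mul_pow, one_sub_y_normSq, Complex.norm_exp, Complex.neg_re, ← exp_nat_mul]
      have : |x| ^ (-(2:ℝ)) = (x ^ 2)⁻¹ := by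
        rw [rpow_neg hxp.le, rpow_two, sq_abs]
      rw [this]
      have e5 : exp ((2:ℕ) * -(aeval (yv x) h).re) = (exp (2 * (aeval (yv x) h).re))⁻¹ := by
        rw [← exp_neg]; congr 1; push_cast; ring
      rw [e5]
      have := exp_pos (2 * (aeval (yv x) h).re)
      field_simp
      ring
    have e2 : ‖1 - q x‖ ^ 2 = 1 - 2 * (q x).re + ‖q x‖ ^ 2 := by
      rw [← Complex.normSq_eq_norm_sq, ← Complex.normSq_eq_norm_sq, Complex.normSq_apply, Complex.normSq_apply]
      simp; ring
    rw [ee, e2, Complex.sub_re, Complex.one_re]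
    ring
  have key' : (fun x => 1 * (|x| ^ (-(1 + 2 * H)) * ‖q x‖ ^ 2 + ‖1 - q x‖ ^ 2) + (-2) * (1 - q x).re + (-1) * Dfun H h x) =ᵐ[volume] (fun x => exp (Dfun H h x) - 1 - Dfun H h x) := by
    filter_upwards [ae_ne_zero'] with x hx using (key x hx).symm
  refine ⟨Integrable.congr (((fi.const_mul 1).add (ri.const_mul (-2))).add (di.const_mul (-1))) key', ?_⟩
  rw [← integral_congr_ae key', lin3 fi ri di, rv, dv]
  convert jl using 2
  ring

end

section
open Real MeasureTheory Set Filter Polynomial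
open scoped ComplexConjugate Topology

lemma xh_mem {x : ℝ} (hx : x ≠ 0) : 1 / (1 + x ^ 2) ∈ Ioo (0:ℝ) 1 := by
  have : 0 < x ^ 2 := by positivity
  exact ⟨by positivity, by rw [div_lt_one (by positivity)]; linarith⟩

lemma sqrt_xh (x : ℝ) : √(1 / (1 / (1 + x ^ 2)) - 1) = |x| := by
  rw [one_div_one_div, add_sub_cancel_left, sqrt_sq_eq_abs]

lemma comp_sqrt_cont {l : ℝ → ℝ} (hl : ContinuousOn l (Ioi 0)) :
    ContinuousOn (fun u => l (√(1 / u - 1))) (Ioo 0 1) := by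
  refine hl.comp (t := Ioi 0) ?_ ?_
  · refine ContinuousOn.sqrt (ContinuousOn.sub (continuousOn_const.div continuousOn_id fun u hu => hu.1.ne') continuousOn_const)
  · intro u hu
    refine sqrt_pos.2 ?_
    have := (one_lt_one_div hu.1 hu.2)
    linarith

lemma logS_cont (b : ℝ) : ContinuousOn (fun x : ℝ => log (1 + |x| ^ b)) (Ioi 0) := by
  refine ContinuousOn.log (continuousOn_const.add (ContinuousOn.rpow_const continuous_abs.continuousOn ?_)) ?_
  · intro x hx; left; exact (abs_pos.2 (ne_of_gt hx)).ne'
  · intro x hx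
    have := abs_pos.2 (ne_of_gt (show 0 < x from hx))
    positivity

lemma phi_bound {L s θ κ : ℝ} (hs : 0 ≤ s) (hs1 : s ≤ 1) (hθ : |θ| ≤ κ) (hκ : κ ≤ 1) :
    exp (s * L + θ) - 1 - (s * L + θ) ≤ 3 * (s * (exp L - 1 - L)) + θ ^ 2 + 2 * κ * |L| := by
  have h1 : exp (s * L) ≤ s * exp L + (1 - s) := by
    have := convexOn_exp.2 (mem_univ L) (mem_univ 0) hs (by linarith : 0 ≤ 1 - s) (by ring)
    simpa using this
  have h2 := abs_le.1 (abs_exp_sub_one_sub_id_le (hθ.trans hκ))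
  have h3 := abs_exp_sub_one_le (hθ.trans hκ)
  have h4 : exp θ ≤ 3 := by
    have : exp θ ≤ exp 1 := exp_le_exp.2 ((le_abs_self θ).trans (hθ.trans hκ))
    linarith [exp_one_lt_d9]
  have h5 : 0 ≤ exp (s * L) - 1 - s * L := by linarith [add_one_le_exp (s * L)]
  have h6 : exp (s * L) - 1 - s * L ≤ s * (exp L - 1 - L) := by linarith
  have e : exp (s * L + θ) - 1 - (s * L + θ) = exp θ * (exp (s * L) - 1 - s * L) + (exp θ - 1 - θ) + s * L * (exp θ - 1) := by
    rw [exp_add]; ring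
  have h7 : s * L * (exp θ - 1) ≤ 2 * κ * |L| := by
    refine (le_abs_self _).trans ?_
    rw [abs_mul, abs_mul, abs_of_nonneg hs]
    have : |exp θ - 1| ≤ 2 * κ := by linarith
    calc s * |L| * |exp θ - 1| ≤ 1 * |L| * (2 * κ) := by gcongr
      _ = _ := by ring
  rw [e]
  nlinarith

lemma upper_approx {H : ℝ} (h0 : 0 < H) (h1 : H < 1) {η : ℝ} (hη : 0 < η) :
    ∃ q : ℝ[X], q.coeff 0 = 1 ∧ q.eval 1 = 0 ∧ Integrable (Jint H q) ∧
      ∫ x, Jint H q x ≤ 2 * π / sin (π / (1 + 2 * H)) + η := by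
  obtain ⟨-, i0, -⟩ := upper_core h0 h1 (h := 0) (by simp)
  obtain ⟨l1, -⟩ := log_int (a := 1 + 2 * H) (by linarith)
  obtain ⟨l2, -⟩ := log_int (a := 2) (by norm_num)
  have hL0 : ∀ x, Dfun H 0 x = log (1 + |x| ^ (-(1 + 2 * H))) - log (1 + |x| ^ (-(2:ℝ))) := by
    intro x; simp [Dfun]
  have Li : Integrable (Dfun H 0) := by
    refine (l1.sub l2).congr (ae_of_all _ fun x => ?_)
    rw [hL0]; rfl
  have hxc : Continuous (fun x : ℝ => 1 / (1 + x ^ 2)) := by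
    refine continuous_const.div (by fun_prop) fun x => by positivity
  obtain ⟨si, -, sl⟩ := dct (F := fun n x => (1 - cutf n (1 / (1 + x ^ 2))) * (exp (Dfun H 0 x) - 1 - Dfun H 0 x))
    (f := fun _ => 0) (G := fun x => exp (Dfun H 0 x) - 1 - Dfun H 0 x)
    (fun n => (continuous_const.sub ((cutf_cont n).comp hxc)).aestronglyMeasurable.mul i0.1) i0
    (fun n x _ => by
      have p : 0 ≤ exp (Dfun H 0 x) - 1 - Dfun H 0 x := by linarith [add_one_le_exp (Dfun H 0 x)]
      have c1 := cutf_nonneg n (1 / (1 + x ^ 2))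
      have c2 := cutf_le_one n (1 / (1 + x ^ 2))
      rw [abs_of_nonneg (mul_nonneg (by linarith) p)]
      nlinarith)
    (fun x hx => by
      have := ((cutf_tendsto (xh_mem hx).1 (xh_mem hx).2).const_sub 1).mul_const (exp (Dfun H 0 x) - 1 - Dfun H 0 x)
      simpa using this)
  rw [integral_zero] at sl
  obtain ⟨n, hn⟩ := (sl.eventually_le_const (show (0:ℝ) < η / 12 by positivity)).exists
  set A : ℝ := ∫ x, |Dfun H 0 x| with hA
  have hA0 : 0 ≤ A := integral_nonneg fun x => abs_nonneg _
  set κ : ℝ := min 1 (η / (4 * (π + 2 * A))) with hκd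
  have hπA : 0 < π + 2 * A := by positivity
  have hκ : 0 < κ := lt_min one_pos (by positivity)
  have hκ1 : κ ≤ 1 := min_le_left _ _
  have hκ2 : κ * (π + 2 * A) ≤ η / 4 := by
    have : κ ≤ η / (4 * (π + 2 * A)) := min_le_right _ _
    calc κ * (π + 2 * A) ≤ η / (4 * (π + 2 * A)) * (π + 2 * A) := by gcongr
      _ = η / 4 := by field_simp
  have fc : ContinuousOn (fun u => Dfun H 0 (√(1 / u - 1)) / u) (Ioo 0 1) := by
    refine ContinuousOn.div (comp_sqrt_cont (l := Dfun H 0) ?_) continuousOn_id fun u hu => hu.1.ne'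
    have e : Dfun H 0 = fun x => log (1 + |x| ^ (-(1 + 2 * H))) - log (1 + |x| ^ (-(2:ℝ))) := funext hL0
    rw [e]
    exact (logS_cont _).sub (logS_cont _)
  obtain ⟨p, hp⟩ := approx_cut fc n hκ 0
  obtain ⟨h, hh0, hh⟩ := trig_v p
  obtain ⟨ji, di, jl⟩ := upper_core h0 h1 hh0
  have bd : ∫ x, (exp (Dfun H h x) - 1 - Dfun H h x) ≤ η / 2 := by
    have hI := integrable_inv_one_add_sq
    simp only [← one_div] at hI
    have e := lin3 (si n) hI Li.abs 3 κ (2 * κ)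
    have hIv : ∫ x : ℝ, 1 / (1 + x ^ 2) = π := by simp
    rw [hIv] at e
    have : ∫ x, (exp (Dfun H h x) - 1 - Dfun H h x) ≤ ∫ x, (3 * ((1 - cutf n (1 / (1 + x ^ 2))) * (exp (Dfun H 0 x) - 1 - Dfun H 0 x)) + κ * (1 / (1 + x ^ 2)) + 2 * κ * |Dfun H 0 x|) := by
      refine integral_mono_ae di (((si n).const_mul 3).add (hI.const_mul κ) |>.add (Li.abs.const_mul (2 * κ))) ?_
      filter_upwards [ae_ne_zero'] with x hx
      set u := 1 / (1 + x ^ 2) with hu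
      have hu01 := xh_mem hx
      have hpu := hp u ⟨hu01.1.le, hu01.2.le⟩
      have hs : √(1 / u - 1) = |x| := sqrt_xh x
      have hev : Dfun H 0 |x| = Dfun H 0 x := by rw [hL0, hL0, abs_abs]
      rw [hs, hev, add_zero] at hpu
      have hu0 : 0 < u := hu01.1
      have hu1 : u < 1 := hu01.2
      set θ := cutf n u * Dfun H 0 x - u * p.eval u with hθ
      have hθb : |θ| ≤ κ * u := by
        have : θ = -(u * (p.eval u - cutf n u * (Dfun H 0 x / u))) := by
          rw [hθ]; field_simp; ring
        rw [this, abs_neg, abs_mul, abs_of_pos hu0]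
        nlinarith
      have hD : Dfun H h x = (1 - cutf n u) * Dfun H 0 x + θ := by
        have : Dfun H h x = Dfun H 0 x - 2 * (aeval (yv x) h).re := by rw [hL0, Dfun]
        rw [this, ← hh x, hθ]; ring
      rw [hD]
      have := phi_bound (L := Dfun H 0 x) (s := 1 - cutf n u) (θ := θ) (κ := κ)
        (by linarith [cutf_le_one n u]) (by linarith [cutf_nonneg n u]) (hθb.trans (by nlinarith)) hκ1
      have hθ2 : θ ^ 2 ≤ κ * u := by
        rw [← sq_abs]
        have h3 : κ * u ≤ 1 := by nlinarith
        nlinarith [abs_nonneg θ]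
      linarith
    rw [e] at this
    linarith
  have lt : 2 * π / sin (π / (1 + 2 * H)) + ∫ x, (exp (Dfun H h x) - 1 - Dfun H h x) < 2 * π / sin (π / (1 + 2 * H)) + η := by linarith
  obtain ⟨N, hN⟩ := (jl.eventually_lt_const lt).exists
  refine ⟨(1 - X) * expP N (-h), ?_, by simp, ji N, hN.le⟩
  rw [mul_coeff_zero, expP_coeff0 N (by simp [hh0])]
  simp
end

section
open Real MeasureTheory Set Filter Polynomial
open scoped ComplexConjugate Topology

noncomputable def psih (p r : ℝ[X]) (x : ℝ) : ℂ := aeval (yv x) p + conj (aeval (yv x) r)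

lemma psih_cont (p r : ℝ[X]) : Continuous (psih p r) :=
  (aeval_cont p).add (Complex.continuous_conj.comp (aeval_cont r))

lemma int_w1 {H : ℝ} (h0 : 0 < H) (h1 : H < 1) :
    Integrable (fun x : ℝ => |x| ^ (2 * H - 1) / (1 + x ^ 2)) := by
  have := integrable_G (H := 1 - H) (by linarith) (by linarith)
  refine this.congr (ae_of_all _ fun x => ?_)
  dsimp only
  congr 2; ring

lemma w_le (H : ℝ) {x : ℝ} (hx : x ≠ 0) :
    |x| ^ (1 + 2 * H) * (1 / (1 + x ^ 2)) ^ 2 ≤ |x| ^ (2 * H - 1) / (1 + x ^ 2) := by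
  have : |x| ^ (1 + 2 * H) = |x| ^ (2 * H - 1) * x ^ 2 := by
    rw [← sq_abs, ← rpow_natCast, ← rpow_add (abs_pos.2 hx)]; congr 1; push_cast; ring
  rw [this]
  have e : |x| ^ (2 * H - 1) * x ^ 2 * (1 / (1 + x ^ 2)) ^ 2 = |x| ^ (2 * H - 1) / (1 + x ^ 2) * (x ^ 2 / (1 + x ^ 2)) := by
    field_simp
  rw [e]
  have : x ^ 2 / (1 + x ^ 2) ≤ 1 := by rw [div_le_one (by positivity)]; linarith
  have h2 : 0 ≤ |x| ^ (2 * H - 1) / (1 + x ^ 2) := by positivity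
  nlinarith

lemma w_le2 (H : ℝ) (x : ℝ) :
    |x| ^ (2 * H - 1) * (1 / (1 + x ^ 2)) ^ 2 ≤ |x| ^ (2 * H - 1) / (1 + x ^ 2) := by
  have e : |x| ^ (2 * H - 1) * (1 / (1 + x ^ 2)) ^ 2 = |x| ^ (2 * H - 1) / (1 + x ^ 2) * (1 / (1 + x ^ 2)) := by
    field_simp
  rw [e]
  have : 1 / (1 + x ^ 2) ≤ 1 := by rw [div_le_one (by positivity)]; nlinarith [sq_nonneg x]
  have h2 : 0 ≤ |x| ^ (2 * H - 1) / (1 + x ^ 2) := by positivity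
  nlinarith

lemma psih_int {H : ℝ} (h0 : 0 < H) (h1 : H < 1) {p r : ℝ[X]} (p0 : p.coeff 0 = 0) (r0 : r.coeff 0 = 0) (hpr : p.coeff 1 = r.coeff 1) :
    Integrable (fun x => |x| ^ (1 + 2 * H) * ‖psih p r x‖ ^ 2) ∧ Integrable (fun x => |x| ^ (2 * H - 1) * ‖psih p r x‖ ^ 2) := by
  obtain ⟨C, hC, hb⟩ := pr_bound p0 r0 hpr
  have hb2 : ∀ x, ‖psih p r x‖ ^ 2 ≤ C ^ 2 * (1 / (1 + x ^ 2)) ^ 2 := by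
    intro x; rw [← mul_pow]; exact pow_le_pow_left₀ (norm_nonneg _) (hb x) 2
  have hm := ((psih_cont p r).norm.pow 2).aestronglyMeasurable (μ := volume)
  refine ⟨Integrable.mono' ((int_w1 h0 h1).const_mul (C ^ 2)) ((abs_rpow_aesm _).mul hm) ?_,
    Integrable.mono' ((int_w1 h0 h1).const_mul (C ^ 2)) ((abs_rpow_aesm _).mul hm) ?_⟩
  · filter_upwards [ae_ne_zero'] with x hx
    rw [norm_of_nonneg (by positivity)]
    have := w_le H hx
    calc _ ≤ |x| ^ (1 + 2 * H) * (C ^ 2 * (1 / (1 + x ^ 2)) ^ 2) := by gcongr; exact hb2 x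
      _ = C ^ 2 * (|x| ^ (1 + 2 * H) * (1 / (1 + x ^ 2)) ^ 2) := by ring
      _ ≤ _ := by gcongr
  · refine ae_of_all _ fun x => ?_
    rw [norm_of_nonneg (by positivity)]
    have := w_le2 H x
    calc _ ≤ |x| ^ (2 * H - 1) * (C ^ 2 * (1 / (1 + x ^ 2)) ^ 2) := by gcongr; exact hb2 x
      _ = C ^ 2 * (|x| ^ (2 * H - 1) * (1 / (1 + x ^ 2)) ^ 2) := by ring
      _ ≤ _ := by gcongr

lemma lower_core {H : ℝ} (h0 : 0 < H) (h1 : H < 1) {h : ℝ[X]} (hc : h.coeff 0 = 0)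
    (hv0 : ∀ x, x ≠ 0 → 0 ≤ 2 * (aeval (yv x) h).re)
    (hv : ∀ x, x ≠ 0 → 2 * (aeval (yv x) h).re ≤ log (1 + |x| ^ (-(1 + 2 * H)))) {η : ℝ} (hη : 0 < η) :
    ∃ p r : ℝ[X], p.coeff 0 = 0 ∧ r.coeff 0 = 0 ∧ p.coeff 1 = h.coeff 1 ∧ r.coeff 1 = h.coeff 1 ∧
      (∫ x, |x| ^ (1 + 2 * H) * ‖psih p r x‖ ^ 2) + (∫ x, ‖aeval (yv x) p‖ ^ 2) ≤ 2 * π * (h.coeff 1) + η := by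
  have hc' : (-h).coeff 0 = 0 := by simp [hc]
  obtain ⟨C, hC, hb⟩ := expP_bound hc'
  obtain ⟨C', hC', hb'⟩ := expP_bound hc
  obtain ⟨K, hK, hbK⟩ := pr_bound hc hc rfl
  set P : ℕ → ℝ[X] := fun N => 1 - expP N (-h) with hP
  set R : ℕ → ℝ[X] := fun N => expP N h - 1 with hR
  have P0 : ∀ N, (P N).coeff 0 = 0 := fun N => by simp [hP, expP_coeff0 N hc']
  have R0 : ∀ N, (R N).coeff 0 = 0 := fun N => by simp [hR, expP_coeff0 N hc]
  have P1 : ∀ N, (P N).coeff 1 = h.coeff 1 := fun N => by simp [hP, expP_coeff1 N hc', coeff_one]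
  have R1 : ∀ N, (R N).coeff 1 = h.coeff 1 := fun N => by simp [hR, expP_coeff1 N hc, coeff_one]
  have limP : ∀ x, Tendsto (fun N => aeval (yv x) (P N)) atTop (𝓝 (1 - Complex.exp (-aeval (yv x) h))) := by
    intro x
    have := (expP_tendsto (-h) (yv x)).const_sub 1
    rw [map_neg] at this
    simpa [hP] using this
  have limR : ∀ x, Tendsto (fun N => psih (P N) (R N) x) atTop (𝓝 (conj (Complex.exp (aeval (yv x) h)) - Complex.exp (-aeval (yv x) h))) := by
    intro x
    have h2 := (expP_tendsto h (yv x)).sub_const 1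
    have h3 := (limP x).add ((Complex.continuous_conj.tendsto _).comp h2)
    have e : (1 - Complex.exp (-aeval (yv x) h)) + conj (Complex.exp (aeval (yv x) h) - 1) = conj (Complex.exp (aeval (yv x) h)) - Complex.exp (-aeval (yv x) h) := by
      rw [map_sub, map_one]; ring
    rw [e] at h3
    refine h3.congr fun N => ?_
    simp [psih, hR]
  have bre : ∀ x, |(aeval (yv x) h).re| ≤ K * (1 / (1 + x ^ 2)) := by
    intro x
    have hk := hbK x
    rw [Complex.add_conj, Complex.norm_real, norm_eq_abs, abs_mul, abs_two] at hk
    linarith [abs_nonneg (aeval (yv x) h).re]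
  have bP : ∀ N x, ‖aeval (yv x) (P N)‖ ≤ C * ‖yv x‖ := by
    intro N x
    have := (hb N _ (yv_norm_le x)).2.2
    rw [← norm_neg] at this
    simpa [hP] using this
  have bPre : ∀ N x, |(aeval (yv x) (P N)).re| ≤ (K + C) * (1 / (1 + x ^ 2)) := by
    intro N x
    have := (hb N _ (yv_norm_le x)).2.1
    rw [yv_normSq] at this
    have e : aeval (yv x) (P N) = aeval (yv x) h - (aeval (yv x) (expP N (-h)) - 1 - aeval (yv x) (-h)) := by
      simp only [hP, map_sub, map_one, map_neg]; ring
    rw [e, Complex.sub_re]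
    refine (abs_sub _ _).trans ?_
    have := (Complex.abs_re_le_norm _).trans this
    linarith [bre x]
  have bR : ∀ N x, ‖psih (P N) (R N) x‖ ≤ (2 * K + C + C') * (1 / (1 + x ^ 2)) := by
    intro N x
    have t1 := (hb N _ (yv_norm_le x)).2.1
    have t2 := (hb' N _ (yv_norm_le x)).2.1
    rw [yv_normSq] at t1 t2
    have e : psih (P N) (R N) x = ((2 * (aeval (yv x) h).re : ℝ) : ℂ) - (aeval (yv x) (expP N (-h)) - 1 - aeval (yv x) (-h)) + conj (aeval (yv x) (expP N h) - 1 - aeval (yv x) h) := by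
      rw [← Complex.add_conj]
      simp only [psih, hP, hR, map_sub, map_one, map_neg]; ring
    rw [e]
    refine (norm_add_le _ _).trans ?_
    rw [Complex.norm_conj]
    refine (add_le_add (norm_sub_le _ _) le_rfl).trans ?_
    rw [Complex.norm_real, norm_eq_abs, abs_mul, abs_two]
    linarith [bre x]
  have hI := integrable_inv_one_add_sq
  simp only [← one_div] at hI
  obtain ⟨-, ri, rl⟩ := dct (F := fun N x => (aeval (yv x) (P N)).re) (f := fun x => (1 - Complex.exp (-aeval (yv x) h)).re)
    (fun N => (Complex.continuous_re.comp (aeval_cont _)).aestronglyMeasurable)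
    (hI.const_mul (K + C)) (fun N x _ => bPre N x)
    (fun x _ => (Complex.continuous_re.tendsto _).comp (limP x))
  have rv : ∫ x, (1 - Complex.exp (-aeval (yv x) h)).re = π * h.coeff 1 := by
    refine tendsto_nhds_unique rl (tendsto_const_nhds.congr fun N => ?_)
    rw [(int_re (P0 N)).2, P1]
  obtain ⟨fi, li, fl⟩ := dct (F := fun N x => |x| ^ (1 + 2 * H) * ‖psih (P N) (R N) x‖ ^ 2 + ‖aeval (yv x) (P N)‖ ^ 2)
    (f := fun x => |x| ^ (1 + 2 * H) * ‖conj (Complex.exp (aeval (yv x) h)) - Complex.exp (-aeval (yv x) h)‖ ^ 2 + ‖1 - Complex.exp (-aeval (yv x) h)‖ ^ 2)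
    (G := fun x => (2 * K + C + C') ^ 2 * (|x| ^ (2 * H - 1) / (1 + x ^ 2)) + C ^ 2 * (1 / (1 + x ^ 2)))
    (fun N => ((abs_rpow_aesm _).mul ((psih_cont _ _).norm.pow 2).aestronglyMeasurable).add ((aeval_cont _).norm.pow 2).aestronglyMeasurable)
    (((int_w1 h0 h1).const_mul _).add (hI.const_mul _))
    (fun N x hx => by
      rw [abs_of_nonneg (by positivity), ← yv_normSq, ← mul_pow C]
      refine add_le_add ?_ (pow_le_pow_left₀ (norm_nonneg _) (bP N x) 2)
      have h2 := pow_le_pow_left₀ (norm_nonneg _) (bR N x) 2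
      have := w_le H hx
      calc _ ≤ |x| ^ (1 + 2 * H) * ((2 * K + C + C') * (1 / (1 + x ^ 2))) ^ 2 := by gcongr
        _ = (2 * K + C + C') ^ 2 * (|x| ^ (1 + 2 * H) * (1 / (1 + x ^ 2)) ^ 2) := by ring
        _ ≤ _ := by gcongr)
    (fun x _ => (((limR x).norm.pow 2).const_mul _).add ((limP x).norm.pow 2))
  have bd : ∫ x, (|x| ^ (1 + 2 * H) * ‖conj (Complex.exp (aeval (yv x) h)) - Complex.exp (-aeval (yv x) h)‖ ^ 2 + ‖1 - Complex.exp (-aeval (yv x) h)‖ ^ 2)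
      ≤ 2 * π * h.coeff 1 := by
    have : 2 * π * h.coeff 1 = ∫ x, 2 * (1 - Complex.exp (-aeval (yv x) h)).re := by
      rw [integral_const_mul, rv]; ring
    rw [this]
    refine integral_mono_ae li (ri.const_mul 2) ?_
    filter_upwards [ae_ne_zero'] with x hx
    have hxp := abs_pos.2 hx
    set z := aeval (yv x) h with hz
    set v := 2 * z.re with hvd
    have hv1 : exp v - 1 ≤ |x| ^ (-(1 + 2 * H)) := by
      have := exp_le_exp.2 (hv x hx)
      rw [exp_log (by positivity)] at this
      linarith
    have hv2 : 0 ≤ exp v - 1 := by linarith [add_one_le_exp v, hv0 x hx]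
    have e1 : conj (Complex.exp z) - Complex.exp (-z) = Complex.exp (-z) * ((exp v - 1 : ℝ) : ℂ) := by
      rw [← Complex.exp_conj]
      have : (conj z) = -z + (v : ℂ) := by rw [hvd, ← Complex.add_conj]; ring
      rw [this, Complex.exp_add]; push_cast; ring
    have e2 : ‖Complex.exp (-z)‖ ^ 2 = exp (-v) := by
      rw [Complex.norm_exp, Complex.neg_re, ← exp_nat_mul]; congr 1; rw [hvd]; push_cast; ring
    have e3 : ‖1 - Complex.exp (-z)‖ ^ 2 = 1 - 2 * (Complex.exp (-z)).re + exp (-v) := by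
      rw [← e2, ← Complex.normSq_eq_norm_sq, ← Complex.normSq_eq_norm_sq, Complex.normSq_apply, Complex.normSq_apply]
      simp only [Complex.sub_re, Complex.sub_im, Complex.one_re, Complex.one_im]; ring
    rw [e1, norm_mul, mul_pow, e2, e3, Complex.norm_real, norm_eq_abs, sq_abs, Complex.sub_re, Complex.one_re]
    have e4 : |x| ^ (1 + 2 * H) * |x| ^ (-(1 + 2 * H)) = 1 := by
      rw [← rpow_add hxp]; simp
    have e5 : exp (-v) * exp v = 1 := by rw [← exp_add]; simp
    have : |x| ^ (1 + 2 * H) * (exp (-v) * (exp v - 1) ^ 2) ≤ 1 - exp (-v) := by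
      have hxx : 0 ≤ |x| ^ (1 + 2 * H) := by positivity
      calc |x| ^ (1 + 2 * H) * (exp (-v) * (exp v - 1) ^ 2) = exp (-v) * (exp v - 1) * (|x| ^ (1 + 2 * H) * (exp v - 1)) := by ring
        _ ≤ exp (-v) * (exp v - 1) * (|x| ^ (1 + 2 * H) * |x| ^ (-(1 + 2 * H))) := by
          have := (exp_pos (-v)).le
          gcongr
        _ = _ := by rw [e4, mul_one, mul_sub, e5, mul_one]
    linarith
  obtain ⟨N, hN⟩ := (fl.eventually_lt_const (lt_of_le_of_lt bd (by linarith : 2 * π * h.coeff 1 < 2 * π * h.coeff 1 + η))).exists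
  refine ⟨P N, R N, P0 N, R0 N, P1 N, R1 N, ?_⟩
  rw [integral_add (psih_int h0 h1 (P0 N) (R0 N) ((P1 N).trans (R1 N).symm)).1 (plancherel (P0 N)).1] at hN
  exact hN.le

lemma lower_approx {H : ℝ} (h0 : 0 < H) (h1 : H < 1) {η : ℝ} (hη : 0 < η) :
    ∃ p r : ℝ[X], p.coeff 0 = 0 ∧ r.coeff 0 = 0 ∧ p.coeff 1 = r.coeff 1 ∧
      2 * π / sin (π / (1 + 2 * H)) ≤ 2 * π * p.coeff 1 + η ∧
      (∫ x, |x| ^ (1 + 2 * H) * ‖psih p r x‖ ^ 2) + (∫ x, ‖aeval (yv x) p‖ ^ 2) ≤ 2 * π * p.coeff 1 + η := by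
  obtain ⟨l1, l1'⟩ := log_int (a := 1 + 2 * H) (by linarith)
  set l : ℝ → ℝ := fun x => log (1 + |x| ^ (-(1 + 2 * H))) with hl
  set u0 : ℝ := min (1/2) (η / (2 * π)) with hu0d
  have hu0 : 0 < u0 := lt_min (by norm_num) (by positivity)
  have hu0h : u0 ≤ 1 / 2 := min_le_left _ _
  have hu0η : u0 * π ≤ η / 2 := by
    have : u0 ≤ η / (2 * π) := min_le_right _ _
    calc u0 * π ≤ η / (2 * π) * π := by gcongr
      _ = η / 2 := by field_simp
  have hlow : ∀ x, x ≠ 0 → u0 * (1 / (1 + x ^ 2)) ^ 2 ≤ l x := by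
    intro x hx
    have hxp := abs_pos.2 hx
    have s1 : 0 < |x| ^ (1 + 2 * H) := by positivity
    have s2 : |x| ^ (1 + 2 * H) ≤ (1 + x ^ 2) ^ 2 := by
      rcases le_total |x| 1 with hc | hc
      · have : |x| ^ (1 + 2 * H) ≤ 1 := rpow_le_one hxp.le hc (by linarith)
        nlinarith [sq_nonneg x, sq_nonneg (x ^ 2)]
      · have : |x| ^ (1 + 2 * H) ≤ |x| ^ (4:ℝ) := rpow_le_rpow_of_exponent_le hc (by linarith)
        have e : |x| ^ (4:ℝ) = (x ^ 2) ^ 2 := by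
          rw [show (4:ℝ) = ((4:ℕ):ℝ) by norm_num, rpow_natCast, ← sq_abs x]; ring
        rw [e] at this
        nlinarith [sq_nonneg x]
    have s3 : 1 / (1 + |x| ^ (1 + 2 * H)) ≤ l x := by
      have := one_sub_inv_le_log_of_pos (show 0 < 1 + |x| ^ (-(1 + 2 * H)) by positivity)
      refine le_trans (le_of_eq ?_) this
      rw [rpow_neg hxp.le]
      field_simp
      ring
    refine le_trans ?_ s3
    have h5 : 1 + |x| ^ (1 + 2 * H) ≤ 2 * (1 + x ^ 2) ^ 2 := by nlinarith [sq_nonneg x, sq_nonneg (x ^ 2)]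
    have h6 : 1 / (2 * (1 + x ^ 2) ^ 2) ≤ 1 / (1 + |x| ^ (1 + 2 * H)) := one_div_le_one_div_of_le (by positivity) h5
    refine le_trans ?_ h6
    have : 1 / (2 * (1 + x ^ 2) ^ 2) = 1 / 2 * (1 / (1 + x ^ 2)) ^ 2 := by field_simp
    rw [this]; gcongr
  have hI := integrable_inv_one_add_sq
  simp only [← one_div] at hI
  have hIv : ∫ x : ℝ, 1 / (1 + x ^ 2) = π := by simp
  have hxc : Continuous (fun x : ℝ => 1 / (1 + x ^ 2)) := by
    refine continuous_const.div (by fun_prop) fun x => by positivity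
  have hpos : ∀ x : ℝ, 0 < 1 / (1 + x ^ 2) ∧ 1 / (1 + x ^ 2) ≤ 1 := fun x =>
    ⟨by positivity, by rw [div_le_one (by positivity)]; nlinarith [sq_nonneg x]⟩
  -- integrable lower target
  have gi : Integrable (fun x => l x - u0 * (1 / (1 + x ^ 2)) ^ 2) := by
    refine l1.sub (Integrable.const_mul ?_ u0)
    refine Integrable.mono' hI (hxc.pow 2).aestronglyMeasurable (ae_of_all _ fun x => ?_)
    obtain ⟨a1, a2⟩ := hpos x
    rw [norm_of_nonneg (by positivity)]
    nlinarith
  obtain ⟨si, -, sl⟩ := dct (F := fun n x => cutf n (1 / (1 + x ^ 2)) * (l x - u0 * (1 / (1 + x ^ 2)) ^ 2))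
    (f := fun x => l x - u0 * (1 / (1 + x ^ 2)) ^ 2) (G := fun x => l x - u0 * (1 / (1 + x ^ 2)) ^ 2)
    (fun n => (((cutf_cont n).comp hxc)).aestronglyMeasurable.mul gi.1) gi
    (fun n x hx => by
      have p : 0 ≤ l x - u0 * (1 / (1 + x ^ 2)) ^ 2 := by linarith [hlow x hx]
      have c1 := cutf_nonneg n (1 / (1 + x ^ 2))
      have c2 := cutf_le_one n (1 / (1 + x ^ 2))
      rw [abs_of_nonneg (mul_nonneg c1 p)]
      nlinarith)
    (fun x hx => by
      have := ((cutf_tendsto (xh_mem hx).1 (xh_mem hx).2)).mul_const (l x - u0 * (1 / (1 + x ^ 2)) ^ 2)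
      simpa using this)
  have glb : 2 * π / sin (π / (1 + 2 * H)) - η / 2 ≤ ∫ x, (l x - u0 * (1 / (1 + x ^ 2)) ^ 2) := by
    have h2 : ∫ x, (l x - u0 * (1 / (1 + x ^ 2))) = 2 * π / sin (π / (1 + 2 * H)) - u0 * π := by
      rw [integral_sub l1 (hI.const_mul u0), l1', integral_const_mul, hIv]
    have : ∫ x, (l x - u0 * (1 / (1 + x ^ 2))) ≤ ∫ x, (l x - u0 * (1 / (1 + x ^ 2)) ^ 2) := by
      refine integral_mono (l1.sub (hI.const_mul u0)) gi fun x => ?_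
      obtain ⟨a1, a2⟩ := hpos x
      dsimp only
      have : (1 / (1 + x ^ 2)) ^ 2 ≤ 1 / (1 + x ^ 2) := by nlinarith
      nlinarith
    linarith
  obtain ⟨n, hn⟩ := (sl.eventually_const_lt (show 2 * π / sin (π / (1 + 2 * H)) - η < ∫ x, (l x - u0 * (1 / (1 + x ^ 2)) ^ 2) by linarith)).exists
  have fc : ContinuousOn (fun u => l (√(1 / u - 1)) / u ^ 2 - u0) (Ioo 0 1) := by
    refine ContinuousOn.sub (ContinuousOn.div (comp_sqrt_cont (logS_cont _)) (continuousOn_id.pow 2) fun u hu => (pow_pos hu.1 2).ne') continuousOn_const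
  obtain ⟨p, hp⟩ := approx_cut fc n (half_pos hu0) (u0 / 2)
  obtain ⟨h, hh0, hh⟩ := trig_v (X * p)
  have main : ∀ x, x ≠ 0 → 0 ≤ 2 * (aeval (yv x) h).re ∧ 2 * (aeval (yv x) h).re ≤ l x ∧
      cutf n (1 / (1 + x ^ 2)) * (l x - u0 * (1 / (1 + x ^ 2)) ^ 2) ≤ 2 * (aeval (yv x) h).re := by
    intro x hx
    have hlx := hlow x hx
    rw [← hh x, eval_mul, eval_X]
    have hu01 := xh_mem hx
    have hs := sqrt_xh x
    set u := 1 / (1 + x ^ 2) with hu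
    have hpu := hp u ⟨hu01.1.le, hu01.2.le⟩
    have hev : l |x| = l x := by rw [hl]; dsimp only; rw [abs_abs]
    rw [hs, hev] at hpu
    have hup : 0 < u := hu01.1
    have c1 := cutf_nonneg n u
    have c2 := cutf_le_one n u
    have q0 : 0 ≤ l x / u ^ 2 - u0 := by
      rw [sub_nonneg, le_div_iff₀ (by positivity)]; exact hlx
    obtain ⟨b1, b2⟩ := abs_le.1 hpu
    have m1 := mul_le_mul_of_nonneg_right c2 q0
    have m0 := mul_nonneg c1 q0
    have f1 : cutf n u * (l x / u ^ 2 - u0) ≤ p.eval u := by linarith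
    have f2 : p.eval u ≤ l x / u ^ 2 := by linarith
    have hu2 : 0 < u ^ 2 := by positivity
    have e : u * (u * p.eval u) = u ^ 2 * p.eval u := by ring
    rw [e]
    refine ⟨by have := m0.trans f1; positivity, ?_, ?_⟩
    · rw [le_div_iff₀ hu2] at f2; linarith
    · have := mul_le_mul_of_nonneg_left f1 hu2.le
      have e2 : u ^ 2 * (cutf n u * (l x / u ^ 2 - u0)) = cutf n u * (l x - u0 * u ^ 2) := by field_simp
      rw [e2] at this; exact this
  obtain ⟨vi, vv⟩ := int_re hh0
  obtain ⟨P, R, P0, R0, P1, R1, hPR⟩ := lower_core h0 h1 hh0 (fun x hx => (main x hx).1) (fun x hx => (main x hx).2.1) hη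
  refine ⟨P, R, P0, R0, P1.trans R1.symm, ?_, by rw [P1]; exact hPR⟩
  have : ∫ x, cutf n (1 / (1 + x ^ 2)) * (l x - u0 * (1 / (1 + x ^ 2)) ^ 2) ≤ ∫ x, 2 * (aeval (yv x) h).re := by
    refine integral_mono_ae (si n) (vi.const_mul 2) ?_
    filter_upwards [ae_ne_zero'] with x hx using (main x hx).2.2
  rw [integral_const_mul, vv] at this
  rw [P1]; linarith
end

section
open Real MeasureTheory Set Filter Polynomial
open scoped ComplexConjugate Topology

noncomputable def gT (p : ℝ[X]) (T δ t : ℝ) : ℝ := δ⁻¹ * gam p (T / δ - t / δ)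

lemma gT_cont (p : ℝ[X]) (T δ : ℝ) : Continuous (gT p T δ) := by
  have := gam_cont p
  unfold gT; fun_prop

lemma gT_subst (p : ℝ[X]) {T δ : ℝ} (hδ : 0 < δ) (k : ℝ → ℂ) :
    ∫ t in (0:ℝ)..T, gT p T δ t • k t = ∫ τ in (0:ℝ)..T / δ, gam p τ • k (T - δ * τ) := by
  have := intervalIntegral.integral_comp_sub_div (a := 0) (b := T) (fun τ => gam p τ • k (T - δ * τ)) hδ.ne' (T / δ)
  simp only [zero_div, sub_zero, sub_self] at this
  have h2 : ∫ τ in (0:ℝ)..T / δ, gam p τ • k (T - δ * τ) = δ⁻¹ • ∫ x in (0:ℝ)..T, gam p (T / δ - x / δ) • k (T - δ * (T / δ - x / δ)) := by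
    rw [this, smul_smul, inv_mul_cancel₀ hδ.ne', one_smul]
  rw [h2, ← intervalIntegral.integral_smul]
  congr 1; ext t
  rw [gT, smul_smul]
  congr 2
  field_simp; ring

noncomputable def M1 (p : ℝ[X]) : ℝ := ∫ τ in Ioi (0:ℝ), τ * |gam p τ|

lemma M1_int (p : ℝ[X]) : IntegrableOn (fun τ => τ * |gam p τ|) (Ioi 0) := by
  obtain ⟨C, hC, hb⟩ := gam_bdd p
  have h1 : IntegrableOn (fun x : ℝ => x ^ (1:ℝ) * exp (-(1/2) * x)) (Ioi 0) := by
    have := integrableOn_rpow_mul_exp_neg_mul_rpow (s := 1) (p := 1) (b := 1/2) (by norm_num) one_pos (by norm_num)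
    simpa using this
  have h2 : IntegrableOn (fun x : ℝ => C * (x ^ (1:ℝ) * exp (-(1/2) * x))) (Ioi 0) := h1.const_mul C
  refine Integrable.mono' h2 (continuous_id.mul (gam_cont p).abs).aestronglyMeasurable ?_
  rw [ae_restrict_iff' measurableSet_Ioi]
  refine ae_of_all _ fun τ hτ => ?_
  have hτ' : 0 < τ := hτ
  rw [norm_mul, norm_of_nonneg hτ'.le, norm_of_nonneg (abs_nonneg _), rpow_one]
  have := hb τ hτ'.le
  have e : exp (-τ / 2) = exp (-(1/2) * τ) := by congr 1; ring
  rw [e] at this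
  nlinarith

lemma M1_nonneg (p : ℝ[X]) : 0 ≤ M1 p := setIntegral_nonneg measurableSet_Ioi fun τ hτ =>
  mul_nonneg (le_of_lt hτ) (abs_nonneg _)

lemma tail_le (p : ℝ[X]) {b : ℝ} (hb : 0 < b) (x : ℝ) :
    ‖∫ τ in Ioi b, (gam p τ : ℂ) * Complex.exp (-((x * τ : ℝ) * Complex.I))‖ ≤ M1 p / b := by
  refine (norm_integral_le_integral_norm _).trans ?_
  rw [M1, div_eq_inv_mul, ← integral_const_mul]
  have i2 : IntegrableOn (fun τ => b⁻¹ * (τ * |gam p τ|)) (Ioi 0) := (M1_int p).const_mul b⁻¹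
  refine le_trans (setIntegral_mono_on (g := fun τ => b⁻¹ * (τ * |gam p τ|)) ?_ (i2.mono_set (Ioi_subset_Ioi hb.le)) measurableSet_Ioi ?_)
    (setIntegral_mono_set i2 ?_ (Ioi_subset_Ioi hb.le).eventuallyLE)
  · exact ((gam_int_ofReal p x).mono_set (Ioi_subset_Ioi hb.le)).norm
  · intro τ hτ
    have hτ' : b < τ := hτ
    rw [norm_mul, ← neg_mul, ← Complex.ofReal_neg, Complex.norm_exp_ofReal_mul_I, mul_one, Complex.norm_real, norm_eq_abs,
      ← mul_assoc]
    refine le_mul_of_one_le_left (abs_nonneg _) ?_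
    rw [inv_mul_eq_div, one_le_div hb]; exact hτ'.le
  · rw [EventuallyLE, ae_restrict_iff' measurableSet_Ioi]
    refine ae_of_all _ fun τ hτ => ?_
    have hτ' : 0 < τ := hτ
    simp only [Pi.zero_apply]; positivity

lemma trunc_transform {p : ℝ[X]} (p0 : p.coeff 0 = 0) {b : ℝ} (hb : 0 < b) (x : ℝ) :
    ‖aeval (yv x) p - ∫ τ in (0:ℝ)..b, (gam p τ : ℂ) * Complex.exp (-((x * τ : ℝ) * Complex.I))‖ ≤ M1 p / b := by
  have := intervalIntegral.integral_interval_add_Ioi (gam_int_ofReal p x) ((gam_int_ofReal p x).mono_set (Ioi_subset_Ioi hb.le))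
  rw [gam_transform p0] at this
  rw [← this, add_sub_cancel_left]
  exact tail_le p hb x

lemma trunc_one {p : ℝ[X]} (p0 : p.coeff 0 = 0) (p1 : p.eval 1 = 1) {b : ℝ} (hb : 0 < b) :
    |1 - ∫ τ in (0:ℝ)..b, gam p τ| ≤ M1 p / b := by
  have := trunc_transform p0 hb 0
  have e : aeval (yv 0) p = 1 := by
    have : yv 0 = ((1:ℝ) : ℂ) := by simp [yv]
    rw [this, ← Complex.coe_algebraMap, aeval_algebraMap_apply]
    simp [p1]
  simp only [e, zero_mul, Complex.ofReal_zero, neg_zero, Complex.exp_zero, mul_one] at this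
  rw [intervalIntegral.integral_ofReal] at this
  rw [← norm_eq_abs, ← Complex.norm_real]
  push_cast; exact this

lemma resid_lip {p : ℝ[X]} (p0 : p.coeff 0 = 0) (p1 : p.eval 1 = 1) {T δ : ℝ} (hT : 0 < T) (hδ : 0 < δ)
    {k : ℝ → ℂ} (hk : Continuous k) {L : ℝ} (hL : ∀ t ∈ Icc 0 T, ‖k T - k t‖ ≤ L * |T - t|) {B : ℝ} (hB : ‖k T‖ ≤ B) :
    ‖k T - ∫ t in (0:ℝ)..T, gT p T δ t • k t‖ ≤ (B / T + L) * M1 p * δ := by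
  have hb : 0 < T / δ := by positivity
  have hg := gam_cont p
  rw [gT_subst p hδ]
  have e : k T - ∫ τ in (0:ℝ)..T / δ, gam p τ • k (T - δ * τ) =
      (1 - ∫ τ in (0:ℝ)..T / δ, gam p τ) • k T + ∫ τ in (0:ℝ)..T / δ, gam p τ • (k T - k (T - δ * τ)) := by
    simp only [smul_sub]
    rw [intervalIntegral.integral_sub (Continuous.intervalIntegrable (by fun_prop) _ _) (Continuous.intervalIntegrable (by fun_prop) _ _),
      intervalIntegral.integral_smul_const, sub_smul, one_smul]
    ring
  rw [e]
  refine (norm_add_le _ _).trans ?_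
  have h1 : ‖(1 - ∫ τ in (0:ℝ)..T / δ, gam p τ) • k T‖ ≤ M1 p / (T / δ) * B := by
    rw [norm_smul]
    exact mul_le_mul (trunc_one p0 p1 hb) hB (norm_nonneg _) (div_nonneg (M1_nonneg p) hb.le)
  have hL0 : 0 ≤ L := by
    have := (norm_nonneg _).trans (hL 0 ⟨le_rfl, hT.le⟩)
    rw [sub_zero, abs_of_pos hT] at this
    exact nonneg_of_mul_nonneg_left this hT
  have h2 : ‖∫ τ in (0:ℝ)..T / δ, gam p τ • (k T - k (T - δ * τ))‖ ≤ L * δ * M1 p := by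
    have i2 : IntegrableOn (fun τ => L * δ * (τ * |gam p τ|)) (Ioi 0) := (M1_int p).const_mul _
    refine (intervalIntegral.norm_integral_le_of_norm_le (g := fun τ => L * δ * (τ * |gam p τ|)) hb.le (ae_of_all _ fun τ hτ => ?_)
      (Continuous.intervalIntegrable (by fun_prop) _ _)).trans ?_
    · have ht : T - δ * τ ∈ Icc 0 T := by
        have h3 : δ * τ ≤ T := by have := hτ.2; rw [le_div_iff₀ hδ] at this; linarith
        have : 0 < δ * τ := mul_pos hδ hτ.1
        constructor <;> linarith
      have := hL _ ht
      rw [sub_sub_cancel, abs_of_pos (mul_pos hδ hτ.1)] at this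
      rw [norm_smul, norm_eq_abs]
      have := mul_le_mul_of_nonneg_left this (abs_nonneg (gam p τ))
      linarith
    · rw [intervalIntegral.integral_of_le hb.le, M1, ← integral_const_mul]
      refine setIntegral_mono_set i2 ?_ Ioc_subset_Ioi_self.eventuallyLE
      rw [EventuallyLE, ae_restrict_iff' measurableSet_Ioi]
      refine ae_of_all _ fun τ hτ => ?_
      have hτ' : 0 < τ := hτ
      simp only [Pi.zero_apply]; positivity
  have e3 : (B / T + L) * M1 p * δ = M1 p / (T / δ) * B + L * δ * M1 p := by field_simp
  rw [e3]; exact add_le_add h1 h2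

lemma resid_E {p : ℝ[X]} (p0 : p.coeff 0 = 0) {T δ : ℝ} (hT : 0 < T) (hδ : 0 < δ) (o : ℝ) :
    ‖(∫ t in (0:ℝ)..T, gT p T δ t • Eo t o) - Eo T o * aeval (yv (δ * o)) p‖ ≤ M1 p / T * δ := by
  have hb : 0 < T / δ := by positivity
  rw [gT_subst p hδ]
  have e : ∫ τ in (0:ℝ)..T / δ, gam p τ • Eo (T - δ * τ) o = Eo T o * ∫ τ in (0:ℝ)..T / δ, (gam p τ : ℂ) * Complex.exp (-((δ * o * τ : ℝ) * Complex.I)) := by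
    rw [← intervalIntegral.integral_const_mul]
    congr 1; ext τ
    have : Eo (T - δ * τ) o = Eo T o * Complex.exp (-((δ * o * τ : ℝ) * Complex.I)) := by
      rw [Eo, Eo, ← Complex.exp_add]; congr 1; push_cast; ring
    rw [this, Complex.real_smul]; ring
  rw [e, ← mul_sub, norm_mul, Eo_norm, one_mul, norm_sub_rev]
  refine (trunc_transform p0 hb (δ * o)).trans (le_of_eq ?_)
  field_simp

lemma gT_sq {p : ℝ[X]} (p0 : p.coeff 0 = 0) {T δ : ℝ} (hT : 0 < T) (hδ : 0 < δ) :
    ∫ t in (0:ℝ)..T, gT p T δ t ^ 2 ≤ δ⁻¹ * ((1 / (2 * π)) * ∫ x : ℝ, ‖aeval (yv x) p‖ ^ 2) := by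
  have hb : 0 < T / δ := by positivity
  have := intervalIntegral.integral_comp_sub_div (a := 0) (b := T) (fun τ => δ⁻¹ ^ 2 * gam p τ ^ 2) hδ.ne' (T / δ)
  simp only [zero_div, sub_zero, sub_self] at this
  obtain ⟨-, i1, i2⟩ := plancherel p0
  simp only [gT, mul_pow]
  rw [this, ← i2, intervalIntegral.integral_const_mul, smul_eq_mul, intervalIntegral.integral_of_le hb.le]
  have : ∫ τ in Ioc 0 (T / δ), gam p τ ^ 2 ≤ ∫ τ in Ioi 0, gam p τ ^ 2 :=
    setIntegral_mono_set i1 (ae_of_all _ fun τ => sq_nonneg _) Ioc_subset_Ioi_self.eventuallyLE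
  have e : δ * (δ⁻¹ ^ 2 * ∫ τ in Ioc 0 (T / δ), gam p τ ^ 2) = δ⁻¹ * ∫ τ in Ioc 0 (T / δ), gam p τ ^ 2 := by
    field_simp
  rw [e]; gcongr
end

section
open Real MeasureTheory Set Filter Polynomial
open scoped ComplexConjugate Topology

lemma young_sq {a b x η : ℝ} (hη : 0 < η) (ha : 0 ≤ a) (hb : 0 ≤ b) (hx : 0 ≤ x) (h : x ≤ a + b) :
    x ^ 2 ≤ (1 + η) * a ^ 2 + (1 + 1 / η) * b ^ 2 := by
  have h1 : x ^ 2 ≤ (a + b) ^ 2 := by gcongr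
  have h2 : (1 + η) * a ^ 2 + (1 + 1 / η) * b ^ 2 - (a + b) ^ 2 = (η * a - b) ^ 2 / η := by
    field_simp; ring
  have : 0 ≤ (η * a - b) ^ 2 / η := by positivity
  linarith

lemma resid_num (β : ℝ) {T : ℝ} {g : ℝ → ℝ} (hg : Continuous g) {o : ℝ} (ho : o ≠ 0) :
    resid T (Fo β) g o = ((Eo T o - ∫ t in (0:ℝ)..T, g t • Eo t o) -
      (((exp (β * T) : ℝ) : ℂ) - ∫ t in (0:ℝ)..T, g t • ((exp (β * t) : ℝ) : ℂ))) / ((o : ℂ) * Complex.I - (β : ℂ)) := by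
  have e : ∀ t, g t • Fo β t o = (g t • Eo t o - g t • ((exp (β * t) : ℝ) : ℂ)) / ((o : ℂ) * Complex.I - (β : ℂ)) := by
    intro t; simp only [Fo, Complex.real_smul]; ring
  have c1 : Continuous (fun t => g t • Eo t o) := by unfold Eo; fun_prop
  have c2 : Continuous (fun t => g t • ((exp (β * t) : ℝ) : ℂ)) := by fun_prop
  simp only [resid, e]
  rw [intervalIntegral.integral_div, intervalIntegral.integral_sub (c1.intervalIntegrable _ _) (c2.intervalIntegrable _ _), Fo]
  ring

lemma resid_pt (β : ℝ) {T η : ℝ} (hT : 0 < T) (hη : 0 < η) {q : ℝ[X]} (q0 : q.coeff 0 = 1) (q1 : q.eval 1 = 0) :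
    ∃ C, 0 ≤ C ∧ ∀ δ, 0 < δ → ∀ o : ℝ, o ≠ 0 → ‖resid T (Fo β) (gT (1 - q) T δ) o‖ ^ 2 ≤
      (1 + η) * ((o ^ 2)⁻¹ * ‖aeval (yv (δ * o)) q‖ ^ 2) + C * δ ^ 2 * (1 / (1 + o ^ 2)) := by
  have p0 : (1 - q).coeff 0 = 0 := by simp [q0]
  have p1 : (1 - q).eval 1 = 1 := by simp [q1]
  obtain ⟨L, hL, hLip⟩ := Fo_lip β T hT
  obtain ⟨B, hB, hbd⟩ := Fo_bound β T hT
  set M := M1 (1 - q) with hM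
  have hM0 : 0 ≤ M := M1_nonneg _
  set C1 := (B / T + L) * M with hC1
  set C2 := (exp (|β| * T) / T + |β| * exp (|β| * T)) * M + M / T with hC2
  have hC10 : 0 ≤ C1 := by positivity
  have hC20 : 0 ≤ C2 := by positivity
  refine ⟨2 * C1 ^ 2 + 2 * (1 + 1 / η) * C2 ^ 2, by positivity, fun δ hδ o ho => ?_⟩
  have hTT : T ∈ Icc 0 T := ⟨hT.le, le_rfl⟩
  rcases le_or_gt (|o|) 1 with h | h
  · have h3 : ‖resid T (Fo β) (gT (1 - q) T δ) o‖ ≤ C1 * δ := by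
      refine resid_lip (k := fun t => Fo β t o) p0 p1 hT hδ (by unfold Fo Eo; fun_prop) (L := L) (B := B) (fun t ht => hLip t ht T hTT o) ?_
      refine (hbd T hTT o).trans (div_le_self hB.le ?_)
      rw [one_le_sqrt]; nlinarith [sq_nonneg o]
    have h4 : ‖resid T (Fo β) (gT (1 - q) T δ) o‖ ^ 2 ≤ (C1 * δ) ^ 2 := by gcongr
    have ho2 : o ^ 2 ≤ 1 := by rw [← sq_abs]; nlinarith [abs_nonneg o]
    have h5 : 1 ≤ 2 * (1 / (1 + o ^ 2)) := by rw [mul_one_div, one_le_div (by positivity)]; linarith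
    have h6 : (C1 * δ) ^ 2 ≤ (C1 * δ) ^ 2 * (2 * (1 / (1 + o ^ 2))) := le_mul_of_one_le_right (by positivity) h5
    have h7 : 0 ≤ 2 * (1 + 1 / η) * C2 ^ 2 * δ ^ 2 * (1 / (1 + o ^ 2)) := by positivity
    have h8 : 0 ≤ (1 + η) * ((o ^ 2)⁻¹ * ‖aeval (yv (δ * o)) q‖ ^ 2) := by positivity
    have e9 : (2 * C1 ^ 2 + 2 * (1 + 1 / η) * C2 ^ 2) * δ ^ 2 * (1 / (1 + o ^ 2)) = (C1 * δ) ^ 2 * (2 * (1 / (1 + o ^ 2))) + 2 * (1 + 1 / η) * C2 ^ 2 * δ ^ 2 * (1 / (1 + o ^ 2)) := by ring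
    rw [e9]; linarith
  · have hnum : ‖(Eo T o - ∫ t in (0:ℝ)..T, gT (1 - q) T δ t • Eo t o) -
      (((exp (β * T) : ℝ) : ℂ) - ∫ t in (0:ℝ)..T, gT (1 - q) T δ t • ((exp (β * t) : ℝ) : ℂ))‖ ≤ ‖aeval (yv (δ * o)) q‖ + C2 * δ := by
      have a1 := resid_E p0 hT hδ o
      have a2 := resid_lip (k := fun t => ((exp (β * t) : ℝ) : ℂ)) p0 p1 hT hδ (by fun_prop) (L := |β| * exp (|β| * T)) (B := exp (|β| * T))
        (fun t ht => by
          rw [← Complex.ofReal_sub, Complex.norm_real]; exact exp_sub_le ht hTT)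
        (by rw [Complex.norm_real, norm_of_nonneg (exp_pos _).le]; exact exp_mul_le hTT)
      set X := ∫ t in (0:ℝ)..T, gT (1 - q) T δ t • Eo t o
      set Y := (((exp (β * T) : ℝ) : ℂ) - ∫ t in (0:ℝ)..T, gT (1 - q) T δ t • ((exp (β * t) : ℝ) : ℂ))
      have e : (Eo T o - X) - Y = Eo T o * aeval (yv (δ * o)) q - (X - Eo T o * aeval (yv (δ * o)) (1 - q)) - Y := by
        rw [map_sub, map_one]; ring
      rw [e]
      have b1 := norm_sub_le (Eo T o * aeval (yv (δ * o)) q - (X - Eo T o * aeval (yv (δ * o)) (1 - q))) Y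
      have b2 := norm_sub_le (Eo T o * aeval (yv (δ * o)) q) (X - Eo T o * aeval (yv (δ * o)) (1 - q))
      rw [norm_mul, Eo_norm, one_mul] at b2
      rw [hC2, add_mul]
      linarith
    have ho1 : 0 < |o| := by linarith
    have h3 : ‖resid T (Fo β) (gT (1 - q) T δ) o‖ ≤ ‖aeval (yv (δ * o)) q‖ / |o| + C2 * δ / |o| := by
      rw [resid_num β (gT_cont _ _ _) ho, norm_div, ← add_div]
      exact div_le_div₀ (by positivity) hnum ho1 (den_ge β o)
    have h4 := young_sq hη (by positivity) (by positivity) (norm_nonneg _) h3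
    rw [div_pow, div_pow, sq_abs] at h4
    have ho2 : 1 ≤ o ^ 2 := by rw [← sq_abs]; nlinarith [abs_nonneg o]
    have h5 : 1 / o ^ 2 ≤ 2 * (1 / (1 + o ^ 2)) := by
      rw [mul_one_div, div_le_div_iff₀ (by positivity) (by positivity)]; linarith
    have h6 : (1 + 1 / η) * ((C2 * δ) ^ 2 / o ^ 2) ≤ (1 + 1 / η) * (C2 * δ) ^ 2 * (2 * (1 / (1 + o ^ 2))) := by
      rw [mul_div_assoc', div_eq_mul_one_div]; gcongr
    have h7 : 0 ≤ 2 * C1 ^ 2 * δ ^ 2 * (1 / (1 + o ^ 2)) := by positivity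
    have e8 : (o ^ 2)⁻¹ * ‖aeval (yv (δ * o)) q‖ ^ 2 = ‖aeval (yv (δ * o)) q‖ ^ 2 / o ^ 2 := by ring
    have e9 : (2 * C1 ^ 2 + 2 * (1 + 1 / η) * C2 ^ 2) * δ ^ 2 * (1 / (1 + o ^ 2)) = 2 * C1 ^ 2 * δ ^ 2 * (1 / (1 + o ^ 2)) + (1 + 1 / η) * (C2 * δ) ^ 2 * (2 * (1 / (1 + o ^ 2))) := by ring
    rw [e8, e9]; linarith

lemma scale_int {H δ : ℝ} (hδ : 0 < δ) (b : ℝ) (f : ℝ → ℝ) :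
    ∫ o : ℝ, |o| ^ b * f (δ * o) = δ ^ (-b - 1) * ∫ x : ℝ, |x| ^ b * f x := by
  have e : ∀ o : ℝ, |o| ^ b * f (δ * o) = δ ^ (-b) * (fun x => |x| ^ b * f x) (δ * o) := by
    intro o
    simp only
    rw [abs_mul, abs_of_pos hδ, mul_rpow hδ.le (abs_nonneg _), ← mul_assoc, ← mul_assoc, ← rpow_add hδ, neg_add_cancel, rpow_zero, one_mul]
  simp_rw [e]
  have e2 := Measure.integral_comp_mul_left (fun x => |x| ^ b * f x) δ
  rw [integral_const_mul, e2, smul_eq_mul, ← mul_assoc, abs_of_pos (inv_pos.2 hδ), rpow_sub_one hδ.ne', div_eq_mul_inv]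

lemma scale_integrable {δ : ℝ} (hδ : 0 < δ) {b : ℝ} {f : ℝ → ℝ} (h : Integrable (fun x : ℝ => |x| ^ b * f x)) :
    Integrable (fun o : ℝ => |o| ^ b * f (δ * o)) := by
  refine ((h.comp_mul_left' hδ.ne').const_mul (δ ^ (-b))).congr (ae_of_all _ fun o => ?_)
  simp only
  rw [abs_mul, abs_of_pos hδ, mul_rpow hδ.le (abs_nonneg _), ← mul_assoc, ← mul_assoc, ← rpow_add hδ, neg_add_cancel, rpow_zero, one_mul]

lemma upper_final {H : ℝ} (h0 : 0 < H) (h1 : H < 1) {c : ℝ} (hc : 0 < c) (β : ℝ) {T η : ℝ} (hT : 0 < T) (hη : 0 < η) :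
    ∃ K, ∀ δ, 0 < δ → ∀ g : ℝ → ℝ, Continuous g →
    (∀ s ∈ Icc 0 T, (c * δ ^ (1 + 2 * H)) * g s + ∫ r in (0:ℝ)..T,
        (∫ o : ℝ, c / (2 * π) * |o| ^ (1 - 2 * H) * inner ℝ (Fo β r o) (Fo β s o)) * g r
      = ∫ o : ℝ, c / (2 * π) * |o| ^ (1 - 2 * H) * inner ℝ (Fo β s o) (Fo β T o)) →
    (c * δ ^ (1 + 2 * H)) * g T ≤ (c * δ ^ (2 * H)) * ((1 + η) * ((1 / (2 * π)) * (2 * π / sin (π / (1 + 2 * H)) + η)) + K * δ ^ (2 - 2 * H)) := by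
  obtain ⟨q, q0, q1, hJ, hJle⟩ := upper_approx h0 h1 hη
  obtain ⟨C, hC, hpt⟩ := resid_pt β hT hη q0 q1
  have p0 : (1 - q).coeff 0 = 0 := by simp [q0]
  have hc' : 0 < c / (2 * π) := by positivity
  obtain ⟨D, hF⟩ := filterData h0 h1 hc' β hT
  set G := ∫ w : ℝ, |w| ^ (1 - 2 * H) / (1 + w ^ 2) with hG
  refine ⟨1 / (2 * π) * C * G, fun δ hδ g hg heq => ?_⟩
  have hpl : Integrable (fun x => ‖1 - aeval (yv x) q‖ ^ 2) := by
    have := (plancherel p0).1; simpa using this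
  have hS : Integrable (fun x : ℝ => |x| ^ (-(1 + 2 * H)) * ‖aeval (yv x) q‖ ^ 2) := by
    refine (hJ.sub hpl).congr (ae_of_all _ fun x => ?_)
    simp [Jint]
  have hJeq : ∫ x, Jint H q x = (∫ x : ℝ, |x| ^ (-(1 + 2 * H)) * ‖aeval (yv x) q‖ ^ 2) + ∫ x, ‖1 - aeval (yv x) q‖ ^ 2 := by
    rw [← integral_add hS hpl]; rfl
  have hup := hF.upper (lam := c * δ ^ (1 + 2 * H)) (by positivity) hg heq (gT_cont (1 - q) T δ)
  have hsq := gT_sq p0 hT hδ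
  simp only [map_sub, map_one] at hsq
  have hSd := scale_integrable hδ hS
  have hGi := integrable_G h0 h1
  have hint : ∫ o, c / (2 * π) * |o| ^ (1 - 2 * H) * ‖resid T (Fo β) (gT (1 - q) T δ) o‖ ^ 2 ≤
      ∫ o : ℝ, (c / (2 * π) * (1 + η) * (|o| ^ (-(1 + 2 * H)) * ‖aeval (yv (δ * o)) q‖ ^ 2) + c / (2 * π) * C * δ ^ 2 * (|o| ^ (1 - 2 * H) / (1 + o ^ 2))) := by
    refine integral_mono_of_nonneg (ae_of_all _ fun o => by positivity) ((hSd.const_mul _).add (hGi.const_mul _)) ?_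
    filter_upwards [ae_ne_zero'] with o ho
    have h3 := mul_le_mul_of_nonneg_left (hpt δ hδ o ho) (a := c / (2 * π) * |o| ^ (1 - 2 * H)) (by positivity)
    refine h3.trans (le_of_eq ?_)
    have e : |o| ^ (-(1 + 2 * H)) = |o| ^ (1 - 2 * H) * (o ^ 2)⁻¹ := by
      rw [← sq_abs, ← rpow_natCast, ← rpow_neg (abs_nonneg _), ← rpow_add (abs_pos.2 ho)]
      congr 1; push_cast; ring
    rw [e]; ring
  rw [integral_add (hSd.const_mul _) (hGi.const_mul _), integral_const_mul, integral_const_mul, scale_int (H := H) hδ _ (fun x => ‖aeval (yv x) q‖ ^ 2)] at hint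
  have e1 : -(-(1 + 2 * H)) - 1 = 2 * H := by ring
  rw [e1, ← hG] at hint
  have e2 : δ ^ (2:ℝ) = δ ^ (2 * H) * δ ^ (2 - 2 * H) := by rw [← rpow_add hδ]; congr 1; ring
  have e3 : δ ^ (1 + 2 * H) * δ⁻¹ = δ ^ (2 * H) := by
    rw [← rpow_neg_one δ, ← rpow_add hδ]; congr 1; ring
  rw [rpow_two] at e2
  rw [e2] at hint
  have h5 : c * δ ^ (1 + 2 * H) * ∫ t in (0:ℝ)..T, gT (1 - q) T δ t ^ 2 ≤ c * δ ^ (2 * H) * (1 / (2 * π) * ∫ x, ‖1 - aeval (yv x) q‖ ^ 2) := by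
    have := mul_le_mul_of_nonneg_left hsq (a := c * δ ^ (1 + 2 * H)) (by positivity)
    rw [← e3]; linarith
  rw [hJeq] at hJle
  set A := ∫ x : ℝ, |x| ^ (-(1 + 2 * H)) * ‖aeval (yv x) q‖ ^ 2 with hA
  set A' := ∫ x, ‖1 - aeval (yv x) q‖ ^ 2 with hA'
  have hA'0 : 0 ≤ A' := integral_nonneg fun x => by positivity
  refine hup.trans ((add_le_add hint h5).trans ?_)
  have h6 : c * δ ^ (2 * H) * ((1 + η) * (1 / (2 * π) * (A + A'))) ≤ c * δ ^ (2 * H) * ((1 + η) * (1 / (2 * π) * (2 * π / sin (π / (1 + 2 * H)) + η))) := by gcongr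
  have h7 : 0 ≤ c * δ ^ (2 * H) * (η * (1 / (2 * π) * A')) := by positivity
  have e9 : c / (2 * π) * (1 + η) * (δ ^ (2 * H) * A) + c / (2 * π) * C * (δ ^ (2 * H) * δ ^ (2 - 2 * H)) * G + c * δ ^ (2 * H) * (1 / (2 * π) * A')
    = c * δ ^ (2 * H) * ((1 + η) * (1 / (2 * π) * (A + A'))) - c * δ ^ (2 * H) * (η * (1 / (2 * π) * A')) + c * δ ^ (2 * H) * (1 / (2 * π) * C * G * δ ^ (2 - 2 * H)) := by ring
  rw [e9, mul_add (c * δ ^ (2 * H))]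
  linarith
end

section
open Real MeasureTheory Set Filter Polynomial
open scoped ComplexConjugate Topology

noncomputable def Bt (p r : ℝ[X]) (T δ o : ℝ) : ℂ := ((δ / (2 * π) : ℝ) : ℂ) * (psih p r (δ * o) * Eo T o)

lemma Bt_norm (p r : ℝ[X]) (T : ℝ) {δ : ℝ} (hδ : 0 < δ) (o : ℝ) : ‖Bt p r T δ o‖ ^ 2 = (δ / (2 * π)) ^ 2 * ‖psih p r (δ * o)‖ ^ 2 := by
  rw [Bt, norm_mul, norm_mul, Eo_norm, mul_one, Complex.norm_real, norm_of_nonneg (by positivity), mul_pow]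

lemma Bt_cont (p r : ℝ[X]) (T δ : ℝ) : Continuous (Bt p r T δ) := by
  have := psih_cont p r
  unfold Bt Eo; fun_prop

lemma Bt_int {p r : ℝ[X]} (p0 : p.coeff 0 = 0) (r0 : r.coeff 0 = 0) (hpr : p.coeff 1 = r.coeff 1) (T : ℝ) {δ : ℝ} (hδ : 0 < δ) :
    Integrable (Bt p r T δ) := by
  have hi : Integrable (fun o => psih p r (δ * o)) := (show Integrable (psih p r) volume from (inversion p0 r0 hpr).1).comp_mul_left' hδ.ne'
  refine Integrable.mono' (hi.norm.const_mul (δ / (2 * π))) (Bt_cont p r T δ).aestronglyMeasurable (ae_of_all _ fun o => le_of_eq ?_)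
  rw [Bt, norm_mul, norm_mul, Eo_norm, mul_one, Complex.norm_real, norm_of_nonneg (by positivity)]

lemma Bt_inner {p r : ℝ[X]} (p0 : p.coeff 0 = 0) (r0 : r.coeff 0 = 0) (hpr : p.coeff 1 = r.coeff 1) {T δ t : ℝ} (hδ : 0 < δ) (ht : t ≤ T) :
    ∫ o, inner ℝ (Bt p r T δ o) (Eo t o) = gam p (T / δ - t / δ) := by
  obtain ⟨i1, i2⟩ := inversion p0 r0 hpr
  have hτ : 0 ≤ T / δ - t / δ := by rw [← sub_div]; exact div_nonneg (by linarith) hδ.le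
  have i3 := i2 _ hτ
  have e : ∀ o, inner ℝ (Bt p r T δ o) (Eo t o) = (((δ / (2 * π) : ℝ) : ℂ) * (fun x : ℝ => psih p r x * Complex.exp ((x * (T / δ - t / δ) : ℝ) * Complex.I)) (δ * o)).re := by
    intro o
    have e1 : inner ℝ (Bt p r T δ o) (Eo t o) = (Bt p r T δ o * conj (Eo t o)).re := by
      rw [real_inner_comm]; rfl
    rw [e1, Bt]
    congr 1
    have e2 : Complex.exp ((δ * o * (T / δ - t / δ) : ℝ) * Complex.I) = Eo T o * conj (Eo t o) := by
      rw [Eo, Eo, ← Complex.exp_conj, ← Complex.exp_add]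
      congr 1
      simp only [map_mul, Complex.conj_ofReal, Complex.conj_I]
      have : δ * o * (T / δ - t / δ) = o * T - o * t := by field_simp
      rw [this]; push_cast; ring
    simp only [e2]; ring
  have hi : Integrable (fun x : ℝ => psih p r x * Complex.exp ((x * (T / δ - t / δ) : ℝ) * Complex.I)) := by
    refine Integrable.mono' i1.norm (Continuous.aestronglyMeasurable ?_) (ae_of_all _ fun x => le_of_eq ?_)
    · have := psih_cont p r
      fun_prop
    · rw [norm_mul, Complex.norm_exp_ofReal_mul_I, mul_one]; rfl
  have hi2 := (hi.comp_mul_left' hδ.ne').const_mul ((δ / (2 * π) : ℝ) : ℂ)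
  have h4 := integral_re hi2
  simp only [e]
  refine Eq.trans h4 ?_
  rw [integral_const_mul, Measure.integral_comp_mul_left (fun x : ℝ => psih p r x * Complex.exp ((x * (T / δ - t / δ) : ℝ) * Complex.I)) δ]
  have i3' : ∫ x, psih p r x * Complex.exp ((x * (T / δ - t / δ) : ℝ) * Complex.I) = ((2 * π * gam p (T / δ - t / δ) : ℝ) : ℂ) := i3
  rw [i3', Complex.real_smul, ← Complex.ofReal_mul, ← Complex.ofReal_mul, abs_of_pos (inv_pos.2 hδ)]
  have : δ / (2 * π) * (δ⁻¹ * (2 * π * gam p (T / δ - t / δ))) = gam p (T / δ - t / δ) := by field_simp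
  rw [this]; simp

lemma b_bound {H c lam : ℝ} (h0 : 0 < H) (h1 : H < 1) (hc : 0 < c) (β : ℝ) {T : ℝ} (hT : 0 < T) :
    ∃ K0, 0 ≤ K0 ∧ ∀ lam > 0, ∀ g : ℝ → ℝ, Continuous g →
    (∀ s ∈ Icc 0 T, lam * g s + ∫ r in (0:ℝ)..T,
        (∫ o : ℝ, c * |o| ^ (1 - 2 * H) * inner ℝ (Fo β r o) (Fo β s o)) * g r
      = ∫ o : ℝ, c * |o| ^ (1 - 2 * H) * inner ℝ (Fo β s o) (Fo β T o)) →
    |exp (β * T) - ∫ t in (0:ℝ)..T, g t * exp (β * t)| ≤ K0 * (1 + lam⁻¹) := by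
  obtain ⟨D, hF⟩ := filterData h0 h1 hc β hT
  set K1 := ∫ o, c * |o| ^ (1 - 2 * H) * ‖resid T (Fo β) (fun _ => 0) o‖ ^ 2 with hK1
  have hK10 : 0 ≤ K1 := integral_nonneg fun o => by positivity
  set E := exp (|β| * T) with hE
  have hE0 : 0 < E := exp_pos _
  refine ⟨E * (1 + T + K1), by positivity, fun lam hl g hg heq => ?_⟩
  have hup := hF.upper hl hg heq (continuous_const (y := (0:ℝ)))
  obtain ⟨hlow, -⟩ := hF.lower hg heq
  have hup' : lam * g T ≤ K1 := by simpa [hK1] using hup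
  have h3 : 0 ≤ ∫ o, c * |o| ^ (1 - 2 * H) * ‖resid T (Fo β) g o‖ ^ 2 := integral_nonneg fun o => by positivity
  have h4 : ∫ t in (0:ℝ)..T, g t ^ 2 ≤ lam⁻¹ * K1 := by
    rw [inv_mul_eq_div, le_div_iff₀ hl]; linarith
  have h5 : |∫ t in (0:ℝ)..T, g t * exp (β * t)| ≤ ∫ t in (0:ℝ)..T, (E + E * g t ^ 2) := by
    rw [← norm_eq_abs]
    refine intervalIntegral.norm_integral_le_of_norm_le hT.le (ae_of_all _ fun t ht => ?_) (Continuous.intervalIntegrable (by fun_prop) _ _)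
    have a1 : exp (β * t) ≤ E := exp_mul_le ⟨ht.1.le, ht.2⟩
    rw [norm_mul, norm_eq_abs, norm_of_nonneg (exp_pos _).le]
    have a2 : |g t| ≤ 1 + g t ^ 2 := by rw [← sq_abs]; nlinarith [sq_nonneg (|g t| - 1), abs_nonneg (g t)]
    have := mul_le_mul a2 a1 (exp_pos _).le (by positivity)
    linarith
  rw [intervalIntegral.integral_add (Continuous.intervalIntegrable (by fun_prop) _ _) (Continuous.intervalIntegrable (by fun_prop) _ _),
    intervalIntegral.integral_const_mul, intervalIntegral.integral_const, sub_zero, smul_eq_mul] at h5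
  have h6 : exp (β * T) ≤ E := exp_mul_le ⟨hT.le, le_rfl⟩
  have h7 := abs_sub (exp (β * T)) (∫ t in (0:ℝ)..T, g t * exp (β * t))
  rw [abs_of_pos (exp_pos _)] at h7
  have h8 : E * ∫ t in (0:ℝ)..T, g t ^ 2 ≤ E * (lam⁻¹ * K1) := by gcongr
  have h9 : 0 ≤ E * (K1 + (1 + T) * lam⁻¹) := by positivity
  nlinarith

lemma lower_final {H : ℝ} (h0 : 0 < H) (h1 : H < 1) {c : ℝ} (hc : 0 < c) (β : ℝ) {T η : ℝ} (hT : 0 < T) (hη : 0 < η) :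
    ∃ K1 K2, ∀ δ, 0 < δ → ∀ g : ℝ → ℝ, Continuous g →
    (∀ s ∈ Icc 0 T, (c * δ ^ (1 + 2 * H)) * g s + ∫ r in (0:ℝ)..T,
        (∫ o : ℝ, c / (2 * π) * |o| ^ (1 - 2 * H) * inner ℝ (Fo β r o) (Fo β s o)) * g r
      = ∫ o : ℝ, c / (2 * π) * |o| ^ (1 - 2 * H) * inner ℝ (Fo β s o) (Fo β T o)) →
    (c * δ ^ (2 * H)) * (1 / sin (π / (1 + 2 * H)) - η - K1 * δ ^ 2 - K2 * ((1 + (c * δ ^ (1 + 2 * H))⁻¹) * exp (-(T / δ) / 2))) ≤ (c * δ ^ (1 + 2 * H)) * g T := by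
  obtain ⟨p, r, p0, r0, hpr, hp1, hp2⟩ := lower_approx h0 h1 hη
  obtain ⟨iQ1, iQ2⟩ := psih_int h0 h1 p0 r0 hpr
  have hc' : 0 < c / (2 * π) := by positivity
  obtain ⟨K0, hK0, hb⟩ := b_bound (lam := 0) h0 h1 hc' β hT
  obtain ⟨Cg, hCg, hgam⟩ := gam_bdd p
  set Q1 := ∫ x : ℝ, |x| ^ (1 + 2 * H) * ‖psih p r x‖ ^ 2 with hQ1
  set Q2 := ∫ x : ℝ, |x| ^ (2 * H - 1) * ‖psih p r x‖ ^ 2 with hQ2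
  set Q3 := ∫ x, ‖aeval (yv x) p‖ ^ 2 with hQ3
  refine ⟨β ^ 2 * Q2 / (2 * π), 2 * K0 * Cg, fun δ hδ g hg heq => ?_⟩
  set lam := c * δ ^ (1 + 2 * H) with hlam
  have hl : 0 < lam := by positivity
  have hS : 0 < c * δ ^ (2 * H) := by positivity
  have hB2e : ∀ o : ℝ, o ≠ 0 → ‖Bt p r T δ o‖ ^ 2 * (o ^ 2 + β ^ 2) / |o| ^ (1 - 2 * H) =
      (δ / (2 * π)) ^ 2 * (|o| ^ (1 + 2 * H) * ‖psih p r (δ * o)‖ ^ 2) + (δ / (2 * π)) ^ 2 * β ^ 2 * (|o| ^ (2 * H - 1) * ‖psih p r (δ * o)‖ ^ 2) := by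
    intro o ho
    have a : 0 < |o| := abs_pos.2 ho
    have e1 : |o| ^ (2 * H - 1) = (|o| ^ (1 - 2 * H))⁻¹ := by rw [← rpow_neg a.le]; congr 1; ring
    have e2 : |o| ^ (1 + 2 * H) = o ^ 2 * (|o| ^ (1 - 2 * H))⁻¹ := by
      rw [← rpow_neg a.le, ← sq_abs, ← rpow_natCast, ← rpow_add a]; congr 1; push_cast; ring
    rw [Bt_norm p r T hδ, e1, e2]; ring
  have j1 := (scale_integrable hδ iQ1).const_mul ((δ / (2 * π)) ^ 2)
  have j2 := (scale_integrable hδ iQ2).const_mul ((δ / (2 * π)) ^ 2 * β ^ 2)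
  have hae : (fun o : ℝ => ‖Bt p r T δ o‖ ^ 2 * (o ^ 2 + β ^ 2) / |o| ^ (1 - 2 * H)) =ᵐ[volume] fun o : ℝ => 
      (δ / (2 * π)) ^ 2 * (|o| ^ (1 + 2 * H) * ‖psih p r (δ * o)‖ ^ 2) + (δ / (2 * π)) ^ 2 * β ^ 2 * (|o| ^ (2 * H - 1) * ‖psih p r (δ * o)‖ ^ 2) := by
    filter_upwards [ae_ne_zero'] with o ho using hB2e o ho
  have hB2 := (j1.add j2).congr hae.symm
  have hB2v : ∫ o : ℝ, ‖Bt p r T δ o‖ ^ 2 * (o ^ 2 + β ^ 2) / |o| ^ (1 - 2 * H) =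
      (δ / (2 * π)) ^ 2 * (δ ^ (-(1 + 2 * H) - 1) * Q1) + (δ / (2 * π)) ^ 2 * β ^ 2 * (δ ^ (-(2 * H - 1) - 1) * Q2) := by
    rw [integral_congr_ae hae, integral_add j1 j2, integral_const_mul, integral_const_mul,
      scale_int (H := H) hδ _ (fun x => ‖psih p r x‖ ^ 2), scale_int (H := H) hδ _ (fun x => ‖psih p r x‖ ^ 2)]
  have hφeq : ∀ t, t ≤ T → psiF p r (T / δ - t / δ) = gam p (T / δ - t / δ) := by
    intro t ht
    have hτ : 0 ≤ T / δ - t / δ := by rw [← sub_div]; exact div_nonneg (by linarith) hδ.le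
    rw [psiF, if_pos hτ]
  have hφc : Continuous (fun t => psiF p r (T / δ - t / δ)) := by
    have := psiF_cont hpr
    exact this.comp (by fun_prop)
  have main := lower_test h0 h1 hc' hl (inv_pos.2 hS) β hT hg heq (Bt_cont p r T δ).measurable (Bt_int p0 r0 hpr T hδ)
    hB2 hφc (fun t ht => by rw [hφeq t ht.2, Bt_inner p0 r0 hpr hδ ht.2])
  rw [hB2v, hφeq T le_rfl, hφeq 0 hT.le, sub_self, zero_div, sub_zero, gam_zero, inv_inv] at main
  have hφ2 : ∫ t in (0:ℝ)..T, psiF p r (T / δ - t / δ) ^ 2 ≤ δ * (1 / (2 * π) * Q3) := by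
    have e : ∫ t in (0:ℝ)..T, psiF p r (T / δ - t / δ) ^ 2 = δ ^ 2 * ∫ t in (0:ℝ)..T, gT p T δ t ^ 2 := by
      rw [← intervalIntegral.integral_const_mul]
      refine intervalIntegral.integral_congr fun t ht => ?_
      rw [uIcc_of_le hT.le] at ht
      simp only [hφeq t ht.2, gT]; field_simp
    rw [e]
    refine (mul_le_mul_of_nonneg_left (gT_sq p0 hT hδ) (sq_nonneg δ)).trans (le_of_eq ?_)
    rw [← hQ3]; field_simp
  have hbb := hb lam hl g hg heq
  set b := exp (β * T) - ∫ t in (0:ℝ)..T, g t * exp (β * t) with hbdef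
  have hg0 := hgam (T / δ) (by positivity)
  have h4 : b * gam p (T / δ) ≤ (K0 * (1 + lam⁻¹)) * (Cg * exp (-(T / δ) / 2)) := by
    refine (le_abs_self _).trans ?_
    rw [abs_mul]
    exact mul_le_mul hbb hg0 (abs_nonneg _) (by positivity)
  -- simplifications
  have e1 : δ ^ (-(1 + 2 * H) - 1) = (δ ^ (2 * H))⁻¹ * (δ ^ 2)⁻¹ := by
    rw [← rpow_two, ← rpow_neg hδ.le, ← rpow_neg hδ.le, ← rpow_add hδ]; congr 1; ring
  have e2 : δ ^ (-(2 * H - 1) - 1) = (δ ^ (2 * H))⁻¹ := by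
    rw [← rpow_neg hδ.le]; congr 1; ring
  have e3 : δ ^ (1 + 2 * H) = δ * δ ^ (2 * H) := by rw [rpow_add hδ, rpow_one]
  have hd : 0 < δ ^ (2 * H) := by positivity
  have e4 : c * δ ^ (2 * H) * ((c / (2 * π))⁻¹ * ((δ / (2 * π)) ^ 2 * (δ ^ (-(1 + 2 * H) - 1) * Q1) + (δ / (2 * π)) ^ 2 * β ^ 2 * (δ ^ (-(2 * H - 1) - 1) * Q2)))
     = 1 / (2 * π) * Q1 + β ^ 2 * Q2 / (2 * π) * δ ^ 2 := by
    rw [e1, e2]; field_simp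
  have e5 : c * δ ^ (2 * H) * (lam⁻¹ * (δ * (1 / (2 * π) * Q3))) = 1 / (2 * π) * Q3 := by
    rw [hlam, e3]; field_simp
  have h6 : c * δ ^ (2 * H) * (lam⁻¹ * ∫ t in (0:ℝ)..T, psiF p r (T / δ - t / δ) ^ 2) ≤ 1 / (2 * π) * Q3 := by
    rw [← e5]; gcongr
  rw [mul_add, e4] at main
  have hpi : 1 / (2 * π) * (Q1 + Q3) ≤ 1 / (2 * π) * (2 * π * p.coeff 1 + η) := by gcongr
  have hpi2 : 1 / (2 * π) * (2 * π / sin (π / (1 + 2 * H))) ≤ 1 / (2 * π) * (2 * π * p.coeff 1 + η) := by gcongr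
  have e7 : 1 / (2 * π) * (2 * π / sin (π / (1 + 2 * H))) = 1 / sin (π / (1 + 2 * H)) := by field_simp
  have e8 : 1 / (2 * π) * (2 * π * p.coeff 1 + η) = p.coeff 1 + η / (2 * π) := by field_simp
  have h9 : 2 * (η / (2 * π)) ≤ η := by
    rw [mul_div_assoc', mul_div_mul_left _ _ two_ne_zero]
    exact div_le_self hη.le (by linarith [pi_gt_three])
  rw [e7, e8] at hpi2
  rw [e8] at hpi
  have fin : 1 / sin (π / (1 + 2 * H)) - η - β ^ 2 * Q2 / (2 * π) * δ ^ 2 - 2 * K0 * Cg * ((1 + lam⁻¹) * exp (-(T / δ) / 2)) ≤ (c * δ ^ (2 * H))⁻¹ * (lam * g T) := by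
    nlinarith
  have := mul_le_mul_of_nonneg_left fin hS.le
  rwa [mul_inv_cancel_left₀ hS.ne'] at this
end

section
open Real MeasureTheory Set Filter Polynomial
open scoped ComplexConjugate Topology

lemma err_tendsto {a c T : ℝ} (ha : 0 < a) (hT : 0 < T) :
    Tendsto (fun δ : ℝ => (1 + (c * δ ^ a)⁻¹) * exp (-(T / δ) / 2)) (𝓝[>] 0) (𝓝 0) := by
  have h1 := tendsto_rpow_mul_exp_neg_mul_atTop_nhds_zero 0 (T / 2) (by positivity)
  have h2 := tendsto_rpow_mul_exp_neg_mul_atTop_nhds_zero a (T / 2) (by positivity)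
  have h3 := (h1.add (h2.const_mul c⁻¹)).comp tendsto_inv_nhdsGT_zero
  simp only [mul_zero, add_zero] at h3
  refine h3.congr' ?_
  filter_upwards [self_mem_nhdsWithin] with δ hδ
  have hδ' : 0 < δ := hδ
  simp only [Function.comp, rpow_zero, one_mul]
  rw [inv_rpow hδ'.le, mul_inv]
  have : -(T / 2) * δ⁻¹ = -(T / δ) / 2 := by ring
  rw [this]; ring

lemma main_lim {H β μ T : ℝ} (hH : H ∈ Set.Ioo (0:ℝ) 1) (hμ : μ ≠ 0) (hT : 0 < T)
    {h : ℝ → ℝ → ℝ → ℝ} {K : ℝ → ℝ → ℝ}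
    (hK : ∀ s t, 0 ≤ s → 0 ≤ t → K s t = (sin (π * H) * Gamma (2 * H + 1)) / (2 * π) * ∫ o : ℝ, RK β s t o * |o| ^ (-1 - 2 * H))
    (hcont : ∀ ε > 0, ContinuousOn (fun p : ℝ × ℝ => h ε p.1 p.2) (Icc 0 T ×ˢ Icc 0 T))
    (heq : ∀ ε > 0, ∀ s t : ℝ, 0 ≤ s → s ≤ t → t ≤ T →
      ε * h ε s t + μ ^ 2 * ∫ r in (0:ℝ)..T, K r s * h ε r t = μ ^ 2 * K s t) :
    Tendsto (fun ε : ℝ => ((ε / μ ^ 2) * h ε T T) / (ε / μ ^ 2) ^ (2 * H / (1 + 2 * H)))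
      (nhdsWithin 0 (Ioi 0))
      (nhds ((sin (π * H) * Gamma (2 * H + 1)) ^ ((1:ℝ) / (1 + 2 * H)) / sin (π / (2 * H + 1)))) := by
  obtain ⟨h0, h1⟩ := hH
  have hc : 0 < sin (π * H) * Gamma (2 * H + 1) :=
    mul_pos (sin_pos_of_pos_of_lt_pi (by positivity) (by nlinarith [pi_pos])) (Gamma_pos_of_pos (by linarith))
  set c := sin (π * H) * Gamma (2 * H + 1) with hcdef
  have hm : 0 < μ ^ 2 := by positivity
  have ha : 0 < 1 + 2 * H := by linarith
  set dl : ℝ → ℝ := fun ε => (ε / μ ^ 2 / c) ^ ((1:ℝ) / (1 + 2 * H)) with hdl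
  have hdpos : ∀ ε > 0, 0 < dl ε := fun ε hε => by simp only [hdl]; positivity
  have hdlam : ∀ ε > 0, c * dl ε ^ (1 + 2 * H) = ε / μ ^ 2 := by
    intro ε hε
    simp only [hdl]
    rw [← rpow_mul (by positivity), one_div, inv_mul_cancel₀ ha.ne', rpow_one]; field_simp
  have hdt : Tendsto dl (𝓝[>] 0) (𝓝[>] 0) := by
    refine tendsto_nhdsWithin_iff.2 ⟨?_, ?_⟩
    · have c1 : Continuous dl := by
        simp only [hdl]
        refine Continuous.rpow_const (by fun_prop) fun x => Or.inr (by positivity)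
      have := c1.tendsto 0
      have e0 : dl 0 = 0 := by simp only [hdl, zero_div]; rw [zero_rpow (by positivity)]
      rw [e0] at this
      exact this.mono_left nhdsWithin_le_nhds
    · filter_upwards [self_mem_nhdsWithin] with ε hε using hdpos ε hε
  have hKF : ∀ s t, 0 ≤ s → 0 ≤ t → K s t = ∫ o : ℝ, c / (2 * π) * |o| ^ (1 - 2 * H) * inner ℝ (Fo β s o) (Fo β t o) := by
    intro s t hs ht
    rw [hK s t hs ht, ← integral_const_mul]
    refine integral_congr_ae ?_
    filter_upwards [ae_ne_zero'] with o ho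
    rw [F_inner ho]; ring
  -- the filtering problem
  have hprob : ∀ ε > 0, ∃ g : ℝ → ℝ, Continuous g ∧ g T = h ε T T ∧ (∀ s ∈ Icc 0 T, (c * dl ε ^ (1 + 2 * H)) * g s + ∫ r in (0:ℝ)..T,
        (∫ o : ℝ, c / (2 * π) * |o| ^ (1 - 2 * H) * inner ℝ (Fo β r o) (Fo β s o)) * g r
      = ∫ o : ℝ, c / (2 * π) * |o| ^ (1 - 2 * H) * inner ℝ (Fo β s o) (Fo β T o)) := by
    intro ε hε
    have hTT : T ∈ Icc 0 T := ⟨hT.le, le_rfl⟩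
    have hgs : ∀ s ∈ Icc 0 T, h ε (projIcc 0 T hT.le s) T = h ε s T := by
      intro s hs; rw [projIcc_of_mem hT.le hs]
    refine ⟨fun s => h ε (projIcc 0 T hT.le s) T, ?_, hgs T hTT, fun s hs => ?_⟩
    · exact (hcont ε hε).comp_continuous (f := fun s : ℝ => ((projIcc 0 T hT.le s : ℝ), T))
        (by fun_prop) (fun s => ⟨(projIcc 0 T hT.le s).2, hTT⟩)
    · have e := heq ε hε s T hs.1 hs.2 le_rfl
      simp only [hgs s hs]
      rw [hdlam ε hε, ← hKF s T hs.1 hT.le]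
      have e2 : ∫ r in (0:ℝ)..T, (∫ o : ℝ, c / (2 * π) * |o| ^ (1 - 2 * H) * inner ℝ (Fo β r o) (Fo β s o)) * h ε (projIcc 0 T hT.le r) T
          = ∫ r in (0:ℝ)..T, K r s * h ε r T := by
        refine intervalIntegral.integral_congr fun r hr => ?_
        rw [uIcc_of_le hT.le] at hr
        rw [hgs r hr, hKF r s hr.1 hs.1]
      rw [e2]
      have : K s T = (μ ^ 2 * K s T) / μ ^ 2 := by field_simp
      rw [this, ← e]; field_simp
  set u : ℝ → ℝ := fun ε => (ε / μ ^ 2 * h ε T T) / (c * dl ε ^ (2 * H)) with hu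
  have hSpos : ∀ ε > 0, 0 < c * dl ε ^ (2 * H) := fun ε hε => by have := hdpos ε hε; positivity
  have hut : Tendsto u (𝓝[>] 0) (𝓝 (1 / sin (π / (1 + 2 * H)))) := by
    refine tendsto_order.2 ⟨fun b hb => ?_, fun b hb => ?_⟩
    · obtain ⟨K1, K2, hlow⟩ := lower_final h0 h1 hc β hT (half_pos (sub_pos.2 hb))
      set L := 1 / sin (π / (1 + 2 * H)) with hL
      have t1 : Tendsto (fun δ : ℝ => L - (L - b) / 2 - K1 * δ ^ 2 - K2 * ((1 + (c * δ ^ (1 + 2 * H))⁻¹) * exp (-(T / δ) / 2))) (𝓝[>] 0) (𝓝 (L - (L - b) / 2 - K1 * 0 ^ 2 - K2 * 0)) := by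
        refine Tendsto.sub (Tendsto.mono_left (Continuous.tendsto (by fun_prop) _) nhdsWithin_le_nhds) ((err_tendsto ha hT).const_mul K2)
      have t2 := (t1.comp hdt).eventually_const_lt (u := b) (by linarith)
      filter_upwards [t2, self_mem_nhdsWithin] with ε hε hε0
      obtain ⟨g, hg, hgT, hge⟩ := hprob ε hε0
      have h5 := hlow (dl ε) (hdpos ε hε0) g hg hge
      rw [hgT, hdlam ε hε0] at h5
      simp only [Function.comp, hdlam ε hε0] at hε
      refine hε.trans_le ?_
      rw [hu]
      simp only
      rw [le_div_iff₀ (hSpos ε hε0)]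
      linarith
    · have t0 : Tendsto (fun η : ℝ => (1 + η) * ((1 / (2 * π)) * (2 * π / sin (π / (1 + 2 * H)) + η))) (𝓝[>] 0)
          (𝓝 ((1 + 0) * ((1 / (2 * π)) * (2 * π / sin (π / (1 + 2 * H)) + 0)))) :=
        Tendsto.mono_left (Continuous.tendsto (by fun_prop) _) nhdsWithin_le_nhds
      have e0 : (1 + 0) * ((1 / (2 * π)) * (2 * π / sin (π / (1 + 2 * H)) + 0)) = 1 / sin (π / (1 + 2 * H)) := by
        field_simp; ring
      rw [e0] at t0
      obtain ⟨η, hη1, hη⟩ := ((t0.eventually_lt_const hb).and self_mem_nhdsWithin).exists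
      obtain ⟨K1, hup⟩ := upper_final h0 h1 hc β hT hη
      set L := (1 + η) * ((1 / (2 * π)) * (2 * π / sin (π / (1 + 2 * H)) + η)) with hL
      have h22 : 0 < 2 - 2 * H := by linarith
      have t1 : Tendsto (fun δ : ℝ => L + K1 * δ ^ (2 - 2 * H)) (𝓝[>] 0) (𝓝 (L + K1 * 0 ^ (2 - 2 * H))) := by
        refine Tendsto.mono_left (Continuous.tendsto ?_ _) nhdsWithin_le_nhds
        exact continuous_const.add (continuous_const.mul (continuous_id.rpow_const fun x => Or.inr h22.le))
      rw [zero_rpow h22.ne', mul_zero, add_zero] at t1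
      have t2 := (t1.comp hdt).eventually_lt_const hη1
      filter_upwards [t2, self_mem_nhdsWithin] with ε hε hε0
      obtain ⟨g, hg, hgT, hge⟩ := hprob ε hε0
      have h5 := hup (dl ε) (hdpos ε hε0) g hg hge
      rw [hgT, hdlam ε hε0] at h5
      refine lt_of_le_of_lt ?_ hε
      rw [hu]
      simp only [Function.comp]
      rw [div_le_iff₀ (hSpos ε hε0)]
      linarith
  have e1 : c ^ ((1:ℝ) / (1 + 2 * H)) / sin (π / (2 * H + 1)) = 1 / sin (π / (1 + 2 * H)) * c ^ ((1:ℝ) / (1 + 2 * H)) := by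
    rw [add_comm (2 * H) 1]; ring
  rw [e1]
  refine (hut.mul_const _).congr' ?_
  filter_upwards [self_mem_nhdsWithin] with ε hε
  have hε' : 0 < ε := hε
  have hl : 0 < ε / μ ^ 2 := by positivity
  have e2 : dl ε ^ (2 * H) = (ε / μ ^ 2) ^ (2 * H / (1 + 2 * H)) / c ^ (2 * H / (1 + 2 * H)) := by
    simp only [hdl]
    rw [← rpow_mul (by positivity), ← div_rpow hl.le hc.le]; congr 1; ring
  have e3 : c ^ ((1:ℝ) / (1 + 2 * H)) = c / c ^ (2 * H / (1 + 2 * H)) := by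
    rw [eq_div_iff (by positivity), ← rpow_add hc, ← add_div, div_self ha.ne', rpow_one]
  have p1 : 0 < (ε / μ ^ 2) ^ (2 * H / (1 + 2 * H)) := by positivity
  have p2 : 0 < c ^ (2 * H / (1 + 2 * H)) := by positivity
  simp only [hu, e2, e3]
  field_simp
end

open Real MeasureTheory Set Filter intervalIntegral

/-- Exact small-noise asymptotics of the filtering error for the fOU signal in white noise. -/
theorem filtering_error_asymptotics
    (H β μ T : ℝ) (hH : H ∈ Set.Ioo (0:ℝ) 1) (hμ : μ ≠ 0) (hT : 0 < T)
    (h : ℝ → ℝ → ℝ → ℝ)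
    (hcont : ∀ ε > 0, ContinuousOn (fun p : ℝ × ℝ => h ε p.1 p.2) (Icc 0 T ×ˢ Icc 0 T))
    (heq : ∀ ε > 0, ∀ s t : ℝ, 0 ≤ s → s ≤ t → t ≤ T →
      ε * h ε s t + μ ^ 2 * ∫ r in (0:ℝ)..T, fOUkernel H β r s * h ε r t
        = μ ^ 2 * fOUkernel H β s t) :
    Tendsto (fun ε : ℝ =>
        ((ε / μ ^ 2) * h ε T T) / (ε / μ ^ 2) ^ (2 * H / (1 + 2 * H)))
      (nhdsWithin 0 (Ioi 0))
      (nhds ((Real.sin (π * H) * Real.Gamma (2 * H + 1)) ^ ((1:ℝ) / (1 + 2 * H))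
        / Real.sin (π / (2 * H + 1)))) := by
  exact main_lim hH hμ hT (fun s t hs ht => kernel_spec hH.1 hH.2 hs ht) hcont heq
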